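/- arXiv:1405.1575 — 2 statements merged into one kernel-verified Lean document; each statement's English description precedes it below -/
import Mathlib

section
/- If V is a primitive linear subspace of the n×p matrices over F2 with upper rank 2, then n = 3 and p = 3. -/
/-!
Primitivity is first turned into conditions on vectors, symmetric under transposition (`Good`).

If all matrices of `V` map some hyperplane into one plane, then `n = p = 3`
(`Good.finrank_of_hyperplane`). Modulo the choice of bases, the matrices restricted to the
hyperplane include an identity `2 × 2` block `I`; those whose range leaves the plane give a block
`A` with `A` and `A + I` singular, so of trace one. As the trace is additive, the sum of two such
matrices has range in the plane, and the ranges lie together in dimension three.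

If `V` contains a matrix `u ⊗ φ` of rank one, then all of `V`, restricted to `ker φ` and taken
modulo `u`, has rank at most one. Spaces of maps of rank at most one have a common image line or a
common kernel hyperplane (`rank_one_spaces`), and this leads to the hyperplane situation for `V` or
for its transpose (`Good.finrank_of_rank_one`).

Otherwise all nonzero matrices of `V` have rank two. Their ranges are planes that meet pairwise
(`Good.ranges_meet`) but have no common line, by primitivity; such planes lie in a space of
dimension three (`Good.rows_eq_three`). This gives `n = 3`, and `p = 3` follows by transposition.
-/

open Matrix

/-- Two linear subspaces of `n × p` matrices over `K` are *equivalent* when one is obtained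
from the other by multiplying on the left and on the right by fixed invertible matrices. -/
def MatEquiv (K : Type*) [Field K] {n p : ℕ}
    (V₁ V₂ : Submodule K (Matrix (Fin n) (Fin p) K)) : Prop :=
  ∃ (P : Matrix (Fin n) (Fin n) K) (Q : Matrix (Fin p) (Fin p) K),
    IsUnit P ∧ IsUnit Q ∧
      (V₂ : Set (Matrix (Fin n) (Fin p) K)) =
        (fun M => P * M * Q) '' (V₁ : Set (Matrix (Fin n) (Fin p) K))

/-- A linear subspace of matrices is *reduced* when no nonzero vector is annihilated by every
matrix of the space, and the column spaces of the matrices of the space together span the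
whole target space. -/
def Reduced (K : Type*) [Field K] {n p : ℕ}
    (V : Submodule K (Matrix (Fin n) (Fin p) K)) : Prop :=
  (∀ x : Fin p → K, (∀ M ∈ V, M.mulVec x = 0) → x = 0) ∧
  Submodule.span K {y : Fin n → K | ∃ M ∈ V, ∃ x : Fin p → K, M.mulVec x = y} = ⊤

/-- The *upper rank* of a linear subspace of matrices: the maximal rank of a matrix in it. -/
noncomputable def urk {K : Type*} [Field K] {n p : ℕ}
    (V : Submodule K (Matrix (Fin n) (Fin p) K)) : ℕ :=
  sSup (Matrix.rank '' (V : Set (Matrix (Fin n) (Fin p) K)))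

/-- The matrix obtained by deleting the last column. -/
def dropCol {K : Type*} [Field K] {n p : ℕ} (M : Matrix (Fin n) (Fin p) K) :
    Matrix (Fin n) (Fin (p - 1)) K :=
  M.submatrix id (Fin.castLE (Nat.sub_le p 1))

/-- The matrix obtained by deleting the last row. -/
def dropRow {K : Type*} [Field K] {n p : ℕ} (M : Matrix (Fin n) (Fin p) K) :
    Matrix (Fin (n - 1)) (Fin p) K :=
  M.submatrix (Fin.castLE (Nat.sub_le n 1)) id

/-- A linear subspace of matrices (of upper rank `r = urk V`) is *semi-primitive* when it is
reduced and it is not equivalent to a subspace `T` such that the space obtained by deleting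
the last column of each matrix of `T` has upper rank at most `r - 1`. -/
def SemiPrimitive (K : Type*) [Field K] {n p : ℕ}
    (V : Submodule K (Matrix (Fin n) (Fin p) K)) : Prop :=
  Reduced K V ∧
    ¬ ∃ T : Submodule K (Matrix (Fin n) (Fin p) K),
        MatEquiv K V T ∧ ∀ M ∈ T, (dropCol M).rank ≤ urk V - 1

/-- A linear subspace of matrices (of upper rank `r = urk V`) is *primitive* when it is
semi-primitive and it is not equivalent to a subspace `T` such that the space obtained by
deleting the last row of each matrix of `T` has upper rank at most `r - 1`. -/
def Primitive (K : Type*) [Field K] {n p : ℕ}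
    (V : Submodule K (Matrix (Fin n) (Fin p) K)) : Prop :=
  SemiPrimitive K V ∧
    ¬ ∃ T : Submodule K (Matrix (Fin n) (Fin p) K),
        MatEquiv K V T ∧ ∀ M ∈ T, (dropRow M).rank ≤ urk V - 1

/-! ### Planes over the field with two elements -/

/-- `c` lies in the span of `a` and `b`, for a vector space over the field with two elements:
the four vectors of the span are listed. -/
def Pl {W : Type*} [AddCommGroup W] (a b c : W) : Prop := c = 0 ∨ c = a ∨ c = b ∨ c = a + b

/-- `a` and `b` are nonzero and distinct; over the field with two elements this is linear
independence. -/
def Ind {W : Type*} [AddCommGroup W] (a b : W) : Prop := a ≠ 0 ∧ b ≠ 0 ∧ a ≠ b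

theorem Ind.symm {W : Type*} [AddCommGroup W] {a b : W} (h : Ind a b) : Ind b a :=
  ⟨h.2.1, h.1, h.2.2.symm⟩

theorem zmod_two_cases : ∀ r : ZMod 2, r = 0 ∨ r = 1 := by decide

section
variable {W : Type*} [AddCommGroup W] [Module (ZMod 2) W]

theorem mem_span_pair_iff {a b c : W} :
    c ∈ Submodule.span (ZMod 2) {a, b} ↔ Pl a b c := by
  rw [Submodule.mem_span_pair]
  constructor
  · rintro ⟨r, s, rfl⟩
    rcases zmod_two_cases r with rfl | rfl <;> rcases zmod_two_cases s with rfl | rfl <;> simp [Pl]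
  · rintro (rfl | rfl | rfl | rfl)
    · exact ⟨0, 0, by simp⟩
    · exact ⟨1, 0, by simp⟩
    · exact ⟨0, 1, by simp⟩
    · exact ⟨1, 1, by simp⟩

theorem Ind.linearIndependent {a b : W} (h : Ind a b) : LinearIndependent (ZMod 2) ![a, b] := by
  rw [LinearIndependent.pair_iff]
  intro s t hst
  obtain ⟨ha, hb, hab⟩ := h
  have := ZModModule.add_self b
  rcases zmod_two_cases s with rfl | rfl <;> rcases zmod_two_cases t with rfl | rfl <;>
    simp_all
  exact hab (by grind)

theorem Ind.finrank_span {a b : W} (h : Ind a b) :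
    Module.finrank (ZMod 2) (Submodule.span (ZMod 2) {a, b}) = 2 := by
  have := finrank_span_eq_card h.linearIndependent
  rwa [Matrix.range_cons_cons_empty, Fintype.card_fin] at this

theorem Pl.of_finrank_le [FiniteDimensional (ZMod 2) W] {P : Submodule (ZMod 2) W}
    (hP : Module.finrank (ZMod 2) P ≤ 2) {a b c : W} (ha : a ∈ P) (hb : b ∈ P) (hc : c ∈ P)
    (h : Ind a b) : Pl a b c := by
  have hle : Submodule.span (ZMod 2) {a, b} ≤ P := by
    rw [Submodule.span_le]
    rintro x (rfl | rfl) <;> assumption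
  have := Submodule.eq_of_le_of_finrank_le hle (by rw [h.finrank_span]; exact hP)
  rw [← mem_span_pair_iff, this]
  exact hc

theorem finrank_le_one_of_no_ind (P : Submodule (ZMod 2) W)
    (h : ∀ a ∈ P, ∀ b ∈ P, ¬ Ind a b) : Module.finrank (ZMod 2) P ≤ 1 := by
  by_cases hP : ∃ a ∈ P, a ≠ 0
  · obtain ⟨a, ha, ha0⟩ := hP
    refine finrank_le_one (⟨a, ha⟩ : P) ?_
    rintro ⟨w, hw⟩
    by_cases hw0 : w = 0
    · exact ⟨0, by ext; simp [hw0]⟩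
    · refine ⟨1, ?_⟩
      have := h a ha w hw
      simp only [Ind, not_and, not_not] at this
      simp [this ha0 hw0]
  · push Not at hP
    have : P = ⊥ := by
      rw [eq_bot_iff]
      intro x hx
      simpa using hP x hx
    rw [this, finrank_bot]
    exact zero_le_one

theorem finrank_eq_three [FiniteDimensional (ZMod 2) W] {a b c : W} (h : Ind a b) (hc : ¬ Pl a b c)
    (htop : ∀ z : W, z ∈ Submodule.span (ZMod 2) {a, b, c}) : Module.finrank (ZMod 2) W = 3 := by
  have h1 : Submodule.span (ZMod 2) {a, b, c} = ⊤ := by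
    rw [eq_top_iff]; intro z _; exact htop z
  have h2 : Submodule.span (ZMod 2) {a, b} < ⊤ := by
    rw [lt_top_iff_ne_top]
    intro h
    exact hc (mem_span_pair_iff.1 (h ▸ Submodule.mem_top))
  have h3 := Submodule.finrank_lt h2.ne
  rw [h.finrank_span] at h3
  classical
  have h4 := finrank_span_finset_le_card (R := ZMod 2) ({a, b, c} : Finset W)
  have h5 : ({a, b, c} : Finset W).card ≤ 3 := Finset.card_le_three
  push_cast at h4
  rw [Set.finrank, h1, finrank_top] at h4
  omega

/-- A linear space of maps of rank at most one has a common image line (spanned by `b`), or its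
members share a kernel of codimension at most one (`ker ρ`). If both fail, there are a nonzero
`f0`, a map `f1` with another image than `f0` and a map `f2` with another kernel than `f0`; the
sums of two of them cannot all have rank at most one. -/
theorem rank_one_spaces {A : Type*} [AddCommGroup A] [Module (ZMod 2) A]
    (L : Submodule (ZMod 2) (A →ₗ[ZMod 2] W)) (hL : ∀ f ∈ L, ∀ x y, ¬ Ind (f x) (f y)) :
    (∃ b, ∀ f ∈ L, ∀ x, f x = 0 ∨ f x = b) ∨
      ∃ ρ : A →ₗ[ZMod 2] ZMod 2, ∀ f ∈ L, ∀ x, ρ x = 0 → f x = 0 := by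
  have hd : ∀ x : W, x + x = 0 := ZModModule.add_self
  simp only [Ind] at hL
  by_cases h0 : ∀ f ∈ L, ∀ x, f x = 0
  · exact Or.inl ⟨0, fun f hf x => Or.inl (h0 f hf x)⟩
  push Not at h0
  obtain ⟨f0, hf0, x0, hx0⟩ := h0
  by_contra hcon
  push Not at hcon
  obtain ⟨hb, hρ⟩ := hcon
  obtain ⟨f1, hf1, x1, h10, h1w⟩ := hb (f0 x0)
  obtain ⟨g, hg, -⟩ := Submodule.exists_dual_map_eq_bot_of_notMem (R := ZMod 2) (p := ⊥)
    (x := f0 x0) (by simpa using hx0) inferInstance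
  obtain ⟨f2, hf2, x2, h2ρ, h20⟩ := hρ (g ∘ₗ f0)
  -- `f0` takes the values `0` and `f0 x0` only, and `g` separates these
  have h02 : f0 x2 = 0 := by
    by_contra h
    have : f0 x0 = f0 x2 := by
      by_contra h'
      exact hL f0 hf0 x0 x2 ⟨hx0, h, h'⟩
    rw [LinearMap.comp_apply, ← this] at h2ρ
    exact hg h2ρ
  have e01 := L.add_mem hf0 hf1
  have e02 := L.add_mem hf0 hf2
  have e12 := L.add_mem hf1 hf2
  have key : ∀ x, f0 x = f0 x0 → f1 x = f1 x1 := by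
    intro x hx
    have a1 := hL f1 hf1 x x1
    have a2 := hL f0 hf0 x0 x1
    have a3 := hL _ e01 x x1
    simp only [LinearMap.add_apply] at a3
    have := hd (f0 x0)
    have := hd (f1 x1)
    grind
  have k0 := key x0 rfl
  have k2 : f1 x2 = 0 := by
    have := key (x0 + x2) (by simp [h02])
    simp only [map_add] at this
    grind
  have h2w : f2 x2 = f0 x0 := by
    have a1 := hL f2 hf2 x0 x2
    have a3 := hL _ e02 x0 x2
    simp only [LinearMap.add_apply] at a3
    have := hd (f0 x0)
    have := hd (f2 x2)
    grind
  have a1 := hL f2 hf2 x0 x2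
  have a3 := hL _ e12 x0 x2
  simp only [LinearMap.add_apply] at a3
  have := hd (f0 x0)
  have := hd (f1 x1)
  grind

theorem add_eq_zero_iff_eq_of_two {a b : W} : a + b = 0 ↔ a = b := by
  have := ZModModule.add_self b
  constructor <;> intro h <;> grind

theorem Ind.exists_dual {a b : W} (h : Ind a b) :
    ∃ α : W →ₗ[ZMod 2] ZMod 2, α a = 1 ∧ α b = 0 := by
  have hab : a ∉ Submodule.span (ZMod 2) {b} := by
    rw [Submodule.mem_span_singleton]
    rintro ⟨r, hr⟩
    rcases zmod_two_cases r with rfl | rfl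
    · exact h.1 (by simpa using hr.symm)
    · exact h.2.2 (by simpa using hr.symm)
  obtain ⟨α, h1, h2⟩ := Submodule.exists_dual_map_eq_bot_of_notMem hab inferInstance
  refine ⟨α, (zmod_two_cases _).resolve_left h1, ?_⟩
  have : α b ∈ Submodule.map α (Submodule.span (ZMod 2) {b}) :=
    ⟨b, Submodule.mem_span_singleton_self b, rfl⟩
  simpa [h2] using this

/-- A `2 × 2` matrix `A` over the field with two elements with `A` and `A + I` both singular
has trace `1`. Here `A` has columns `s` and `t`, written in the basis `a`, `b` with coordinate
forms `α` and `β`. -/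
theorem trace_eq_one {a b s t : W} (h : Ind a b) (hs : Pl a b s) (ht : Pl a b t)
    (h1 : ¬ Ind s t) (h2 : ¬ Ind (s + a) (t + b)) {α β : W →ₗ[ZMod 2] ZMod 2}
    (hα1 : α a = 1) (hα2 : α b = 0) (hβ1 : β a = 0) (hβ2 : β b = 1) : α s + β t = 1 := by
  obtain ⟨i1, i2, i3⟩ := h
  have := ZModModule.add_self a
  have := ZModModule.add_self b
  simp only [Ind] at h1 h2
  rcases hs with b1 | b1 | b1 | b1 <;> rcases ht with b2 | b2 | b2 | b2 <;>
    rw [b1, b2] at h1 h2 ⊢ <;> simp only [map_add, map_zero, hα1, hα2, hβ1, hβ2] <;>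
    first
    | decide
    | (exfalso; grind)

/-- A vector `s` dependent on each of `t` and `t + a` is zero unless it equals `a`, and likewise for
`b`; since `a ≠ b`, it is zero. -/
theorem eq_zero_of_not_ind {a b s t r : W} (h : Ind a b) (h1 : ¬ Ind s t) (h2 : ¬ Ind s r)
    (h3 : ¬ Ind s (t + a)) (h4 : ¬ Ind s (r + b)) : s = 0 := by
  obtain ⟨i1, i2, i3⟩ := h
  have := ZModModule.add_self a
  have := ZModModule.add_self b
  have := ZModModule.add_self s
  simp only [Ind] at h1 h2 h3 h4
  grind

theorem mem_span_triple_of_pl {a b c d : W} (h : Pl a b d ∨ Pl a b (d + c)) :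
    d ∈ Submodule.span (ZMod 2) {a, b, c} := by
  have hle : Submodule.span (ZMod 2) {a, b} ≤ Submodule.span (ZMod 2) {a, b, c} :=
    Submodule.span_mono (by rintro x (rfl | rfl) <;> simp)
  rcases h with h | h
  · exact hle (mem_span_pair_iff.2 h)
  · have hc : c ∈ Submodule.span (ZMod 2) {a, b, c} := Submodule.subset_span (by simp)
    exact (Submodule.add_mem_iff_left _ hc).1 (hle (mem_span_pair_iff.2 h))

/-- The three planes spanned by two of three independent vectors have no common line. -/
theorem three_planes {a b c w : W} (h : Ind a b) (hc : ¬ Pl a b c) (h1 : Pl a b w)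
    (h2 : Pl a c w) (h3 : Pl b c w) : w = 0 := by
  obtain ⟨i1, i2, i3⟩ := h
  have := ZModModule.add_self a
  have := ZModModule.add_self b
  have := ZModModule.add_self c
  simp only [Pl] at hc h1 h2 h3
  grind
end

/-! ### An elementary form of primitivity -/

/-- Primitivity with upper rank two, in terms of vectors rather than of equivalent spaces. The
fields `inj` and `surj` say that `V` is reduced; `col` says that on every hyperplane of the source
some matrix of `V` still has rank two, and `row` is the same condition for the transposed space. -/
structure Good {n p : ℕ} (V : Submodule (ZMod 2) (Matrix (Fin n) (Fin p) (ZMod 2))) : Prop where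
  rk : ∀ M ∈ V, M.rank ≤ 2
  ne : ∃ M ∈ V, M ≠ 0
  inj : ∀ x : Fin p → ZMod 2, (∀ M ∈ V, M *ᵥ x = 0) → x = 0
  surj : ∀ y : Fin n → ZMod 2, (∀ M ∈ V, y ᵥ* M = 0) → y = 0
  col : ∀ φ : Fin p → ZMod 2, φ ≠ 0 →
    ∃ M ∈ V, ∃ x y, φ ⬝ᵥ x = 0 ∧ φ ⬝ᵥ y = 0 ∧ Ind (M *ᵥ x) (M *ᵥ y)
  row : ∀ u : Fin n → ZMod 2, u ≠ 0 →
    ∃ M ∈ V, ∃ x y, u ⬝ᵥ x = 0 ∧ u ⬝ᵥ y = 0 ∧ Ind (x ᵥ* M) (y ᵥ* M)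

/-- Some invertible matrix has all its columns but the last in the hyperplane orthogonal to `φ`. -/
theorem exists_unit_kernel {p : ℕ} (φ : Fin p → ZMod 2) (hφ : φ ≠ 0) :
    ∃ Q : Matrix (Fin p) (Fin p) (ZMod 2), IsUnit Q ∧
      ∀ i : Fin (p - 1), φ ⬝ᵥ (fun j => Q j (Fin.castLE (Nat.sub_le p 1) i)) = 0 := by
  have hp : 0 < p := by
    by_contra h
    obtain rfl : p = 0 := by omega
    exact hφ (Subsingleton.elim _ _)
  let l : Fin p := ⟨p - 1, by omega⟩
  have hl : (Pi.single l 1 : Fin p → ZMod 2) ≠ 0 := by simp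
  obtain ⟨g, hg⟩ := Submodule.exists_linearEquiv_restrict_eq
    ((LinearEquiv.toSpanNonzeroSingleton (ZMod 2) _ _ hl).symm ≪≫ₗ
      LinearEquiv.toSpanNonzeroSingleton (ZMod 2) _ _ hφ)
  have hgφ : g (Pi.single l 1) = φ := by
    rw [← hg ⟨Pi.single l 1, Submodule.mem_span_singleton_self _⟩]
    have : (⟨Pi.single l 1, Submodule.mem_span_singleton_self _⟩ :
        Submodule.span (ZMod 2) {(Pi.single l 1 : Fin p → ZMod 2)}) =
        LinearEquiv.toSpanNonzeroSingleton (ZMod 2) _ _ hl 1 := by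
      ext; simp
    rw [this, LinearEquiv.trans_apply, LinearEquiv.symm_apply_apply]
    simp
  -- `Q` is the inverse transpose of a matrix sending the last basis vector to `φ`
  refine ⟨(LinearMap.toMatrix' (g.symm : (Fin p → ZMod 2) →ₗ[ZMod 2] _))ᵀ, ?_, ?_⟩
  · rw [Matrix.isUnit_transpose]
    refine IsUnit.of_mul_eq_one (LinearMap.toMatrix' (g : (Fin p → ZMod 2) →ₗ[ZMod 2] _)) ?_
    rw [← LinearMap.toMatrix'_comp]
    simp
  · intro i
    have h : g.symm φ = Pi.single l 1 := by rw [← hgφ]; simp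
    have h' := congrFun h (Fin.castLE (Nat.sub_le p 1) i)
    have hne : Fin.castLE (Nat.sub_le p 1) i ≠ l := by
      intro e
      have := congrArg Fin.val e
      simp [l] at this
      omega
    rw [Pi.single_eq_of_ne hne] at h'
    have e := congrFun (LinearMap.toMatrix'_mulVec
      (g.symm : (Fin p → ZMod 2) →ₗ[ZMod 2] _) φ) (Fin.castLE (Nat.sub_le p 1) i)
    rw [dotProduct_comm]
    exact e.trans h'

theorem Pl.of_rank {n p : ℕ} {M : Matrix (Fin n) (Fin p) (ZMod 2)} (hM : M.rank ≤ 2)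
    {x y : Fin p → ZMod 2} (h : Ind (M *ᵥ x) (M *ᵥ y)) (z : Fin p → ZMod 2) :
    Pl (M *ᵥ x) (M *ᵥ y) (M *ᵥ z) :=
  Pl.of_finrank_le (P := LinearMap.range M.mulVecLin) hM ⟨x, rfl⟩ ⟨y, rfl⟩ ⟨z, rfl⟩ h

theorem rank_le_one_of_no_ind {n p : ℕ} {M : Matrix (Fin n) (Fin p) (ZMod 2)}
    (h : ∀ x y, ¬ Ind (M *ᵥ x) (M *ᵥ y)) : M.rank ≤ 1 := by
  refine finrank_le_one_of_no_ind _ ?_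
  rintro _ ⟨x, rfl⟩ _ ⟨y, rfl⟩
  exact h x y

theorem exists_ind_of_rank {n p : ℕ} {M : Matrix (Fin n) (Fin p) (ZMod 2)} (hM : 2 ≤ M.rank) :
    ∃ x y, Ind (M *ᵥ x) (M *ᵥ y) := by
  by_contra! h
  have := rank_le_one_of_no_ind h
  omega

/-- If the columns of `Q` other than the last lie in the hyperplane `φ ⬝ᵥ x = 0`, then deleting the
last column of `M * Q` amounts to restricting `M` to that hyperplane. -/
theorem dropCol_rank_le_one {n p : ℕ} {φ : Fin p → ZMod 2}
    {Q : Matrix (Fin p) (Fin p) (ZMod 2)}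
    (hQ : ∀ i : Fin (p - 1), φ ⬝ᵥ (fun j => Q j (Fin.castLE (Nat.sub_le p 1) i)) = 0)
    {M : Matrix (Fin n) (Fin p) (ZMod 2)}
    (hM : ∀ x y, φ ⬝ᵥ x = 0 → φ ⬝ᵥ y = 0 → ¬ Ind (M *ᵥ x) (M *ᵥ y)) :
    (dropCol (M * Q)).rank ≤ 1 := by
  have e : dropCol (M * Q) = M * dropCol Q := by
    ext i j; simp [dropCol, Matrix.mul_apply]
  have k : ∀ x, φ ⬝ᵥ (dropCol Q *ᵥ x) = 0 := by
    intro x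
    rw [Matrix.dotProduct_mulVec]
    have : φ ᵥ* dropCol Q = 0 := by
      ext i
      exact hQ i
    simp [this]
  rw [e]
  refine rank_le_one_of_no_ind fun x y => ?_
  rw [← Matrix.mulVec_mulVec, ← Matrix.mulVec_mulVec]
  exact hM _ _ (k x) (k y)

theorem Primitive.good {n p : ℕ} {V : Submodule (ZMod 2) (Matrix (Fin n) (Fin p) (ZMod 2))}
    (hprim : Primitive (ZMod 2) V) (hurk : urk V = 2) : Good V := by
  obtain ⟨⟨⟨hinj, hspan⟩, hcol⟩, hrow⟩ := hprim
  have hbdd : BddAbove (Matrix.rank '' (V : Set (Matrix (Fin n) (Fin p) (ZMod 2)))) := by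
    refine ⟨p, ?_⟩
    rintro _ ⟨M, -, rfl⟩
    simpa using M.rank_le_card_width
  refine ⟨?_, ?_, hinj, ?_, ?_, ?_⟩
  · intro M hM
    exact (le_csSup hbdd ⟨M, hM, rfl⟩).trans hurk.le
  · by_contra! h
    have : urk V ≤ 0 := by
      refine csSup_le ⟨_, 0, V.zero_mem, rfl⟩ ?_
      rintro _ ⟨M, hM, rfl⟩
      simp [h M hM]
    omega
  · intro y hy
    have : ∀ z ∈ Submodule.span (ZMod 2)
        {y : Fin n → ZMod 2 | ∃ M ∈ V, ∃ x : Fin p → ZMod 2, M.mulVec x = y}, y ⬝ᵥ z = 0 := by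
      intro z hz
      induction hz using Submodule.span_induction with
      | mem z hz =>
        obtain ⟨M, hM, x, rfl⟩ := hz
        rw [Matrix.dotProduct_mulVec, hy M hM, zero_dotProduct]
      | zero => simp
      | add a b _ _ ha hb => simp [ha, hb]
      | smul c a _ ha => simp [ha]
    rw [hspan] at this
    exact dotProduct_eq_zero _ fun z => this z trivial
  · intro φ hφ
    by_contra! hcon
    obtain ⟨Q, hQ, hker⟩ := exists_unit_kernel φ hφ
    refine hcol ⟨V.map (mulRightLinearMap (Fin n) (ZMod 2) Q), ⟨1, Q, isUnit_one, hQ, ?_⟩, ?_⟩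
    · ext M; simp
    · rintro _ ⟨M, hM, rfl⟩
      rw [hurk]
      exact dropCol_rank_le_one hker (fun x y => hcon M hM x y)
  · intro u hu
    by_contra! hcon
    obtain ⟨Q, hQ, hker⟩ := exists_unit_kernel u hu
    refine hrow ⟨V.map (mulLeftLinearMap (Fin p) (ZMod 2) Qᵀ),
      ⟨Qᵀ, 1, Matrix.isUnit_transpose Q |>.2 hQ, isUnit_one, ?_⟩, ?_⟩
    · ext M; simp
    · rintro _ ⟨M, hM, rfl⟩
      rw [hurk, ← Matrix.rank_transpose]
      have e : (dropRow (mulLeftLinearMap (Fin p) (ZMod 2) Qᵀ M))ᵀ = dropCol (Mᵀ * Q) := by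
        ext i j
        simp [dropRow, dropCol, Matrix.mul_apply, mul_comm]
      rw [e]
      refine dropCol_rank_le_one hker (fun x y => ?_)
      simpa only [Matrix.mulVec_transpose] using hcon M hM x y

theorem Good.transpose {n p : ℕ} {V : Submodule (ZMod 2) (Matrix (Fin n) (Fin p) (ZMod 2))}
    (h : Good V) : Good (V.map (Matrix.transposeLinearEquiv (Fin n) (Fin p) (ZMod 2) (ZMod 2) :
      Matrix (Fin n) (Fin p) (ZMod 2) →ₗ[ZMod 2] Matrix (Fin p) (Fin n) (ZMod 2))) := by
  obtain ⟨h1, h2, h3, h4, h5, h6⟩ := h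
  refine ⟨?_, ?_, ?_, ?_, ?_, ?_⟩
  · rintro _ ⟨M, hM, rfl⟩
    simpa [Matrix.rank_transpose] using h1 M hM
  · obtain ⟨M, hM, h⟩ := h2
    exact ⟨Mᵀ, ⟨M, hM, rfl⟩, by simpa using h⟩
  · intro y hy
    refine h4 y fun M hM => ?_
    rw [← Matrix.mulVec_transpose]
    exact hy _ ⟨M, hM, rfl⟩
  · intro x hx
    refine h3 x fun M hM => ?_
    rw [← Matrix.vecMul_transpose]
    exact hx _ ⟨M, hM, rfl⟩
  · intro u hu
    obtain ⟨M, hM, x, y, hx, hy, h⟩ := h6 u hu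
    refine ⟨Mᵀ, ⟨M, hM, rfl⟩, x, y, hx, hy, ?_⟩
    rwa [Matrix.mulVec_transpose, Matrix.mulVec_transpose]
  · intro φ hφ
    obtain ⟨M, hM, x, y, hx, hy, h⟩ := h5 φ hφ
    refine ⟨Mᵀ, ⟨M, hM, rfl⟩, x, y, hx, hy, ?_⟩
    rwa [Matrix.vecMul_transpose, Matrix.vecMul_transpose]

/-- The condition `row` read on ranges: some matrix of `V` has its range contained in no plane
through `u`. -/
theorem Good.exists_not_mem_range {n p : ℕ}
    {V : Submodule (ZMod 2) (Matrix (Fin n) (Fin p) (ZMod 2))}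
    (h : Good V) {u : Fin n → ZMod 2} (hu : u ≠ 0) :
    ∃ M ∈ V, ∀ v, ∃ z, ¬ Pl u v (M *ᵥ z) := by
  obtain ⟨M, hM, x, y, hx, hy, hx0, hy0, hxy⟩ := h.row u hu
  refine ⟨M, hM, fun v => ?_⟩
  by_contra! hcon
  have key : ∀ x, u ⬝ᵥ x = 0 → x ᵥ* M ≠ 0 → x ⬝ᵥ v = 1 := by
    intro x hx hx0
    rcases zmod_two_cases (x ⬝ᵥ v) with h | h
    · refine absurd (dotProduct_eq_zero _ fun z => ?_) hx0
      rw [← Matrix.dotProduct_mulVec]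
      rw [dotProduct_comm] at hx
      rcases hcon z with e | e | e | e <;> simp [e, h, hx]
    · exact h
  refine hxy (dotProduct_eq _ _ fun z => ?_)
  rw [← Matrix.dotProduct_mulVec, ← Matrix.dotProduct_mulVec]
  have := key x hx hx0
  have := key y hy hy0
  rw [dotProduct_comm] at hx hy
  rcases hcon z with e | e | e | e <;> simp [*]

/-- A subspace containing the ranges of all matrices of `V` is the whole space. -/
theorem Good.mem_of_range_le {n p : ℕ}
    {V : Submodule (ZMod 2) (Matrix (Fin n) (Fin p) (ZMod 2))}
    (h : Good V) {S : Submodule (ZMod 2) (Fin n → ZMod 2)}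
    (hS : ∀ M ∈ V, ∀ z, M *ᵥ z ∈ S) (w : Fin n → ZMod 2) : w ∈ S := by
  by_contra hw
  obtain ⟨f, hf, hfS⟩ := Submodule.exists_dual_map_eq_bot_of_notMem hw inferInstance
  obtain ⟨y, rfl⟩ := (dotProductEquiv (ZMod 2) (Fin n)).surjective f
  have hy : y = 0 := by
    refine h.surj y fun M hM => dotProduct_eq_zero _ fun z => ?_
    rw [← Matrix.dotProduct_mulVec]
    have : dotProductEquiv (ZMod 2) (Fin n) y (M *ᵥ z) ∈
      S.map (dotProductEquiv (ZMod 2) (Fin n) y) := ⟨_, hS M hM z, rfl⟩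
    rw [hfS] at this
    simpa using this
  simp [hy] at hf

/-! ### Spaces mapping a hyperplane into a plane -/

/-- If all matrices of `V` map the hyperplane `φ ⬝ᵥ x = 0` into one plane `P`, then `n = p = 3`.
A matrix `m` of `V` maps two vectors `x1`, `x2` of the hyperplane to a basis of `P`. If `M e ∉ P`
for a vector `e` outside the hyperplane, then `M` and `M + m` both have rank at most one on the
hyperplane, which determines a trace and makes `M` vanish on the vectors of the hyperplane killed
by `m`. -/
theorem Good.finrank_of_hyperplane {n p : ℕ}
    {V : Submodule (ZMod 2) (Matrix (Fin n) (Fin p) (ZMod 2))}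
    (h : Good V) {φ : Fin p → ZMod 2} (hφ : φ ≠ 0) {P : Submodule (ZMod 2) (Fin n → ZMod 2)}
    (hP : Module.finrank (ZMod 2) P ≤ 2)
    (hV : ∀ M ∈ V, ∀ x, φ ⬝ᵥ x = 0 → M *ᵥ x ∈ P) : n = 3 ∧ p = 3 := by
  obtain ⟨m, hm, x1, x2, hx1, hx2, hind⟩ := h.col φ hφ
  have hPl : ∀ {M}, M ∈ V → ∀ {x}, φ ⬝ᵥ x = 0 → Pl (m *ᵥ x1) (m *ᵥ x2) (M *ᵥ x) :=
    fun hM _ hx => Pl.of_finrank_le hP (hV _ hm _ hx1) (hV _ hm _ hx2) (hV _ hM _ hx) hind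
  have hmP : ∀ z, m *ᵥ z ∈ P := by
    intro z
    rcases Pl.of_rank (h.rk m hm) hind z with e | e | e | e <;> rw [e]
    · exact P.zero_mem
    · exact hV _ hm _ hx1
    · exact hV _ hm _ hx2
    · exact P.add_mem (hV _ hm _ hx1) (hV _ hm _ hx2)
  have hdim : ∀ {c}, c ∈ P ↔ Pl (m *ᵥ x1) (m *ᵥ x2) c := by
    intro c
    refine ⟨fun hc => Pl.of_finrank_le hP (hV _ hm _ hx1) (hV _ hm _ hx2) hc hind, ?_⟩
    rintro (e | e | e | e) <;> rw [e]
    · exact P.zero_mem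
    · exact hV _ hm _ hx1
    · exact hV _ hm _ hx2
    · exact P.add_mem (hV _ hm _ hx1) (hV _ hm _ hx2)
  obtain ⟨e, he⟩ : ∃ e, φ ⬝ᵥ e = 1 := by
    by_contra! hcon
    exact hφ (dotProduct_eq_zero _ fun z => (zmod_two_cases _).resolve_right (hcon z))
  have hdec : ∀ z, φ ⬝ᵥ z = 0 ∨ φ ⬝ᵥ (z + e) = 0 := by
    intro z
    rcases zmod_two_cases (φ ⬝ᵥ z) with h | h
    · exact Or.inl h
    · right; rw [dotProduct_add, h, he]; decide
  have hd : ∀ x : Fin n → ZMod 2, x + x = 0 := ZModModule.add_self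
  -- a matrix leaving the plane on `e` has rank at most one on the hyperplane
  have hno : ∀ M ∈ V, M *ᵥ e ∉ P → ∀ x y, φ ⬝ᵥ x = 0 → φ ⬝ᵥ y = 0 →
      ¬ Ind (M *ᵥ x) (M *ᵥ y) := by
    intro M hM hMe x y hx hy hI
    refine hMe ?_
    rcases Pl.of_rank (h.rk M hM) hI e with e | e | e | e <;> rw [e]
    · exact P.zero_mem
    · exact hV _ hM _ hx
    · exact hV _ hM _ hy
    · exact P.add_mem (hV _ hM _ hx) (hV _ hM _ hy)
  have hadd : ∀ M, M *ᵥ e ∉ P → (M + m) *ᵥ e ∉ P := by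
    intro M hMe hc
    rw [Matrix.add_mulVec] at hc
    exact hMe ((P.add_mem_iff_left (hmP e)).1 hc)
  -- `α (M *ᵥ x1) + β (M *ᵥ x2)` is the trace of `M` as an endomorphism of `P`, once `P` is
  -- identified with the span of `x1` and `x2` by means of `m`
  obtain ⟨α, hα1, hα2⟩ := hind.exists_dual
  obtain ⟨β, hβ2, hβ1⟩ := hind.symm.exists_dual
  have htr : ∀ M ∈ V, M *ᵥ e ∉ P → α (M *ᵥ x1) + β (M *ᵥ x2) = 1 := by
    intro M hM hMe
    have a1 := hno M hM hMe x1 x2 hx1 hx2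
    have a2 := hno _ (V.add_mem hM hm) (hadd M hMe) x1 x2 hx1 hx2
    rw [Matrix.add_mulVec, Matrix.add_mulVec] at a2
    exact trace_eq_one hind (hPl hM hx1) (hPl hM hx2) a1 a2 hα1 hα2 hβ1 hβ2
  obtain ⟨N, hN, hNe⟩ : ∃ N ∈ V, N *ᵥ e ∉ P := by
    by_contra! hcon
    obtain ⟨M, hM, hM'⟩ := h.exists_not_mem_range hind.1
    obtain ⟨z, hz⟩ := hM' (m *ᵥ x2)
    refine hz (hdim.1 ?_)
    rcases hdec z with hz | hz
    · exact hV M hM z hz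
    · have := hV M hM _ hz
      rw [Matrix.mulVec_add] at this
      exact (P.add_mem_iff_left (hcon M hM)).1 this
  -- two matrices leaving the plane on `e` differ by one that does not, since the trace of the
  -- difference is `1 + 1 = 0`
  have hpair : ∀ M ∈ V, M *ᵥ e ∉ P → M *ᵥ e + N *ᵥ e ∈ P := by
    intro M hM hMe
    by_contra hc
    rw [← Matrix.add_mulVec] at hc
    have h1 := htr M hM hMe
    have h2 := htr N hN hNe
    have h3 := htr _ (V.add_mem hM hN) hc
    simp only [Matrix.add_mulVec, map_add] at h3
    have : (1 : ZMod 2) + 1 = 1 := by linear_combination h3 - h1 - h2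
    exact absurd this (by decide)
  have hcol : ∀ M ∈ V, ∀ z, M *ᵥ z ∈ P ∨ M *ᵥ z + N *ᵥ e ∈ P := by
    intro M hM z
    have hMe : M *ᵥ e ∈ P ∨ M *ᵥ e + N *ᵥ e ∈ P := by
      by_cases hMe : M *ᵥ e ∈ P
      · exact Or.inl hMe
      · exact Or.inr (hpair M hM hMe)
    rcases hdec z with hz | hz
    · exact Or.inl (hV M hM z hz)
    · have hz := hV M hM _ hz
      rw [Matrix.mulVec_add] at hz
      rcases hMe with hMe | hMe
      · exact Or.inl ((P.add_mem_iff_left hMe).1 hz)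
      · right
        have := P.add_mem hz hMe
        rwa [add_assoc, ← add_assoc (M *ᵥ e), hd, zero_add] at this
  -- vectors of the hyperplane killed by `m` are killed by all of `V`
  have hkill : ∀ M ∈ V, M *ᵥ e ∉ P → ∀ x, φ ⬝ᵥ x = 0 → m *ᵥ x = 0 → M *ᵥ x = 0 := by
    intro M hM hMe x hx hmx
    have a1 := hno M hM hMe x x1 hx hx1
    have a2 := hno M hM hMe x x2 hx hx2
    have a3 := hno _ (V.add_mem hM hm) (hadd M hMe) x x1 hx hx1
    have a4 := hno _ (V.add_mem hM hm) (hadd M hMe) x x2 hx hx2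
    rw [Matrix.add_mulVec, Matrix.add_mulVec, hmx, add_zero] at a3 a4
    exact eq_zero_of_not_ind hind a1 a2 a3 a4
  have hzero : ∀ x, φ ⬝ᵥ x = 0 → m *ᵥ x = 0 → x = 0 := by
    intro x hx hmx
    refine h.inj x fun M hM => ?_
    by_cases hMe : M *ᵥ e ∈ P
    · have h1 := hkill N hN hNe x hx hmx
      have h2 := hkill _ (V.add_mem hM hN)
        (by rw [Matrix.add_mulVec]; exact fun hc => hNe ((P.add_mem_iff_right hMe).1 hc)) x hx hmx
      rwa [Matrix.add_mulVec, h1, add_zero] at h2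
    · exact hkill M hM hMe x hx hmx
  constructor
  · have := finrank_eq_three hind (c := N *ᵥ e) (fun hc => hNe (hdim.2 hc)) ?_
    · simpa using this
    · refine h.mem_of_range_le fun M hM z => mem_span_triple_of_pl ?_
      rw [← hdim, ← hdim]
      exact hcol M hM z
  · have hI : Ind x1 x2 := by
      obtain ⟨i1, i2, i3⟩ := hind
      refine ⟨?_, ?_, fun h => i3 (by rw [h])⟩
      · rintro rfl
        exact i1 (Matrix.mulVec_zero m)
      · rintro rfl
        exact i2 (Matrix.mulVec_zero m)
    have := finrank_eq_three hI (c := e) ?_ ?_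
    · simpa using this
    · rintro (h | h | h | h) <;> rw [h] at he <;> simp [hx1, hx2] at he
    · have hk : ∀ z, φ ⬝ᵥ z = 0 → Pl x1 x2 z := by
        intro z hz
        have key : ∀ w, φ ⬝ᵥ w = 0 → m *ᵥ z = m *ᵥ w → z = w := by
          intro w hw hzw
          have h1 := hzero (z + w) (by rw [dotProduct_add, hz, hw, add_zero])
            (by rw [Matrix.mulVec_add, hzw, hd])
          exact add_eq_zero_iff_eq_of_two.1 h1
        rcases hPl hm hz with h | h | h | h
        · exact Or.inl (key 0 (by simp) (by simpa using h))
        · exact Or.inr (Or.inl (key _ hx1 h))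
        · exact Or.inr (Or.inr (Or.inl (key _ hx2 h)))
        · refine Or.inr (Or.inr (Or.inr (key _ ?_ ?_)))
          · rw [dotProduct_add, hx1, hx2, add_zero]
          · rw [h, Matrix.mulVec_add]
      exact fun z => mem_span_triple_of_pl ((hdec z).imp (hk z) (hk _))

/-! ### Spaces containing a matrix of rank one -/

theorem finrank_span_pair_le {W : Type*} [AddCommGroup W] [Module (ZMod 2) W] (a b : W) :
    Module.finrank (ZMod 2) (Submodule.span (ZMod 2) {a, b}) ≤ 2 := by
  classical
  have := finrank_span_finset_le_card (R := ZMod 2) ({a, b} : Finset W)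
  push_cast at this
  exact this.trans Finset.card_le_two

/-- If `V` contains a matrix `E` of rank one, then `n = p = 3`. With `E` the outer product of `u` and
`φ`, every `M` in `V` has rank at most one from the hyperplane `φ ⬝ᵥ x = 0` to the quotient by
`u`; a common image line there puts `V` in the situation of `Good.finrank_of_hyperplane`, a common
kernel hyperplane does so for the transposed space. -/
theorem Good.finrank_of_rank_one {n p : ℕ}
    {V : Submodule (ZMod 2) (Matrix (Fin n) (Fin p) (ZMod 2))}
    (h : Good V) {E : Matrix (Fin n) (Fin p) (ZMod 2)} (hE : E ∈ V) (hE0 : E ≠ 0)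
    (hE1 : ∀ x y, ¬ Ind (E *ᵥ x) (E *ᵥ y)) : n = 3 ∧ p = 3 := by
  obtain ⟨z₀, hz₀⟩ : ∃ z, E *ᵥ z ≠ 0 := by
    by_contra! hcon
    exact hE0 (Matrix.mulVec_injective (by ext1 z; rw [hcon z, Matrix.zero_mulVec]))
  obtain ⟨y, hy⟩ : ∃ y, y ⬝ᵥ (E *ᵥ z₀) = 1 := by
    by_contra! hcon
    refine hz₀ (dotProduct_eq_zero _ fun z => ?_)
    rw [dotProduct_comm]
    exact (zmod_two_cases _).resolve_right (hcon z)
  obtain ⟨u, hu⟩ : ∃ u, u = E *ᵥ z₀ := ⟨_, rfl⟩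
  rw [← hu] at hz₀ hy
  -- `E` is the outer product of `u` and `φ`
  obtain ⟨φ, hφ⟩ : ∃ φ, φ = y ᵥ* E := ⟨_, rfl⟩
  have hφE : ∀ x, φ ⬝ᵥ x = 0 → E *ᵥ x = 0 := by
    intro x hx
    by_contra hne
    have : E *ᵥ x = u := by
      by_contra hne'
      exact hE1 x z₀ ⟨hne, hu ▸ hz₀, hu ▸ hne'⟩
    rw [hφ, ← Matrix.dotProduct_mulVec, this, hy] at hx
    exact one_ne_zero hx
  have hφ0 : φ ≠ 0 := by
    rintro rfl
    exact hz₀ (hu ▸ hφE z₀ (zero_dotProduct _))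
  let S := Submodule.span (ZMod 2) {u}
  let H := LinearMap.ker (dotProductEquiv (ZMod 2) (Fin p) φ)
  have hH : ∀ x, x ∈ H ↔ φ ⬝ᵥ x = 0 := fun x => Iff.rfl
  have hrank : ∀ M ∈ V, ∀ x y, φ ⬝ᵥ x = 0 → φ ⬝ᵥ y = 0 →
      ¬ Ind (S.mkQ (M *ᵥ x)) (S.mkQ (M *ᵥ y)) := by
    rintro M hM x y hx hy ⟨i1, i2, i3⟩
    have hI : Ind (M *ᵥ x) (M *ᵥ y) :=
      ⟨fun e => i1 (by rw [e, map_zero]), fun e => i2 (by rw [e, map_zero]),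
        fun e => i3 (by rw [e])⟩
    -- `M` and `M + E` agree on the hyperplane, so the plane spanned by `M *ᵥ x` and `M *ᵥ y` is
    -- the range of both and contains `E *ᵥ z₀ = u`
    have h1 := Pl.of_rank (h.rk M hM) hI z₀
    have ex : (M + E) *ᵥ x = M *ᵥ x := by rw [Matrix.add_mulVec, hφE x hx, add_zero]
    have ey : (M + E) *ᵥ y = M *ᵥ y := by rw [Matrix.add_mulVec, hφE y hy, add_zero]
    have h2 := Pl.of_rank (h.rk _ (V.add_mem hM hE)) (x := x) (y := y) (by rwa [ex, ey]) z₀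
    rw [ex, ey, Matrix.add_mulVec, ← hu] at h2
    have h3 : Pl (M *ᵥ x) (M *ᵥ y) u := by
      rw [← mem_span_pair_iff] at h1 h2 ⊢
      exact (Submodule.add_mem_iff_right _ h1).1 h2
    have hqu : S.mkQ u = 0 := by
      rw [Submodule.mkQ_apply, Submodule.Quotient.mk_eq_zero]
      exact Submodule.mem_span_singleton_self u
    rcases h3 with e | e | e | e
    · exact hz₀ e
    · exact i1 (e ▸ hqu)
    · exact i2 (e ▸ hqu)
    · rw [e, map_add] at hqu
      exact i3 (add_eq_zero_iff_eq_of_two.1 hqu)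
  let F : Matrix (Fin n) (Fin p) (ZMod 2) →ₗ[ZMod 2] (H →ₗ[ZMod 2] ((Fin n → ZMod 2) ⧸ S)) :=
    { toFun := fun M => S.mkQ ∘ₗ M.mulVecLin ∘ₗ H.subtype
      map_add' := fun M N => by ext x; simp
      map_smul' := fun r M => by ext x; simp }
  have hF : ∀ M x, F M x = S.mkQ (M *ᵥ x.1) := fun M x => rfl
  rcases rank_one_spaces (V.map F) (by
    rintro _ ⟨M, hM, rfl⟩ x y
    exact hrank M hM x y x.2 y.2) with ⟨b, hb⟩ | ⟨ρ, hρ⟩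
  · obtain ⟨v, rfl⟩ := S.mkQ_surjective b
    refine h.finrank_of_hyperplane hφ0 (finrank_span_pair_le u v) fun M hM x hx => ?_
    have hle : S ≤ Submodule.span (ZMod 2) {u, v} := Submodule.span_mono (by simp)
    have hv : v ∈ Submodule.span (ZMod 2) {u, v} := Submodule.subset_span (by simp)
    rcases hb (F M) ⟨M, hM, rfl⟩ ⟨x, hx⟩ with e | e
    · rw [hF, Submodule.mkQ_apply, Submodule.Quotient.mk_eq_zero] at e
      exact hle e
    · rw [hF, Submodule.mkQ_apply, Submodule.mkQ_apply, Submodule.Quotient.eq] at e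
      exact (Submodule.sub_mem_iff_left _ hv).1 (hle e)
  · obtain ⟨ρ', hρ'⟩ := LinearMap.exists_extend ρ
    obtain ⟨r, rfl⟩ := (dotProductEquiv (ZMod 2) (Fin p)).surjective ρ'
    refine (h.transpose.finrank_of_hyperplane hz₀ (finrank_span_pair_le φ r) ?_).symm
    rintro _ ⟨M, hM, rfl⟩ ψ hψ
    -- a vector `x` killed by `φ` and `r` is mapped by `M` into the span of `u`, hence is
    -- orthogonal to `Mᵀ *ᵥ ψ`
    by_contra hmem
    obtain ⟨f, hf, hfS⟩ := Submodule.exists_dual_map_eq_bot_of_notMem hmem inferInstance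
    obtain ⟨x, rfl⟩ := (dotProductEquiv (ZMod 2) (Fin p)).surjective f
    have hker : ∀ w ∈ Submodule.span (ZMod 2) {φ, r}, w ⬝ᵥ x = 0 := by
      intro w hw
      have : dotProductEquiv (ZMod 2) (Fin p) x w ∈
        Submodule.map (dotProductEquiv (ZMod 2) (Fin p) x) (Submodule.span (ZMod 2) {φ, r}) :=
        ⟨w, hw, rfl⟩
      rw [hfS] at this
      rw [dotProduct_comm]
      simpa using this
    have hx : φ ⬝ᵥ x = 0 := hker φ (Submodule.subset_span (by simp))
    have hr : r ⬝ᵥ x = 0 := hker r (Submodule.subset_span (by simp))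
    have e := hρ (F M) ⟨M, hM, rfl⟩ ⟨x, hx⟩ (by rw [← hρ']; exact hr)
    rw [hF, Submodule.mkQ_apply, Submodule.Quotient.mk_eq_zero,
      Submodule.mem_span_singleton] at e
    obtain ⟨c, hc⟩ := e
    refine hf ?_
    change x ⬝ᵥ (Mᵀ *ᵥ ψ) = 0
    rw [Matrix.mulVec_transpose, dotProduct_comm, ← Matrix.dotProduct_mulVec]
    change ψ ⬝ᵥ (M *ᵥ x) = 0
    rw [← hc, dotProduct_smul, dotProduct_comm, hψ, smul_zero]

/-! ### Spaces of constant rank two -/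

/-- If the ranges of `A` and `B` meet trivially, then `ker (A + B) ≤ ker A`, with equality by
equality of ranks; so `B` vanishes on `ker A`. -/
theorem ker_eq_of_disjoint {n p : ℕ} {A B : Matrix (Fin n) (Fin p) (ZMod 2)}
    (hA : A.rank = 2) (hAB : (A + B).rank = 2)
    (hdis : ∀ x y, A *ᵥ x = B *ᵥ y → A *ᵥ x = 0) {x : Fin p → ZMod 2} (hx : A *ᵥ x = 0) :
    B *ᵥ x = 0 := by
  have hle : LinearMap.ker (A + B).mulVecLin ≤ LinearMap.ker A.mulVecLin := by
    intro x hx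
    rw [LinearMap.mem_ker, Matrix.mulVecLin_apply, Matrix.add_mulVec,
      add_eq_zero_iff_eq_of_two] at hx
    exact hdis x x hx
  have h1 := LinearMap.finrank_range_add_finrank_ker A.mulVecLin
  have h2 := LinearMap.finrank_range_add_finrank_ker (A + B).mulVecLin
  have h3 : Module.finrank (ZMod 2) (LinearMap.range A.mulVecLin) = 2 := hA
  have h4 : Module.finrank (ZMod 2) (LinearMap.range (A + B).mulVecLin) = 2 := hAB
  have heq := Submodule.eq_of_le_of_finrank_le hle (by omega)
  have : x ∈ LinearMap.ker (A + B).mulVecLin := by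
    rw [heq]
    exact hx
  rw [LinearMap.mem_ker, Matrix.mulVecLin_apply, Matrix.add_mulVec, hx, zero_add] at this
  exact this

theorem exists_ker_not_ker {n p : ℕ} {A B : Matrix (Fin n) (Fin p) (ZMod 2)}
    (hA : A.rank = 2) (hB : B.rank = 2) {k : Fin p → ZMod 2} (hAk : A *ᵥ k = 0)
    (hBk : B *ᵥ k ≠ 0) : ∃ x, B *ᵥ x = 0 ∧ A *ᵥ x ≠ 0 := by
  by_contra! hcon
  have hle : LinearMap.ker B.mulVecLin ≤ LinearMap.ker A.mulVecLin := fun x hx => hcon x hx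
  have h1 := LinearMap.finrank_range_add_finrank_ker A.mulVecLin
  have h2 := LinearMap.finrank_range_add_finrank_ker B.mulVecLin
  have h3 : Module.finrank (ZMod 2) (LinearMap.range A.mulVecLin) = 2 := hA
  have h4 : Module.finrank (ZMod 2) (LinearMap.range B.mulVecLin) = 2 := hB
  have heq := Submodule.eq_of_le_of_finrank_le hle (by omega)
  have : k ∈ LinearMap.ker B.mulVecLin := by
    rw [heq]
    exact hAk
  exact hBk this

/-- Every nonzero matrix of `V` has rank exactly two. -/
def ConstRank {n p : ℕ} (V : Submodule (ZMod 2) (Matrix (Fin n) (Fin p) (ZMod 2))) : Prop :=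
  ∀ M ∈ V, M ≠ 0 → M.rank = 2

/-- Two matrices of `V` with different kernels have ranges that meet nontrivially. -/
theorem ConstRank.meet {n p : ℕ} {V : Submodule (ZMod 2) (Matrix (Fin n) (Fin p) (ZMod 2))}
    (hc : ConstRank V) {A B : Matrix (Fin n) (Fin p) (ZMod 2)} (hA : A ∈ V) (hB : B ∈ V)
    {k : Fin p → ZMod 2} (hAk : A *ᵥ k = 0) (hBk : B *ᵥ k ≠ 0) (hA0 : A ≠ 0) :
    ∃ x y, A *ᵥ x = B *ᵥ y ∧ A *ᵥ x ≠ 0 := by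
  by_contra! hcon
  refine hBk (ker_eq_of_disjoint (hc A hA hA0) (hc _ (V.add_mem hA hB) ?_) hcon hAk)
  intro e
  have : (A + B) *ᵥ k = 0 := by rw [e, Matrix.zero_mulVec]
  rw [Matrix.add_mulVec, hAk, zero_add] at this
  exact hBk this

/-- Let `A` and `B` have the same kernel and ranges meeting trivially, and let `C` not vanish on that
kernel. The range of `C` meets those of `A`, `B` and `A + B`; if it meets the first in `A x`, it
meets the second in `B x`. -/
theorem ConstRank.range_eq {n p : ℕ}
    {V : Submodule (ZMod 2) (Matrix (Fin n) (Fin p) (ZMod 2))}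
    (hc : ConstRank V) {A B C : Matrix (Fin n) (Fin p) (ZMod 2)} (hA : A ∈ V) (hB : B ∈ V)
    (hC : C ∈ V) (hdis : ∀ x y, A *ᵥ x = B *ᵥ y → A *ᵥ x = 0)
    (hker : ∀ x, A *ᵥ x = 0 ↔ B *ᵥ x = 0)
    {k : Fin p → ZMod 2} (hAk : A *ᵥ k = 0) (hCk : C *ᵥ k ≠ 0)
    {x : Fin p → ZMod 2} (hx : A *ᵥ x ≠ 0) (hCx : C *ᵥ x = A *ᵥ x) (z : Fin p → ZMod 2) :
    Pl (A *ᵥ x) (B *ᵥ x) (C *ᵥ z) := by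
  have hBk := (hker k).1 hAk
  have hBx : B *ᵥ x ≠ 0 := fun e => hx ((hker x).2 e)
  have hB0 : B ≠ 0 := fun e => hBx (by rw [e, Matrix.zero_mulVec])
  obtain ⟨t, s, hts, ht⟩ := hc.meet hB hC hBk hCk hB0
  have hABk : (A + B) *ᵥ k = 0 := by rw [Matrix.add_mulVec, hAk, hBk, add_zero]
  have hAB0 : A + B ≠ 0 := by
    intro e
    have : (A + B) *ᵥ x = 0 := by rw [e, Matrix.zero_mulVec]
    rw [Matrix.add_mulVec, add_eq_zero_iff_eq_of_two] at this
    exact hx (hdis x x this)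
  obtain ⟨r, q, hrq, hr⟩ := hc.meet (V.add_mem hA hB) hC hABk hCk hAB0
  have hI : Ind (C *ᵥ x) (C *ᵥ s) := by
    rw [hCx, ← hts]
    exact ⟨hx, ht, fun e => hx (hdis _ _ e)⟩
  have hC2 : C.rank ≤ 2 :=
    (hc C hC (fun e => hCk (by rw [e, Matrix.zero_mulVec]))).le
  -- `A + B` vanishes on the common kernel of `A` and `B`, so `r` is not in it
  have hrA : A *ᵥ r ≠ 0 := by
    intro e
    rw [Matrix.add_mulVec, e, (hker r).1 e, add_zero] at hr
    exact hr rfl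
  have hrB : B *ᵥ r ≠ 0 := fun e => hrA ((hker r).2 e)
  have hd : ∀ x : Fin n → ZMod 2, x + x = 0 := ZModModule.add_self
  have hbt : B *ᵥ t = B *ᵥ x := by
    have h1 := Pl.of_rank hC2 hI q
    rw [← hrq, hCx, ← hts, Matrix.add_mulVec] at h1
    rcases h1 with e | e | e | e
    · rw [Matrix.add_mulVec] at hr
      exact absurd e hr
    · rw [add_comm, ← ZModModule.sub_eq_add, sub_eq_iff_eq_add, ← Matrix.mulVec_add] at e
      exact absurd (e ▸ hdis _ _ e.symm) hrB
    · rw [← ZModModule.sub_eq_add, sub_eq_iff_eq_add, ← Matrix.mulVec_add] at e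
      exact absurd (hdis _ _ e) hrA
    · have e2 : A *ᵥ (r + x) = B *ᵥ (t + r) := by
        rw [Matrix.mulVec_add, Matrix.mulVec_add, ← ZModModule.sub_eq_add,
          ← ZModModule.sub_eq_add (B *ᵥ t), sub_eq_sub_iff_add_eq_add, e]
        exact add_comm _ _
      have e3 := hdis _ _ e2
      have e4 := (hker _).1 e3
      rw [e3] at e2
      rw [Matrix.mulVec_add, add_eq_zero_iff_eq_of_two] at e4
      have e5 := e2.symm
      rw [Matrix.mulVec_add, add_eq_zero_iff_eq_of_two] at e5
      rw [e5, e4]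
  have h1 := Pl.of_rank hC2 hI z
  rwa [hCx, ← hts, hbt] at h1

/-- Any two nonzero matrices of a constant rank space have ranges that meet nontrivially. Otherwise
`A`, `B` have a common kernel. If all of `V` vanishes on it, there are only two columns. If some
`N` does not, take `x` in `ker N` but not in `ker A`: the ranges of `N + A` and `N + B` both lie in
the span of `A x` and `B x`, hence so does that of `A + B`, which forces `A + B` to have rank one. -/
theorem Good.ranges_meet {n p : ℕ}
    {V : Submodule (ZMod 2) (Matrix (Fin n) (Fin p) (ZMod 2))} (h : Good V)
    (hc : ConstRank V) {A B : Matrix (Fin n) (Fin p) (ZMod 2)} (hA : A ∈ V) (hB : B ∈ V)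
    (hA0 : A ≠ 0) (hB0 : B ≠ 0) :
    ∃ x y, A *ᵥ x = B *ᵥ y ∧ A *ᵥ x ≠ 0 := by
  by_contra! hdis
  have hdis' : ∀ x y, B *ᵥ x = A *ᵥ y → B *ᵥ x = 0 :=
    fun x y e => e.trans (hdis y x e.symm)
  have hABne : ∀ x, A *ᵥ x ≠ 0 → (A + B) *ᵥ x ≠ 0 := by
    intro x hx e
    rw [Matrix.add_mulVec, add_eq_zero_iff_eq_of_two] at e
    exact hx (hdis x x e)
  obtain ⟨x₀, y₀, hI₀⟩ := exists_ind_of_rank (hc A hA hA0).ge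
  have hAB0 : A + B ≠ 0 := by
    intro e
    exact hABne x₀ hI₀.1 (by rw [e, Matrix.zero_mulVec])
  have hAB2 := hc _ (V.add_mem hA hB) hAB0
  have hker : ∀ x, A *ᵥ x = 0 ↔ B *ᵥ x = 0 := fun x =>
    ⟨ker_eq_of_disjoint (hc A hA hA0) hAB2 hdis,
      ker_eq_of_disjoint (hc B hB hB0) (by rwa [add_comm]) hdis'⟩
  by_cases hall : ∀ N ∈ V, ∀ k, A *ᵥ k = 0 → N *ᵥ k = 0
  · -- `A` is injective, so the source is a plane, which contradicts `col`
    have hinj : ∀ x y, A *ᵥ x = A *ᵥ y → x = y := by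
      intro x y e
      refine add_eq_zero_iff_eq_of_two.1 (h.inj _ fun N hN => hall N hN _ ?_)
      rw [Matrix.mulVec_add, add_eq_zero_iff_eq_of_two, e]
    have hx₀ : x₀ ≠ 0 := by
      rintro rfl
      exact hI₀.1 (Matrix.mulVec_zero A)
    obtain ⟨M, hM, x, y, hx, hy, i1, i2, i3⟩ := h.col x₀ hx₀
    have hI : Ind (A *ᵥ x) (A *ᵥ y) := by
      refine ⟨fun e => i1 (hall M hM x e), fun e => i2 (hall M hM y e), fun e => i3 ?_⟩
      rw [hinj x y e]
    refine hx₀ (dotProduct_eq_zero _ fun z => ?_)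
    rcases Pl.of_rank (h.rk A hA) hI z with e | e | e | e
    · rw [hinj z 0 (by rw [e, Matrix.mulVec_zero]), dotProduct_zero]
    · rw [hinj z x e, hx]
    · rw [hinj z y e, hy]
    · rw [hinj z (x + y) (by rw [e, Matrix.mulVec_add]), dotProduct_add, hx, hy, add_zero]
  · push Not at hall
    obtain ⟨N, hN, k, hAk, hNk⟩ := hall
    have hBk := (hker k).1 hAk
    have hN0 : N ≠ 0 := fun e => hNk (by rw [e, Matrix.zero_mulVec])
    obtain ⟨x, hNx, hAx⟩ := exists_ker_not_ker (hc A hA hA0) (hc N hN hN0) hAk hNk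
    have hBx : B *ᵥ x ≠ 0 := fun e => hAx ((hker x).2 e)
    have h1 := hc.range_eq hA hB (V.add_mem hN hA) hdis hker hAk
      (by rwa [Matrix.add_mulVec, hAk, add_zero]) hAx
      (by rw [Matrix.add_mulVec, hNx, zero_add])
    have h2 := hc.range_eq hB hA (V.add_mem hN hB) hdis' (fun x => (hker x).symm) hBk
      (by rwa [Matrix.add_mulVec, hBk, add_zero]) hBx
      (by rw [Matrix.add_mulVec, hNx, zero_add])
    have h3 : ∀ z, Pl (A *ᵥ x) (B *ᵥ x) ((A + B) *ᵥ z) := by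
      intro z
      have e1 := h1 z
      have e2 := h2 z
      rw [← mem_span_pair_iff] at e1 e2 ⊢
      rw [Set.pair_comm] at e2
      have := Submodule.add_mem _ e1 e2
      rwa [← Matrix.add_mulVec, add_add_add_comm, ZModModule.add_self, zero_add] at this
    -- the only nonzero value of `A + B` is then its value at `x`
    have h4 : ∀ z, (A + B) *ᵥ z = 0 ∨ (A + B) *ᵥ z = A *ᵥ x + B *ᵥ x := by
      intro z
      rcases h3 z with e | e | e | e
      · exact Or.inl e
      · exfalso
        rw [Matrix.add_mulVec, add_comm, ← ZModModule.sub_eq_add, sub_eq_iff_eq_add,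
          ← Matrix.mulVec_add] at e
        have e1 := hdis' _ _ e
        rw [e1] at e
        have e2 := e.symm
        rw [Matrix.mulVec_add, (hker z).2 e1, add_zero] at e2
        exact hAx e2
      · exfalso
        rw [Matrix.add_mulVec, ← ZModModule.sub_eq_add, sub_eq_iff_eq_add,
          ← Matrix.mulVec_add] at e
        have e1 := hdis _ _ e
        rw [e1] at e
        have e2 := e.symm
        rw [Matrix.mulVec_add, (hker z).1 e1, add_zero] at e2
        exact hBx e2
      · exact Or.inr e
    obtain ⟨y, z, i1, i2, i3⟩ := exists_ind_of_rank hAB2.ge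
    exact i3 (((h4 y).resolve_left i1).trans ((h4 z).resolve_left i2).symm)

/-- Planes that pairwise meet in a line, but have no line in common, lie in a space of dimension
three; the ranges of the nonzero matrices of `V` are such planes. -/
theorem Good.rows_eq_three {n p : ℕ}
    {V : Submodule (ZMod 2) (Matrix (Fin n) (Fin p) (ZMod 2))} (h : Good V)
    (hc : ConstRank V) : n = 3 := by
  -- no nonzero vector lies in the ranges of all nonzero matrices
  have hmiss : ∀ u : Fin n → ZMod 2, u ≠ 0 → ∃ M ∈ V, M ≠ 0 ∧ ∀ z, M *ᵥ z ≠ u := by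
    intro u hu
    obtain ⟨M, hM, hM'⟩ := h.exists_not_mem_range hu
    have hM0 : M ≠ 0 := by
      rintro rfl
      obtain ⟨z, hz⟩ := hM' 0
      exact hz (Or.inl (Matrix.zero_mulVec z))
    refine ⟨M, hM, hM0, fun z hz => ?_⟩
    obtain ⟨x, y, hI⟩ := exists_ind_of_rank (hc M hM hM0).ge
    have key : ∃ v, Ind (M *ᵥ z) (M *ᵥ v) := by
      by_cases hx : M *ᵥ z = M *ᵥ x
      · exact ⟨y, hx ▸ hI⟩
      · exact ⟨x, hz ▸ hu, hI.1, hx⟩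
    obtain ⟨v, hv⟩ := key
    obtain ⟨w, hw⟩ := hM' (M *ᵥ v)
    exact hw (hz ▸ Pl.of_rank (h.rk M hM) hv w)
  obtain ⟨A, hA, hA0⟩ := h.ne
  obtain ⟨x₀, -, hx₀, -⟩ := exists_ind_of_rank (hc A hA hA0).ge
  obtain ⟨B, hB, hB0, hBx⟩ := hmiss _ hx₀
  obtain ⟨a, b, hab, hu⟩ := h.ranges_meet hc hA hB hA0 hB0
  obtain ⟨C, hC, hC0, hCu⟩ := hmiss _ hu
  obtain ⟨a', c, hac, hg⟩ := h.ranges_meet hc hA hC hA0 hC0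
  obtain ⟨b', c', hbc, hh⟩ := h.ranges_meet hc hB hC hB0 hC0
  have iA : Ind (A *ᵥ a) (A *ᵥ a') := ⟨hu, hg, fun e => hCu c (hac ▸ e.symm)⟩
  have iB : Ind (B *ᵥ b) (B *ᵥ b') := ⟨hab ▸ hu, hh, fun e => hCu c' (by rw [← hbc, hab, e])⟩
  have pA := Pl.of_rank (h.rk A hA) iA
  have pB := Pl.of_rank (h.rk B hB) iB
  have hout : ¬ Pl (A *ᵥ a) (A *ᵥ a') (B *ᵥ b') := by
    intro hpl
    -- the range of `A` would be that of `B`, which misses `A *ᵥ x₀`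
    have hg' : Pl (B *ᵥ b) (B *ᵥ b') (A *ᵥ a') := by
      rw [← hab]
      rcases hpl with e | e | e | e
      · exact absurd e iB.2.1
      · exact absurd (hab.symm.trans e.symm) iB.2.2
      · exact Or.inr (Or.inr (Or.inl e.symm))
      · refine Or.inr (Or.inr (Or.inr ?_))
        rw [e, ← add_assoc, ZModModule.add_self, zero_add]
    have hall : ∀ w, Pl (A *ᵥ a) (A *ᵥ a') w → ∃ z, B *ᵥ z = w := by
      have hg2 : ∃ z, B *ᵥ z = A *ᵥ a' := by
        rcases hg' with e | e | e | e
        · exact ⟨0, by rw [e, Matrix.mulVec_zero]⟩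
        · exact ⟨b, e.symm⟩
        · exact ⟨b', e.symm⟩
        · exact ⟨b + b', by rw [e, Matrix.mulVec_add]⟩
      obtain ⟨z, hz⟩ := hg2
      rintro w (e | e | e | e)
      · exact ⟨0, by rw [e, Matrix.mulVec_zero]⟩
      · exact ⟨b, by rw [e, hab]⟩
      · exact ⟨z, by rw [e, hz]⟩
      · exact ⟨b + z, by rw [e, Matrix.mulVec_add, hab, hz]⟩
    obtain ⟨z, hz⟩ := hall _ (pA x₀)
    exact hBx z hz
  have iC : Ind (C *ᵥ c) (C *ᵥ c') := by
    rw [← hac, ← hbc]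
    exact ⟨hg, hh, fun e => hout (Or.inr (Or.inr (Or.inl e.symm)))⟩
  have pC := Pl.of_rank (h.rk C hC) iC
  rw [← hab] at pB
  rw [← hac, ← hbc] at pC
  have key := finrank_eq_three iA hout (h.mem_of_range_le fun N hN z => ?_)
  · simpa using key
  obtain ⟨S, hS⟩ : ∃ S, S = Submodule.span (ZMod 2) {A *ᵥ a, A *ᵥ a', B *ᵥ b'} := ⟨_, rfl⟩
  have m1 : A *ᵥ a ∈ S := hS ▸ Submodule.subset_span (by simp)
  have m2 : A *ᵥ a' ∈ S := hS ▸ Submodule.subset_span (by simp)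
  have m3 : B *ᵥ b' ∈ S := hS ▸ Submodule.subset_span (by simp)
  have hPlS : ∀ {s t w}, s ∈ S → t ∈ S → Pl s t w → w ∈ S := by
    rintro s t w hs ht (e | e | e | e) <;> rw [e]
    · exact S.zero_mem
    · exact hs
    · exact ht
    · exact S.add_mem hs ht
  rw [← hS]
  by_contra hz
  have hN0 : N ≠ 0 := by
    rintro rfl
    exact hz (by rw [Matrix.zero_mulVec]; exact S.zero_mem)
  -- the range of `N` would meet `S` in a single line, common to the ranges of `A`, `B` and `C`
  have huniq : ∀ s t, N *ᵥ s ∈ S → N *ᵥ t ∈ S → N *ᵥ s ≠ 0 → N *ᵥ t ≠ 0 → N *ᵥ t = N *ᵥ s := by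
    intro s t hs ht hs0 ht0
    have hI : Ind (N *ᵥ s) (N *ᵥ z) := by
      refine ⟨hs0, fun e => hz (e ▸ S.zero_mem), fun e => hz (e ▸ hs)⟩
    rcases Pl.of_rank (h.rk N hN) hI t with e | e | e | e
    · exact absurd e ht0
    · exact e
    · exact absurd (e ▸ ht) hz
    · rw [e] at ht
      exact absurd ((S.add_mem_iff_right hs).1 ht) hz
  obtain ⟨a₁, n₁, e₁, d₁⟩ := h.ranges_meet hc hA hN hA0 hN0
  obtain ⟨b₁, n₂, e₂, d₂⟩ := h.ranges_meet hc hB hN hB0 hN0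
  obtain ⟨c₁, n₃, e₃, d₃⟩ := h.ranges_meet hc hC hN hC0 hN0
  have q1 := pA a₁
  have q2 := pB b₁
  have q3 := pC c₁
  have s1 := hPlS m1 m2 q1
  have s2 := hPlS m1 m3 q2
  have s3 := hPlS m2 m3 q3
  rw [e₁] at q1 s1 d₁
  rw [e₂] at q2 s2 d₂
  rw [e₃] at q3 s3 d₃
  rw [huniq n₁ n₂ s1 s2 d₁ d₂] at q2
  rw [huniq n₁ n₃ s1 s3 d₁ d₃] at q3
  exact d₁ (three_planes iA hout q1 q2 q3)

theorem primitive_upper_rank_two_implies_three_by_three {n p : ℕ}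
    (V : Submodule (ZMod 2) (Matrix (Fin n) (Fin p) (ZMod 2)))
    (hprim : Primitive (ZMod 2) V) (hurk : urk V = 2) :
    n = 3 ∧ p = 3 := by
  have h : Good V := hprim.good hurk
  by_cases hE : ∃ E ∈ V, E ≠ 0 ∧ ∀ x y, ¬ Ind (E *ᵥ x) (E *ᵥ y)
  · obtain ⟨E, hE, hE0, hE1⟩ := hE
    exact h.finrank_of_rank_one hE hE0 hE1
  · have hc : ConstRank V := by
      intro M hM hM0
      refine le_antisymm (h.rk M hM) ?_
      push Not at hE
      obtain ⟨x, y, hI⟩ := hE M hM hM0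
      refine hI.finrank_span.ge.trans (Submodule.finrank_mono ?_)
      rw [Submodule.span_le]
      rintro _ (rfl | rfl)
      · exact ⟨x, rfl⟩
      · exact ⟨y, rfl⟩
    refine ⟨h.rows_eq_three hc, h.transpose.rows_eq_three ?_⟩
    rintro _ ⟨M, hM, rfl⟩ hM0
    have : M ≠ 0 := by
      rintro rfl
      exact hM0 (map_zero _)
    have e := hc M hM this
    rw [← Matrix.rank_transpose] at e
    exact e
end

section
/- Let V be a primitive linear subspace of the n×p matrices over F2 with upper rank 2. Then n = p = 3 and exactly one of the following four conditions holds: (i) V is equivalent to a linear subspace of J3(F2); (ii) V is equivalent to Mata3(F2); (iii) V is equivalent to U3(F2); (iv) V is equivalent to V3(F2). -/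
/-! Throughout, the field has two elements, so a line is a pair `{0, w}`, and a primitive space of upper
rank two enters through four properties (`MatCore`, or `Core` for abstract operator spaces): its
elements have rank at most two, no nonzero vector is annihilated by all of them, their images span
the target, and no hyperplane of the source is mapped by all of them into a common line. Call a
nonzero vector `x` *thin* if all values at `x` lie in some line `{0, w}`.

**Dimensions.** Both dimensions are at least three, as deleting one of at most two columns (or rows)
leaves matrices of rank at most one. If the source has dimension at least four and the target at
least three, there is no thin vector (`Core.not_hasThin`). For a three-dimensional target, double
counting the pairs `(m, x)` with `m x = 0` then yields more than `|U| - 7` nonzero vectors `x` of the source `U`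
whose values are annihilated by a nonzero functional (`card_lt_card_special`). A functional serves
at most one such `x` (`eq_of_functional`) and there are seven functionals, so `|U| < 14`
(`Core.base`). Larger targets are reduced to this case by passing to quotients by lines
(`Core.finrank_lt`), and transposition bounds the other dimension.

**A thin vector exists.** Modulo the line `{0, w}` and the thin vector `x`, one has `2 × 2`
matrices, which are singular whenever the value at `x` is `w`. The product of three nonzero
functionals over the field with two elements vanishes only if their sum does, and this allows one
to triangularize these matrices simultaneously (`triangularize`): the space is equivalent to a
subspace of `J3` (`MatCore.exists_le_J3`).

**No thin vector exists.** The relation that `f (M x) = 0` for all `M` is then a partial matching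
between nonzero functionals and nonzero vectors (`Tame`), and the double counting provides two
matched pairs. Using them as basis vectors gives two zero diagonal entries, and the third one can
be cleared (`Tame.exists_zero_diagonal`). For matrices `!![0, a, b; c, 0, d; e, f, 0]` the
determinant is `ade + bcf`; its identical vanishing leaves `Mata3`, `U3` and `V3`
(`zero_diagonal_generic`, `zero_diagonal_special`, `Tame.zero_diagonal`).

**Exclusivity.** Having a thin vector is invariant under equivalence; subspaces of `J3` have one
and the other three spaces have none. `V3` has sixteen elements, `Mata3` and `U3` have eight. Up to
a congruence, an equivalence from `U3` to `Mata3` would give an invertible matrix whose products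
with the elements of `U3` are all alternating, but only the zero matrix has this property.
-/

open Matrix

/-- `J3(F2)`: the space of upper-triangular `3 × 3` matrices over `F2` with trace zero. -/
def J3 : Submodule (ZMod 2) (Matrix (Fin 3) (Fin 3) (ZMod 2)) where
  carrier := {M | M.trace = 0 ∧ ∀ i j : Fin 3, j < i → M i j = 0}
  add_mem' := by
    rintro M N ⟨hM1, hM2⟩ ⟨hN1, hN2⟩
    refine ⟨by simp [Matrix.trace_add, hM1, hN1], ?_⟩
    intro i j h
    simp [Matrix.add_apply, hM2 i j h, hN2 i j h]
  zero_mem' := by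
    refine ⟨by simp, ?_⟩
    intro i j h
    simp
  smul_mem' := by
    rintro c M ⟨hM1, hM2⟩
    refine ⟨by simp [Matrix.trace_smul, hM1], ?_⟩
    intro i j h
    simp [Matrix.smul_apply, hM2 i j h]

/-- `Mata3(F2)`: the space of alternating (skew-symmetric with zero diagonal) `3 × 3`
matrices over `F2`. -/
def Mata3 : Submodule (ZMod 2) (Matrix (Fin 3) (Fin 3) (ZMod 2)) where
  carrier := {M | Mᵀ = -M ∧ ∀ i : Fin 3, M i i = 0}
  add_mem' := by
    rintro M N ⟨hM1, hM2⟩ ⟨hN1, hN2⟩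
    refine ⟨by rw [Matrix.transpose_add, hM1, hN1]; abel, fun i => by
      simp [Matrix.add_apply, hM2 i, hN2 i]⟩
  zero_mem' := ⟨by simp, fun i => rfl⟩
  smul_mem' := by
    rintro c M ⟨hM1, hM2⟩
    exact ⟨by rw [Matrix.transpose_smul, hM1, smul_neg], fun i => by
      simp [Matrix.smul_apply, hM2 i]⟩

/-- `U3(F2)`: the matrices `!![0, a, a+c; a, 0, b; a+b, c, 0]` with `a, b, c ∈ F2`. -/
def U3 : Submodule (ZMod 2) (Matrix (Fin 3) (Fin 3) (ZMod 2)) where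
  carrier := {M | ∃ a b c : ZMod 2, M = !![0, a, a + c; a, 0, b; a + b, c, 0]}
  add_mem' := by
    rintro M N ⟨a, b, c, rfl⟩ ⟨a', b', c', rfl⟩
    exact ⟨a + a', b + b', c + c', by revert a b c a' b' c'; decide⟩
  zero_mem' := ⟨0, 0, 0, by decide⟩
  smul_mem' := by
    rintro k M ⟨a, b, c, rfl⟩
    exact ⟨k * a, k * b, k * c, by revert k a b c; decide⟩

/-- `V3(F2)`: the `3 × 3` matrices over `F2` with zero diagonal satisfying
`M 0 1 + M 1 2 + M 2 0 = 0` and `M 2 1 + M 1 0 + M 0 2 = 0`. -/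
def V3 : Submodule (ZMod 2) (Matrix (Fin 3) (Fin 3) (ZMod 2)) where
  carrier := {M | (∀ i : Fin 3, M i i = 0) ∧
    M 0 1 + M 1 2 + M 2 0 = 0 ∧ M 2 1 + M 1 0 + M 0 2 = 0}
  add_mem' := by
    rintro M N ⟨hM1, hM2, hM3⟩ ⟨hN1, hN2, hN3⟩
    refine ⟨fun i => by simp [Matrix.add_apply, hM1 i, hN1 i], ?_, ?_⟩
    · simp only [Matrix.add_apply]
      linear_combination hM2 + hN2
    · simp only [Matrix.add_apply]
      linear_combination hM3 + hN3
  zero_mem' := by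
    refine ⟨fun i => rfl, ?_, ?_⟩ <;> simp
  smul_mem' := by
    rintro c M ⟨hM1, hM2, hM3⟩
    refine ⟨fun i => by simp [Matrix.smul_apply, hM1 i], ?_, ?_⟩
    · simp only [Matrix.smul_apply, smul_eq_mul]
      linear_combination c * hM2
    · simp only [Matrix.smul_apply, smul_eq_mul]
      linear_combination c * hM3

/-- Transport of a subspace of `n × p` matrices to a subspace of `3 × 3` matrices along
equalities `n = 3` and `p = 3`. -/
def reindexSub {n p : ℕ} (hn : n = 3) (hp : p = 3)
    (V : Submodule (ZMod 2) (Matrix (Fin n) (Fin p) (ZMod 2))) :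
    Submodule (ZMod 2) (Matrix (Fin 3) (Fin 3) (ZMod 2)) :=
  V.map (Matrix.reindexLinearEquiv (ZMod 2) (ZMod 2) (finCongr hn) (finCongr hp)).toLinearMap

/-- Exactly one of four conditions holds. -/
def ExactlyOne4 (c₁ c₂ c₃ c₄ : Prop) : Prop :=
  (c₁ ∧ ¬c₂ ∧ ¬c₃ ∧ ¬c₄) ∨ (¬c₁ ∧ c₂ ∧ ¬c₃ ∧ ¬c₄) ∨
  (¬c₁ ∧ ¬c₂ ∧ c₃ ∧ ¬c₄) ∨ (¬c₁ ∧ ¬c₂ ∧ ¬c₃ ∧ c₄)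

namespace UpperRankTwo

/-! ### Linear functionals over the field with two elements -/

section Functionals

variable {X : Type*} [AddCommGroup X] [Module (ZMod 2) X]

theorem zmod2_cases (a : ZMod 2) : a = 0 ∨ a = 1 := by
  revert a; decide

theorem functional_ne_zero {u : X →ₗ[ZMod 2] ZMod 2} (hu : u ≠ 0) : ∃ x, u x = 1 := by
  by_contra! h
  exact hu (LinearMap.ext fun x => (zmod2_cases (u x)).resolve_right (h x))

theorem functional_mul_eq_zero {u v : X →ₗ[ZMod 2] ZMod 2} (h : ∀ x, u x * v x = 0) :
    u = 0 ∨ v = 0 := by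
  by_contra! hc
  obtain ⟨x, hx⟩ := functional_ne_zero hc.1
  obtain ⟨y, hy⟩ := functional_ne_zero hc.2
  have h1 := h x
  have h2 := h y
  have h3 := h (x + y)
  simp only [map_add, hx, hy] at h1 h2 h3
  revert h1 h2 h3
  generalize u y = a
  generalize v x = b
  revert a b
  decide

theorem functional_sep {u v : X →ₗ[ZMod 2] ZMod 2} (hu : u ≠ 0) (huv : u + v ≠ 0) :
    ∃ x, u x = 1 ∧ v x = 0 := by
  by_contra! hn
  rcases functional_mul_eq_zero (u := u) (v := u + v) (fun x => by
    have := hn x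
    rw [LinearMap.add_apply]
    rcases zmod2_cases (u x) with h1 | h1
    · rw [h1, zero_mul]
    · rw [h1, (zmod2_cases _).resolve_left (this h1)]
      decide) with h | h
  exacts [hu h, huv h]

theorem functional_mem_span {a b c f : X →ₗ[ZMod 2] ZMod 2}
    (h : ∀ x, a x = 0 → b x = 0 → c x = 0 → f x = 0) :
    ∃ α β γ : ZMod 2, ∀ x, f x = α * a x + β * b x + γ * c x := by
  have hs : f ∈ Submodule.span (ZMod 2) (Set.range ![a, b, c]) := by
    apply mem_span_of_iInf_ker_le_ker
    intro x hx
    simp only [Submodule.mem_iInf, LinearMap.mem_ker] at hx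
    exact h x (hx 0) (hx 1) (hx 2)
  obtain ⟨k, hk⟩ := (Submodule.mem_span_range_iff_exists_fun (ZMod 2)).1 hs
  refine ⟨k 0, k 1, k 2, fun x => ?_⟩
  rw [← hk]
  simp [Fin.sum_univ_three]

/-- Three nonzero functionals over `F2` whose product vanishes add up to zero: they are the
three nonzero elements of a plane in the dual. -/
theorem functional_mul_mul_eq_zero {a b c : X →ₗ[ZMod 2] ZMod 2} (ha : a ≠ 0) (hb : b ≠ 0)
    (hc : c ≠ 0) (h : ∀ x, a x * b x * c x = 0) : ∀ x, a x + b x + c x = 0 := by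
  have hab : ∃ x, a x = 1 ∧ b x = 1 := by
    by_contra! hn
    rcases functional_mul_eq_zero (u := a) (v := b) (fun x => by
      have := hn x
      rcases zmod2_cases (a x) with h1 | h1 <;> rcases zmod2_cases (b x) with h2 | h2 <;>
        simp_all) with h0 | h0
    · exact ha h0
    · exact hb h0
  obtain ⟨x, hax, hbx⟩ := hab
  have hcx : c x = 0 := by simpa [hax, hbx] using h x
  obtain ⟨α, β, γ, hs⟩ := functional_mem_span (a := a) (b := b) (c := 0) (f := c) (fun y hy1 hy2 _ => by
    simpa [hax, hbx, hcx, hy1, hy2] using h (x + y))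
  have hx := hs x
  simp only [hax, hbx, hcx, LinearMap.zero_apply] at hx
  have hne : ¬ (α = 0 ∧ β = 0) := by
    rintro ⟨rfl, rfl⟩
    exact hc (LinearMap.ext fun y => by simp [hs y])
  intro y
  rw [hs y, LinearMap.zero_apply]
  revert hx hne
  clear hs
  generalize a y = p
  generalize b y = q
  revert α β γ p q
  decide

/-- If the product of two nonzero functionals over `F2` is additive, they are equal. -/
theorem functional_mul_linear {p s l : X →ₗ[ZMod 2] ZMod 2} (hp : p ≠ 0) (hs : s ≠ 0)
    (h : ∀ x, l x = p x * s x) : ∀ x, p x = s x := by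
  by_contra! hc
  obtain ⟨x, hx⟩ := hc
  obtain ⟨y, hy⟩ := functional_ne_zero hp
  obtain ⟨z, hz⟩ := functional_ne_zero hs
  have h1 := h x
  have h2 := h y
  have h3 := h z
  have h4 := h (x + y)
  have h5 := h (x + z)
  rw [map_add, map_add, map_add, h1, h2] at h4
  rw [map_add, map_add, map_add, h1, h3] at h5
  rw [hy] at h4
  rw [hz] at h5
  revert hx h4 h5
  generalize p x = a
  generalize s x = b
  generalize p z = c
  generalize s y = d
  revert a b c d
  decide

/-- A functional over `F2` of the shape `q r + p s`, with nonzero functionals `p, q, r, s`, is a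
combination `α r + β s + γ p + δ q` with `α δ + β γ = 0`. -/
theorem functional_quadratic {p q r s t : X →ₗ[ZMod 2] ZMod 2} (hp : p ≠ 0) (hq : q ≠ 0)
    (hr : r ≠ 0) (hs : s ≠ 0) (h : ∀ x, t x = q x * r x + p x * s x) :
    ∃ α β γ δ : ZMod 2, α * δ + β * γ = 0 ∧
      ∀ x, t x = α * r x + β * s x + γ * p x + δ * q x := by
  have cancel : ∀ a b c : ZMod 2, a = b + c → b = c + a := by decide
  have eqr : (∀ x, q x = r x) → ∀ x, p x = s x := fun hqr =>
    functional_mul_linear (l := t + q) hp hs (fun x => by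
      rw [LinearMap.add_apply, h x, ← hqr x]
      generalize q x = a
      generalize p x = b
      generalize s x = c
      revert a b c
      decide)
  have eps : (∀ x, p x = s x) → ∀ x, q x = r x := fun hps =>
    functional_mul_linear (l := t + p) hq hr (fun x => by
      rw [LinearMap.add_apply, h x, ← hps x]
      generalize q x = a
      generalize p x = b
      generalize r x = c
      revert a b c
      decide)
  by_cases hqr : ∀ x, q x = r x
  · refine ⟨1, 0, 1, 0, by decide, fun x => ?_⟩
    rw [h x, ← hqr x, ← eqr hqr x]
    generalize q x = a
    generalize p x = b
    revert a b
    decide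
  · have hps : ¬ ∀ x, p x = s x := fun hall => hqr (eps hall)
    -- The common kernel of `q` and `r` lies in the radical of the polar form of `p s`, on which
    -- `p = s = 0`.
    have key : ∀ v, q v = 0 → r v = 0 → p v = 0 ∧ s v = 0 := by
      intro v hqv hrv
      have pol : ∀ w, p v * s w + p w * s v = 0 := by
        intro w
        have h1 := h v
        have h2 := h w
        have h3 := h (v + w)
        simp only [map_add, hqv, hrv, h1, h2] at h3
        revert h3
        generalize p v = a1
        generalize p w = a2
        generalize s v = a3
        generalize s w = a4
        generalize q w = a5
        generalize r w = a6
        revert a1 a2 a3 a4 a5 a6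
        decide
      obtain ⟨x, hx⟩ := functional_ne_zero hp
      obtain ⟨y, hy⟩ := functional_ne_zero hs
      push Not at hps
      obtain ⟨z, hz⟩ := hps
      have h1 := pol x
      have h2 := pol y
      have h3 := pol z
      rw [hx] at h1
      rw [hy] at h2
      revert h1 h2 h3 hz
      generalize p v = a1
      generalize s v = a2
      generalize p y = a3
      generalize s x = a4
      generalize p z = a5
      generalize s z = a6
      revert a1 a2 a3 a4 a5 a6
      decide
    obtain ⟨α, β, γ, hP⟩ := functional_mem_span (a := q) (b := r) (c := 0) (f := p)
      (fun x h1 h2 _ => (key x h1 h2).1)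
    obtain ⟨α', β', γ', hS⟩ := functional_mem_span (a := q) (b := r) (c := 0) (f := s)
      (fun x h1 h2 _ => (key x h1 h2).2)
    simp only [LinearMap.zero_apply, mul_zero, add_zero] at hP hS
    have n1 : ¬ (α = 0 ∧ β = 0) := by
      rintro ⟨rfl, rfl⟩
      exact hp (LinearMap.ext fun y => by simp [hP y])
    have n2 : ¬ (α' = 0 ∧ β' = 0) := by
      rintro ⟨rfl, rfl⟩
      exact hs (LinearMap.ext fun y => by simp [hS y])
    have n3 : ¬ (α = α' ∧ β = β') := by
      rintro ⟨rfl, rfl⟩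
      exact hps fun y => by rw [hP y, hS y]
    have fin : ∀ α β α' β' : ZMod 2, ¬ (α = 0 ∧ β = 0) → ¬ (α' = 0 ∧ β' = 0) →
        ¬ (α = α' ∧ β = β') → ∃ l m : ZMod 2, l * m = 0 ∧ ∀ u v : ZMod 2,
          u * v + (α * u + β * v) * (α' * u + β' * v) = l * v + m * u := by decide
    obtain ⟨l, m, hlm, hlm'⟩ := fin α β α' β' n1 n2 n3
    refine ⟨l, 0, 0, m, by simp [hlm], fun x => ?_⟩
    rw [h x, hP x, hS x, hlm']
    ring

end Functionals

/-! ### Operators of small rank -/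

section Operators

variable {X U W : Type*} [AddCommGroup X] [Module (ZMod 2) X] [AddCommGroup U] [Module (ZMod 2) U]
  [AddCommGroup W] [Module (ZMod 2) W]

/-- A linear map over `F2` has rank at most one: any two of its values are dependent. -/
def RankLeOne (F : U →ₗ[ZMod 2] W) : Prop :=
  ∀ u v, F u = 0 ∨ F v = 0 ∨ F u = F v

theorem add_eq_zero_iff_eq_two (a b : W) : a + b = 0 ↔ a = b := by
  rw [add_eq_zero_iff_eq_neg, ZModModule.neg_eq_self]

theorem indep_pair {s t : W} (hs : s ≠ 0) (ht : t ≠ 0) (hst : s ≠ t) {p q : ZMod 2}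
    (h : p • s + q • t = 0) : p = 0 ∧ q = 0 := by
  rcases zmod2_cases p with rfl | rfl <;> rcases zmod2_cases q with rfl | rfl <;>
    simp_all [add_eq_zero_iff_eq_two]

theorem coord_pair {s t : W} (hs : s ≠ 0) (ht : t ≠ 0) (hst : s ≠ t) {p q p' q' : ZMod 2}
    (h : p • s + q • t = p' • s + q' • t) : p = p' ∧ q = q' := by
  have h2 : (p - p') • s + (q - q') • t = 0 := by
    rw [sub_smul, sub_smul, sub_add_sub_comm, h, sub_self]
  obtain ⟨h3, h4⟩ := indep_pair hs ht hst h2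
  exact ⟨sub_eq_zero.1 h3, sub_eq_zero.1 h4⟩

theorem exists_dual_pair {s t : W} (hs : s ≠ 0) (hst : s ≠ t) :
    ∃ g : W →ₗ[ZMod 2] ZMod 2, g s = 1 ∧ g t = 0 := by
  have hn : s ∉ Submodule.span (ZMod 2) {t} := by
    rw [Submodule.mem_span_singleton]
    rintro ⟨a, rfl⟩
    rcases zmod2_cases a with rfl | rfl <;> simp_all
  obtain ⟨g, hg, hg'⟩ := Submodule.exists_le_ker_of_notMem hn
  exact ⟨g, (zmod2_cases _).resolve_left hg,
    hg' (Submodule.mem_span_singleton_self t)⟩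

theorem exists_dual_one {s : W} (hs : s ≠ 0) : ∃ g : W →ₗ[ZMod 2] ZMod 2, g s = 1 := by
  have hn : s ∉ (⊥ : Submodule (ZMod 2) W) := by simpa using hs
  obtain ⟨g, hg, -⟩ := Submodule.exists_le_ker_of_notMem hn
  exact ⟨g, (zmod2_cases _).resolve_left hg⟩

/-- If both `M` and `M + 1` are singular `2 × 2` matrices over `F2`, then `M` has determinant zero
and trace one. Here `(m, n)` are the columns of `M`, and `(s, t)` plays the part of the unit
matrix. -/
theorem singular_pair {s t m n : W} (hs : s ≠ 0) (ht : t ≠ 0) (hst : s ≠ t)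
    (h1 : m = 0 ∨ n = 0 ∨ m = n) (h2 : m + s = 0 ∨ n + t = 0 ∨ m + s = n + t) :
    ∃ p q r k : ZMod 2, m = p • s + q • t ∧ n = r • s + k • t ∧ p * k + q * r = 0 ∧
      p + k = 1 := by
  simp only [add_eq_zero_iff_eq_two] at h2
  rcases h1 with rfl | rfl | rfl
  · rcases h2 with rfl | rfl | h2
    · exact absurd rfl hs
    · exact ⟨0, 0, 0, 1, by simp, by simp, by decide, by decide⟩
    · refine ⟨0, 0, 1, 1, by simp, ?_, by decide, by decide⟩
      rw [zero_add] at h2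
      rw [h2, one_smul, one_smul, add_assoc, ZModModule.add_self, add_zero]
  · rcases h2 with rfl | rfl | h2
    · exact ⟨1, 0, 0, 0, by simp, by simp, by decide, by decide⟩
    · exact absurd rfl ht
    · refine ⟨1, 1, 0, 0, ?_, by simp, by decide, by decide⟩
      rw [zero_add] at h2
      rw [← h2, one_smul, one_smul, add_comm m s, ← add_assoc, ZModModule.add_self, zero_add]
  · rcases h2 with rfl | rfl | h2
    · exact ⟨1, 0, 1, 0, by simp, by simp, by decide, by decide⟩
    · exact ⟨0, 1, 0, 1, by simp, by simp, by decide, by decide⟩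
    · exact absurd (add_left_cancel h2) hst

/-- Simultaneous triangularization of `2 × 2` matrices over `F2`. The pair `(e₁ m, e₂ m)` is read as
the pair of columns of a matrix, and the matrices with `a m = 1` are assumed singular. If the space
contains a nonsingular matrix `(s, t)`, which serves as the unit matrix, then some change of basis
makes all the matrices upper triangular with trace `a m`. -/
theorem triangularize (e₁ e₂ : X →ₗ[ZMod 2] W) (a : X →ₗ[ZMod 2] ZMod 2)
    (hR : ∀ m, a m = 1 → e₁ m = 0 ∨ e₂ m = 0 ∨ e₁ m = e₂ m) {N M : X} (haM : a M = 1)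
    (hs : e₁ N ≠ 0) (ht : e₂ N ≠ 0) (hst : e₁ N ≠ e₂ N) :
    ∃ α β γ δ : ZMod 2, α * δ + β * γ = 1 ∧ ∀ m, ∃ p q r : ZMod 2,
      α • e₁ m + β • e₂ m = p • (α • e₁ N + β • e₂ N) ∧
      γ • e₁ m + δ • e₂ m = r • (α • e₁ N + β • e₂ N) + q • (γ • e₁ N + δ • e₂ N) ∧
      a m + p + q = 0 := by
  set s := e₁ N with hsN
  set t := e₂ N with htN
  have haN : a N = 0 := by
    rcases zmod2_cases (a N) with h | h
    · exact h
    · rcases hR N h with h' | h' | h'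
      · exact absurd h' hs
      · exact absurd h' ht
      · exact absurd h' hst
  obtain ⟨g, hgs, hgt⟩ := exists_dual_pair hs hst
  obtain ⟨g', hgt', hgs'⟩ := exists_dual_pair ht hst.symm
  have hsix : ∀ m, a m = 1 → ∃ p q r k : ZMod 2, e₁ m = p • s + q • t ∧ e₂ m = r • s + k • t ∧
      p * k + q * r = 0 ∧ p + k = 1 := by
    intro m hm
    refine singular_pair hs ht hst (hR m hm) ?_
    have := hR (m + N) (by rw [map_add, hm, haN, add_zero])
    simpa only [map_add] using this
  let P := g ∘ₗ e₁
  let Q := g' ∘ₗ e₁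
  let R := g ∘ₗ e₂
  let S := g' ∘ₗ e₂
  have h1 : ∀ m, a m = 1 → e₁ m = P m • s + Q m • t ∧ e₂ m = R m • s + S m • t ∧
      Q m * R m = 0 ∧ P m + S m = 1 := by
    intro m hm
    obtain ⟨p, q, r, k, hp, hr, hd, htr⟩ := hsix m hm
    have e1 : P m = p := by simp [P, hp, hgs, hgt]
    have e2 : Q m = q := by simp [Q, hp, hgs', hgt']
    have e3 : R m = r := by simp [R, hr, hgs, hgt]
    have e4 : S m = k := by simp [S, hr, hgs', hgt']
    rw [e1, e2, e3, e4]
    refine ⟨hp, hr, ?_, htr⟩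
    clear hp hr e1 e2 e3 e4
    revert p q r k
    decide
  have h2 : ∀ m, e₁ m = P m • s + Q m • t ∧ e₂ m = R m • s + S m • t ∧
      P m + S m = a m := by
    intro m
    rcases zmod2_cases (a m) with hm | hm
    · obtain ⟨A1, A2, -, A3⟩ := h1 (m + M) (by rw [map_add, hm, haM, zero_add])
      obtain ⟨B1, B2, -, B3⟩ := h1 M haM
      rw [map_add] at A1 A2 A3
      rw [hm]
      refine ⟨?_, ?_, ?_⟩
      · apply add_right_cancel (b := e₁ M)
        rw [A1]
        conv_rhs => rw [B1]
        simp only [map_add, add_smul]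
        abel
      · apply add_right_cancel (b := e₂ M)
        rw [A2]
        conv_rhs => rw [B2]
        simp only [map_add, add_smul]
        abel
      · rw [map_add] at A3
        linear_combination A3 - B3
    · obtain ⟨A1, A2, -, A3⟩ := h1 m hm
      exact ⟨A1, A2, by rw [A3, hm]⟩
  -- On trace-one matrices the determinant is `Q R`, so `(P + S) Q R` vanishes identically.
  have hprod : ∀ m, a m * Q m * R m = 0 := by
    intro m
    rcases zmod2_cases (a m) with hm | hm
    · simp [hm]
    · rw [hm, one_mul]
      exact (h1 m hm).2.2.1
  have ha0 : a ≠ 0 := by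
    rintro rfl
    simp at haM
  have two : ∀ k : ZMod 2, k + k = 0 := by decide
  by_cases hQ : Q = 0
  · refine ⟨1, 0, 0, 1, by decide, fun m => ⟨P m, S m, R m, ?_, ?_, ?_⟩⟩
    · rw [(h2 m).1, hQ]
      simp
    · rw [(h2 m).2.1]
      simp
    · rw [← (h2 m).2.2, add_assoc, two]
  by_cases hRz : R = 0
  · refine ⟨0, 1, 1, 0, by decide, fun m => ⟨S m, P m, Q m, ?_, ?_, ?_⟩⟩
    · rw [(h2 m).2.1, hRz]
      simp
    · rw [(h2 m).1]
      simp [add_comm]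
    · rw [← (h2 m).2.2, add_assoc, add_comm (S m), two]
  · have hz := functional_mul_mul_eq_zero ha0 hQ hRz hprod
    refine ⟨1, 1, 0, 1, by decide, fun m => ⟨P m + R m, S m + R m, R m, ?_, ?_, ?_⟩⟩
    · have hz1 := hz m
      rw [← (h2 m).2.2] at hz1
      have hz2 : Q m + S m = P m + R m := by
        revert hz1
        generalize P m = x1
        generalize Q m = x2
        generalize R m = x3
        generalize S m = x4
        revert x1 x2 x3 x4
        decide
      rw [(h2 m).1, (h2 m).2.1]
      simp only [one_smul, smul_add]
      rw [← hz2]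
      conv_rhs => rw [hz2]
      simp only [add_smul]
      rw [show R m • s + S m • t = S m • t + R m • s by abel]
      calc _ = (P m • s + R m • s) + (Q m + S m) • t := by rw [add_smul]; abel
        _ = _ := by rw [hz2, add_smul]
    · rw [(h2 m).2.1]
      simp only [zero_smul, one_smul, zero_add, smul_add, add_smul]
      rw [show R m • s + R m • t + (S m • t + R m • t)
        = R m • s + S m • t + (R m • t + R m • t) by abel, ZModModule.add_self, add_zero]
    · rw [← (h2 m).2.2]
      generalize P m = x1
      generalize R m = x3
      generalize S m = x4
      revert x1 x3 x4
      decide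

theorem RankLeOne.ker_le {F F' : U →ₗ[ZMod 2] W} (hF' : RankLeOne F')
    (hs : RankLeOne (F + F')) {u u' : U} (hu : F u ≠ 0) (hu' : F' u' ≠ 0) (hne : F u ≠ F' u')
    (z : U) (hz : F z = 0) : F' z = 0 := by
  by_contra hz'
  have h1 : F' z = F' u' := by
    rcases hF' z u' with h | h | h
    · exact absurd h hz'
    · exact absurd h hu'
    · exact h
  have h2 : F' u = 0 ∨ F' u = F' u' := by
    rcases hF' u u' with h | h | h
    · exact Or.inl h
    · exact absurd h hu'
    · exact Or.inr h
  have h3 := hs z u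
  simp only [LinearMap.add_apply, hz, h1, zero_add] at h3
  rcases h2 with h2 | h2 <;> rw [h2] at h3 <;>
    simp_all [add_eq_zero_iff_eq_two]

/-- A linear space of maps of rank at most one over `F2` has a common line containing all images, or
a common hyperplane contained in all kernels. -/
theorem rankOne_space (e : X →ₗ[ZMod 2] U →ₗ[ZMod 2] W) (h : ∀ m, RankLeOne (e m)) :
    (∃ c, ∀ m u, e m u = 0 ∨ e m u = c) ∨
      ∃ φ : U →ₗ[ZMod 2] ZMod 2, ∀ m u, φ u = 0 → e m u = 0 := by
  by_cases h0 : ∀ m u, e m u = 0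
  · exact Or.inl ⟨0, fun m u => Or.inl (h0 m u)⟩
  push Not at h0
  obtain ⟨m₀, u₀, h₀⟩ := h0
  by_cases h1 : ∀ m u, e m u = 0 ∨ e m u = e m₀ u₀
  · exact Or.inl ⟨_, h1⟩
  push Not at h1
  obtain ⟨m₁, u₁, h₁, h₁'⟩ := h1
  obtain ⟨g, hg⟩ := exists_dual_one h₀
  refine Or.inr ⟨g ∘ₗ e m₀, fun m u hu => ?_⟩
  have hz : e m₀ u = 0 := by
    rcases h m₀ u u₀ with h | h | h
    · exact h
    · exact absurd h h₀
    · rw [LinearMap.comp_apply, h, hg] at hu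
      exact absurd hu (by decide)
  have hsum : ∀ m m', RankLeOne (e m + e m') := fun m m' => by rw [← map_add]; exact h _
  have hz1 : e m₁ u = 0 := (h m₁).ker_le (hsum m₀ m₁) h₀ h₁ (Ne.symm h₁') u hz
  by_contra hmu
  by_cases hc : e m u = e m₀ u₀
  · exact hmu ((h m).ker_le (hsum m₁ m) h₁ hmu (by rw [hc]; exact h₁') u hz1)
  · exact hmu ((h m).ker_le (hsum m₀ m) h₀ hmu (Ne.symm hc) u hz)

/-- All operators of the space have rank at most two. -/
def RankLeTwo (e : X →ₗ[ZMod 2] U →ₗ[ZMod 2] W) : Prop :=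
  ∀ m, Module.finrank (ZMod 2) (LinearMap.range (e m)) ≤ 2

/-- Modulo a nonzero value `e m x`, an operator of rank at most two has rank at most one: any two
of its values are dependent modulo `e m x`. -/
theorem RankLeTwo.dep [FiniteDimensional (ZMod 2) W] {e : X →ₗ[ZMod 2] U →ₗ[ZMod 2] W}
    (h : RankLeTwo e) (m : X) (x u v : U) (hx : e m x ≠ 0) :
    ∃ α β γ : ZMod 2, (β ≠ 0 ∨ γ ≠ 0) ∧ β • e m u + γ • e m v = α • e m x := by
  have hdep : ¬ LinearIndependent (ZMod 2) ![(⟨e m x, x, rfl⟩ : LinearMap.range (e m)),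
      ⟨e m u, u, rfl⟩, ⟨e m v, v, rfl⟩] := by
    intro hi
    have h1 := hi.fintype_card_le_finrank
    have h2 := h m
    simp at h1
    omega
  rw [Fintype.not_linearIndependent_iff] at hdep
  obtain ⟨g, hg, i, hi⟩ := hdep
  rw [Fin.sum_univ_three] at hg
  have hg' := congrArg Subtype.val hg
  simp only [Matrix.cons_val_zero, Matrix.cons_val_one, Matrix.cons_val_two, Matrix.head_cons,
    Matrix.tail_cons, Submodule.coe_add, Submodule.coe_smul, ZeroMemClass.coe_zero] at hg'
  refine ⟨g 0, g 1, g 2, ?_, ?_⟩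
  · by_contra! hc
    rw [hc.1, hc.2] at hg'
    simp only [zero_smul, add_zero] at hg'
    rcases smul_eq_zero.1 hg' with h0 | h0
    · fin_cases i <;> simp_all
    · exact hx h0
  · rw [← add_eq_zero_iff_eq_two, ← hg']
    abel

end Operators

/-! ### Thin vectors -/

section Operators

variable {X U W : Type*} [AddCommGroup X] [Module (ZMod 2) X] [AddCommGroup U] [Module (ZMod 2) U]
  [AddCommGroup W] [Module (ZMod 2) W]

/-- A vector `x ≠ 0` is *thin* for an operator space if the values at `x` lie on a line, i.e. in
some `{0, w}`. -/
def HasThin (e : X →ₗ[ZMod 2] U →ₗ[ZMod 2] W) : Prop :=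
  ∃ x, x ≠ 0 ∧ ∃ w, ∀ m, e m x = 0 ∨ e m x = w

/-- If some functional on the target annihilates the values at two distinct nonzero vectors, but not
all values, then the space has a thin vector. -/
theorem hasThin_of_functional [FiniteDimensional (ZMod 2) W]
    {e : X →ₗ[ZMod 2] U →ₗ[ZMod 2] W} (hrk : RankLeTwo e) (f : W →ₗ[ZMod 2] ZMod 2) {x y : U}
    (hx : x ≠ 0) (hy : y ≠ 0) (hxy : x ≠ y) (hfx : ∀ m, f (e m x) = 0) (hfy : ∀ m, f (e m y) = 0)
    {M : X} {h : U} (hM : f (e M h) ≠ 0) : HasThin e := by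
  have hR : ∀ m, f (e m h) = 1 → e m x = 0 ∨ e m y = 0 ∨ e m x = e m y := by
    intro m hm
    have hne : e m h ≠ 0 := by
      intro h0
      rw [h0, map_zero] at hm
      exact absurd hm (by decide)
    obtain ⟨α, β, γ, hβγ, hd⟩ := hrk.dep m h x y hne
    have hα : α = 0 := by
      have := congrArg f hd
      simpa [hfx, hfy, hm] using this.symm
    rw [hα, zero_smul] at hd
    rcases zmod2_cases β with rfl | rfl <;> rcases zmod2_cases γ with rfl | rfl <;>
      simp_all [add_eq_zero_iff_eq_two]
  by_cases hN : ∃ N, e N x ≠ 0 ∧ e N y ≠ 0 ∧ e N x ≠ e N y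
  · obtain ⟨N, h1, h2, h3⟩ := hN
    obtain ⟨α, β, γ, δ, hdet, ht⟩ := triangularize (e.flip x) (e.flip y) (f ∘ₗ e.flip h)
      (fun m hm => hR m hm) (N := N) (M := M) ((zmod2_cases _).resolve_left hM) h1 h2 h3
    refine ⟨α • x + β • y, ?_, α • e N x + β • e N y, fun m => ?_⟩
    · intro h0
      obtain ⟨rfl, rfl⟩ := indep_pair hx hy hxy h0
      revert hdet
      simp
    · obtain ⟨p, q, r, hp, -, -⟩ := ht m
      simp only [LinearMap.flip_apply] at hp
      rw [map_add, map_smul, map_smul, hp]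
      rcases zmod2_cases p with rfl | rfl
      · left
        simp
      · right
        simp
  · push Not at hN
    let e' : X →ₗ[ZMod 2] (ZMod 2 × ZMod 2) →ₗ[ZMod 2] W :=
      LinearMap.mk₂ (ZMod 2) (fun m k => e m (k.1 • x + k.2 • y))
        (fun m m' k => by simp) (fun c m k => by simp)
        (fun m k k' => by simp [add_smul]; abel) (fun c m k => by simp [mul_smul])
    have he' : ∀ m, RankLeOne (e' m) := by
      rintro m ⟨a, b⟩ ⟨c, d⟩
      have := hN m
      simp only [e', LinearMap.mk₂_apply, map_add, map_smul]
      by_cases h1 : e m x = 0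
      · rw [h1]
        rcases zmod2_cases b with rfl | rfl <;> rcases zmod2_cases d with rfl | rfl <;> simp
      by_cases h2 : e m y = 0
      · rw [h2]
        rcases zmod2_cases a with rfl | rfl <;> rcases zmod2_cases c with rfl | rfl <;> simp
      have h3 := hN m h1 h2
      rw [← h3, ← add_smul, ← add_smul]
      rcases zmod2_cases (a + b) with h | h <;> rcases zmod2_cases (c + d) with h' | h' <;>
        simp [h, h']
    rcases rankOne_space e' he' with ⟨c, hc⟩ | ⟨φ, hφ⟩
    · refine ⟨x, hx, c, fun m => ?_⟩
      simpa [e'] using hc m (1, 0)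
    · have hk : ∃ k : ZMod 2 × ZMod 2, k ≠ 0 ∧ φ k = 0 := by
        by_contra! hc
        have h1 := (zmod2_cases _).resolve_left (hc (1, 0) (by decide))
        have h2 := (zmod2_cases _).resolve_left (hc (0, 1) (by decide))
        have h3 := hc ((1, 0) + (0, 1)) (by decide)
        rw [map_add, h1, h2] at h3
        exact h3 (by decide)
      obtain ⟨k, hk0, hk⟩ := hk
      refine ⟨k.1 • x + k.2 • y, fun h0 => hk0 ?_, 0, fun m => Or.inl ?_⟩
      · obtain ⟨h1, h2⟩ := indep_pair hx hy hxy h0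
        exact Prod.ext h1 h2
      · exact hφ m k hk

/-- The operator space is *core-like*: ranks at most two, no common kernel vector, the images span
the target, and no hyperplane is mapped into a line. -/
structure Core (e : X →ₗ[ZMod 2] U →ₗ[ZMod 2] W) : Prop where
  rank : RankLeTwo e
  inj : ∀ x, (∀ m, e m x = 0) → x = 0
  span : ∀ f : W →ₗ[ZMod 2] ZMod 2, (∀ m x, f (e m x) = 0) → f = 0
  noncomp : ¬ ∃ (φ : U →ₗ[ZMod 2] ZMod 2) (w : W), ∀ m x, φ x = 0 → e m x = 0 ∨ e m x = w

/-- The operator space composed with the projection modulo `w`. -/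
def modVec (e : X →ₗ[ZMod 2] U →ₗ[ZMod 2] W) (w : W) :
    X →ₗ[ZMod 2] U →ₗ[ZMod 2] (W ⧸ Submodule.span (ZMod 2) {w}) :=
  e.compr₂ (Submodule.mkQ _)

theorem mkQ_eq_zero_iff {w v : W} :
    (Submodule.span (ZMod 2) {w}).mkQ v = 0 ↔ v = 0 ∨ v = w := by
  rw [Submodule.mkQ_apply, Submodule.Quotient.mk_eq_zero, Submodule.mem_span_singleton]
  constructor
  · rintro ⟨a, rfl⟩
    rcases zmod2_cases a with rfl | rfl <;> simp
  · rintro (rfl | rfl)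
    · exact ⟨0, by simp⟩
    · exact ⟨1, by simp⟩

theorem modVec_eq_zero_iff {e : X →ₗ[ZMod 2] U →ₗ[ZMod 2] W} {w : W} {m : X} {x : U} :
    modVec e w m x = 0 ↔ e m x = 0 ∨ e m x = w :=
  mkQ_eq_zero_iff

theorem modVec_rankLeOne [FiniteDimensional (ZMod 2) W]
    {e : X →ₗ[ZMod 2] U →ₗ[ZMod 2] W} (hrk : RankLeTwo e) {w : W} (hw : w ≠ 0) {m : X} {x : U}
    (hx : e m x = w) : RankLeOne (modVec e w m) := by
  intro u v
  obtain ⟨α, β, γ, hβγ, hd⟩ := hrk.dep m x u v (by rwa [hx])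
  have h0 : β • modVec e w m u + γ • modVec e w m v = 0 := by
    rw [← map_smul, ← map_smul, ← map_add, modVec_eq_zero_iff, map_add, map_smul, map_smul, hd, hx]
    rcases zmod2_cases α with rfl | rfl <;> simp
  rcases zmod2_cases β with rfl | rfl <;> rcases zmod2_cases γ with rfl | rfl <;>
      simp_all [add_eq_zero_iff_eq_two]

theorem exists_functional_of_finrank [FiniteDimensional (ZMod 2) W]
    (hW : 3 ≤ Module.finrank (ZMod 2) W) (w c : W) :
    ∃ f : W →ₗ[ZMod 2] ZMod 2, f ≠ 0 ∧ f w = 0 ∧ f c = 0 := by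
  classical
  have hlt : Submodule.span (ZMod 2) {w, c} < ⊤ := by
    rw [lt_top_iff_ne_top]
    intro htop
    have h1 := finrank_span_finset_le_card (R := ZMod 2) ({w, c} : Finset W)
    have h2 : ({w, c} : Finset W).card ≤ 2 := Finset.card_le_two
    rw [Finset.coe_pair, Set.finrank, htop, finrank_top] at h1
    omega
  obtain ⟨f, hf, hle⟩ := Submodule.exists_le_ker_of_lt_top _ hlt
  exact ⟨f, hf, hle (Submodule.subset_span (by simp)), hle (Submodule.subset_span (by simp))⟩

/-- Modulo any vector `w`, a core-like space still contains an operator of rank at least two. -/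
theorem Core.exists_rank_two_mod [FiniteDimensional (ZMod 2) W]
    {e : X →ₗ[ZMod 2] U →ₗ[ZMod 2] W} (hc : Core e) (hW : 3 ≤ Module.finrank (ZMod 2) W) (w : W) :
    ∃ N u v, modVec e w N u ≠ 0 ∧ modVec e w N v ≠ 0 ∧ modVec e w N u ≠ modVec e w N v := by
  by_contra! hn
  have hR : ∀ m, RankLeOne (modVec e w m) := by
    intro m u v
    have := hn m u v
    tauto
  rcases rankOne_space _ hR with ⟨c, hcc⟩ | ⟨φ, hφ⟩
  · obtain ⟨c', rfl⟩ := Submodule.mkQ_surjective _ c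
    obtain ⟨f, hf, hfw, hfc⟩ := exists_functional_of_finrank hW w c'
    refine hf (hc.span f fun m x => ?_)
    rcases hcc m x with h | h
    · rcases modVec_eq_zero_iff.1 h with h | h <;> rw [h] <;> simp [hfw]
    · have h' : (Submodule.span (ZMod 2) {w}).mkQ (e m x - c') = 0 := by
        rw [map_sub, sub_eq_zero]
        exact h
      rcases mkQ_eq_zero_iff.1 h' with h | h
      · rw [sub_eq_zero] at h
        rw [h, hfc]
      · rw [sub_eq_iff_eq_add] at h
        rw [h, map_add, hfw, hfc, add_zero]
  · exact hc.noncomp ⟨φ, w, fun m x hx => modVec_eq_zero_iff.1 (hφ m x hx)⟩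

set_option maxHeartbeats 1000000 in
/-- A core-like operator space with source of dimension at least four and target of dimension at least
three has no thin vector. -/
theorem Core.not_hasThin [FiniteDimensional (ZMod 2) U] [FiniteDimensional (ZMod 2) W]
    {e : X →ₗ[ZMod 2] U →ₗ[ZMod 2] W} (hc : Core e) (hU : 4 ≤ Module.finrank (ZMod 2) U)
    (hW : 3 ≤ Module.finrank (ZMod 2) W) : ¬ HasThin e := by
  rintro ⟨x, hx, w, hxw⟩
  have hex : ∀ y, y ≠ 0 → (∀ m, e m y = 0 ∨ e m y = w) → ∃ m, e m y = w := by
    intro y hy h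
    by_contra! hn
    exact hy (hc.inj y fun m => (h m).resolve_right (hn m))
  have hw : w ≠ 0 := by
    rintro rfl
    exact hx (hc.inj x fun m => by simpa using hxw m)
  obtain ⟨N, u, v, hs, ht, hst⟩ := hc.exists_rank_two_mod hW w
  have hNw : ∀ z, e N z ≠ w := by
    intro z hz
    rcases modVec_rankLeOne hc.rank hw hz u v with h | h | h
    exacts [hs h, ht h, hst h]
  -- An operator `m` taking the value `w` has trace one modulo `w`, if `N` is used to identify source
  -- and target.
  have tr : ∀ m y, e m y = w → e N y = 0 → ∀ u' v',
      modVec e w N u' = modVec e w N u → modVec e w N v' = modVec e w N v →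
      ∃ p q r k : ZMod 2, modVec e w m u' = p • modVec e w N u + q • modVec e w N v ∧
      modVec e w m v' = r • modVec e w N u + k • modVec e w N v ∧ p + k = 1 := by
    intro m y hy hNy u' v' hu' hv'
    have h1 := modVec_rankLeOne hc.rank hw hy u' v'
    have h2 := modVec_rankLeOne hc.rank hw (m := m + N) (x := y) (by simp [hy, hNy]) u' v'
    simp only [map_add, LinearMap.add_apply, hu', hv'] at h2
    obtain ⟨p, q, r, k, h3, h4, -, h5⟩ := singular_pair hs ht hst h1 h2
    exact ⟨p, q, r, k, h3, h4, h5⟩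
  have hNx : e N x = 0 := (hxw N).resolve_right (hNw x)
  obtain ⟨M, hM⟩ := hex x hx hxw
  have hker1 : ∀ m, e m x = w → ∀ z, modVec e w N z = 0 → modVec e w m z = 0 := by
    intro m hm z hz
    obtain ⟨p, q, r, k, h1, h2, h3⟩ := tr m x hm hNx u v rfl rfl
    obtain ⟨p', q', r', k', h1', h2', h3'⟩ := tr m x hm hNx (u + z) v (by simp [hz]) rfl
    obtain ⟨p'', q'', r'', k'', h1'', h2'', h3''⟩ := tr m x hm hNx u (v + z) rfl (by simp [hz])
    have e1 := coord_pair hs ht hst (h2.symm.trans h2')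
    have e2 := coord_pair hs ht hst (h1.symm.trans h1'')
    have ep : p' = p := by
      rw [← e1.2] at h3'
      exact add_right_cancel (h3'.trans h3.symm)
    have ek : k'' = k := by
      rw [← e2.1] at h3''
      exact add_left_cancel (h3''.trans h3.symm)
    rw [map_add, h1, ep] at h1'
    rw [map_add, h2, ek] at h2''
    have z1 : modVec e w m z = (q' - q) • modVec e w N v := by
      rw [sub_smul, eq_sub_iff_add_eq, ← add_right_inj (p • modVec e w N u), ← h1']
      abel
    have z2 : modVec e w m z = (r'' - r) • modVec e w N u := by
      rw [sub_smul, eq_sub_iff_add_eq, ← add_left_inj (k • modVec e w N v), ← h2'']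
      abel
    have z3 := coord_pair hs ht hst (p := r'' - r) (q := 0) (p' := 0) (q' := q' - q)
      (by rw [← z2, ← z1]; simp)
    rw [z2, z3.1, zero_smul]
  have hker : ∀ m z, modVec e w N z = 0 → modVec e w m z = 0 := by
    intro m z hz
    rcases hxw m with h | h
    · have h1 := hker1 (m + M) (by simp [h, hM]) z hz
      have h2 := hker1 M hM z hz
      simpa [h2] using h1
    · exact hker1 m h z hz
  -- The kernel of `N` modulo `w` has dimension at least two.
  obtain ⟨y, hyN, hyx⟩ : ∃ y, modVec e w N y = 0 ∧ y ∉ Submodule.span (ZMod 2) {x} := by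
    by_contra! hn
    have hle : LinearMap.ker (modVec e w N) ≤ Submodule.span (ZMod 2) {x} := fun z hz => hn z hz
    have h1 := Submodule.finrank_mono hle
    have h2 := finrank_span_singleton (K := ZMod 2) hx
    have h3 := LinearMap.finrank_range_add_finrank_ker (modVec e w N)
    have h4 : Module.finrank (ZMod 2) (LinearMap.range (modVec e w N)) ≤ 2 := by
      have : LinearMap.range (modVec e w N) =
          (LinearMap.range (e N)).map (Submodule.span (ZMod 2) {w}).mkQ := LinearMap.range_comp _ _
      rw [this]
      exact (Submodule.finrank_map_le _ _).trans (hc.rank N)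
    omega
  have hy0 : y ≠ 0 := by
    rintro rfl
    exact hyx (Submodule.zero_mem _)
  have hxy : x + y ≠ 0 := by
    rw [Ne, add_eq_zero_iff_eq_two]
    rintro rfl
    exact hyx (Submodule.mem_span_singleton_self x)
  have hyw : ∀ m, e m y = 0 ∨ e m y = w := fun m => modVec_eq_zero_iff.1 (hker m y hyN)
  have hNy : e N y = 0 := (hyw N).resolve_right (hNw y)
  obtain ⟨g, hg⟩ := exists_dual_one hw
  let A := g ∘ₗ e.flip x
  let B := g ∘ₗ e.flip y
  have hAw : ∀ m, A m = 1 → e m x = w := by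
    intro m hm
    rcases hxw m with h | h
    · simp [A, h] at hm
    · exact h
  have hBw : ∀ m, B m = 1 → e m y = w := by
    intro m hm
    rcases hyw m with h | h
    · simp [B, h] at hm
    · exact h
  have hA : A ≠ 0 := by
    intro h
    have := LinearMap.congr_fun h M
    simp [A, hM, hg] at this
  have hB : B ≠ 0 := by
    obtain ⟨M', hM'⟩ := hex y hy0 hyw
    intro h
    have := LinearMap.congr_fun h M'
    simp [B, hM', hg] at this
  have hAB : A + B ≠ 0 := by
    intro h
    refine hxy (hc.inj _ fun m => ?_)
    have h1 : A m + B m = 0 := LinearMap.congr_fun h m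
    rw [map_add]
    rcases hxw m with h2 | h2 <;> rcases hyw m with h3 | h3 <;>
      simp [A, B, h2, h3, hg, ZModModule.add_self] at h1 ⊢
  obtain ⟨m₁, hm₁⟩ : ∃ m, A m = 1 ∧ B m = 0 := functional_sep hA hAB
  obtain ⟨m₂, hm₂⟩ : ∃ m, B m = 1 ∧ A m = 0 := functional_sep hB (by rwa [add_comm])
  -- Now `m₁`, `m₂` and `m₁ + m₂` all have trace one, which is absurd.
  obtain ⟨p, q, r, k, h1, h2, h3⟩ := tr m₁ x (hAw _ hm₁.1) hNx u v rfl rfl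
  obtain ⟨p', q', r', k', h1', h2', h3'⟩ := tr m₂ y (hBw _ hm₂.1) hNy u v rfl rfl
  obtain ⟨p'', q'', r'', k'', h1'', h2'', h3''⟩ := tr (m₁ + m₂) x
    (hAw _ (by rw [map_add, hm₁.1, hm₂.2, add_zero])) hNx u v rfl rfl
  have e1 := coord_pair hs ht hst (p := p + p') (q := q + q') (p' := p'') (q' := q'') (by
    rw [← h1'', map_add, LinearMap.add_apply, h1, h1', add_smul, add_smul]; abel)
  have e2 := coord_pair hs ht hst (p := r + r') (q := k + k') (p' := r'') (q' := k'') (by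
    rw [← h2'', map_add, LinearMap.add_apply, h2, h2', add_smul, add_smul]; abel)
  rw [← e1.1, ← e2.2] at h3''
  have : (1 : ZMod 2) = 1 + 1 := by linear_combination h3 + h3' - h3''
  exact absurd this (by decide)

end Operators

/-! ### Double counting -/

section Counting

variable {X U W : Type*} [AddCommGroup X] [Module (ZMod 2) X] [AddCommGroup U] [Module (ZMod 2) U]
  [AddCommGroup W] [Module (ZMod 2) W]

open scoped Classical in
theorem card_zeros_mul [Fintype X] (f : X →ₗ[ZMod 2] W) :
    (Finset.univ.filter fun x => f x = 0).card *
      2 ^ Module.finrank (ZMod 2) (LinearMap.range f) = Fintype.card X := by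
  have h1 : (Finset.univ.filter fun x => f x = 0).card = Fintype.card (LinearMap.ker f) := by
    rw [Fintype.card_subtype]
    rfl
  rw [h1, Module.card_eq_pow_finrank (K := ZMod 2) (V := LinearMap.ker f),
    Module.card_eq_pow_finrank (K := ZMod 2) (V := X), ZMod.card, ← pow_add, add_comm,
    LinearMap.finrank_range_add_finrank_ker]

open scoped Classical in
/-- Double counting of the pairs `(m, x)` with `e m x = 0`: for a three-dimensional target and in
the absence of thin vectors, there are many nonzero vectors at which the values do not span the
target. -/
theorem card_lt_card_special [Fintype X] [Fintype U] [FiniteDimensional (ZMod 2) W]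
    (hW : Module.finrank (ZMod 2) W = 3) {e : X →ₗ[ZMod 2] U →ₗ[ZMod 2] W} (hrk : RankLeTwo e)
    (hthin : ¬ HasThin e) :
    ∃ S : Finset U, (∀ x ∈ S, x ≠ 0 ∧ ∃ f : W →ₗ[ZMod 2] ZMod 2, f ≠ 0 ∧ ∀ m, f (e m x) = 0) ∧
      Fintype.card U < S.card + 7 := by
  set S := Finset.univ.filter fun x : U => x ≠ 0 ∧
      ∃ f : W →ₗ[ZMod 2] ZMod 2, f ≠ 0 ∧ ∀ m, f (e m x) = 0 with hS
  refine ⟨S, fun x hx => (Finset.mem_filter.1 hx).2, ?_⟩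
  have hsum : ∑ m : X, (Finset.univ.filter fun x => e m x = 0).card =
      ∑ x : U, (Finset.univ.filter fun m => e m x = 0).card :=
    Finset.sum_card_bipartiteAbove_eq_sum_card_bipartiteBelow (fun m x => e m x = 0)
  have hm : ∀ m : X, Fintype.card U ≤ 4 * (Finset.univ.filter fun x => e m x = 0).card := by
    intro m
    rw [← card_zeros_mul (e m), mul_comm]
    gcongr
    exact (Nat.pow_le_pow_right (by norm_num) (hrk m)).trans (by norm_num)
  have hlow : Fintype.card X * Fintype.card U <
      4 * ∑ m : X, (Finset.univ.filter fun x => e m x = 0).card := by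
    rw [Finset.mul_sum, ← Finset.card_univ (α := X), ← smul_eq_mul, ← Finset.sum_const]
    refine Finset.sum_lt_sum (fun m _ => hm m) ⟨0, Finset.mem_univ _, ?_⟩
    have : 0 < Fintype.card U := Fintype.card_pos
    simp only [map_zero, LinearMap.zero_apply, Finset.filter_true, Finset.card_univ]
    omega
  have hx : ∀ x : U, 8 * (Finset.univ.filter fun m => e m x = 0).card ≤
      Fintype.card X * (1 + ((if x ∈ S then 1 else 0) + if x = 0 then 7 else 0)) := by
    intro x
    have hcard : (Finset.univ.filter fun m => e m x = 0).card *
        2 ^ Module.finrank (ZMod 2) (LinearMap.range (e.flip x)) = Fintype.card X := by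
      convert card_zeros_mul (e.flip x)
      rfl
    by_cases h0 : x = 0
    · have h1 : (Finset.univ.filter fun m => e m x = 0).card ≤ Fintype.card X :=
        Finset.card_le_univ _
      rw [if_pos h0, mul_comm]
      exact Nat.mul_le_mul h1 (by omega)
    · rw [if_neg h0]
      have h2 : 2 ≤ Module.finrank (ZMod 2) (LinearMap.range (e.flip x)) := by
        by_contra! hlt
        obtain ⟨w, hw⟩ := finrank_le_one_iff.1 (Nat.lt_succ_iff.1 hlt)
        refine hthin ⟨x, h0, w, fun m => ?_⟩
        obtain ⟨c, hc⟩ := hw ⟨e.flip x m, m, rfl⟩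
        have hc' : c • (w : W) = e m x := congrArg Subtype.val hc
        rcases zmod2_cases c with rfl | rfl
        · left
          rw [← hc', zero_smul]
        · right
          rw [← hc', one_smul]
      have h4 : 2 ^ 2 ≤ 2 ^ Module.finrank (ZMod 2) (LinearMap.range (e.flip x)) :=
        Nat.pow_le_pow_right (by norm_num) h2
      by_cases hxS : x ∈ S
      · rw [if_pos hxS]
        nlinarith
      · have htop : LinearMap.range (e.flip x) = ⊤ := by
          by_contra hne
          obtain ⟨f, hf, hle⟩ := Submodule.exists_le_ker_of_lt_top _ (lt_top_iff_ne_top.2 hne)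
          refine hxS ?_
          rw [hS, Finset.mem_filter]
          exact ⟨Finset.mem_univ _, h0, f, hf, fun m => hle ⟨m, rfl⟩⟩
        rw [htop, finrank_top, hW] at hcard
        rw [if_neg hxS]
        omega
  have hup : 8 * ∑ x : U, (Finset.univ.filter fun m => e m x = 0).card ≤
      Fintype.card X * (Fintype.card U + (S.card + 7)) := by
    rw [Finset.mul_sum]
    refine (Finset.sum_le_sum fun x _ => hx x).trans (le_of_eq ?_)
    rw [← Finset.mul_sum, Finset.sum_add_distrib, Finset.sum_add_distrib]
    simp
  rw [hsum] at hlow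
  have : Fintype.card X * (2 * Fintype.card U) <
      Fintype.card X * (Fintype.card U + (S.card + 7)) := by linarith
  have := lt_of_mul_lt_mul_left this (Nat.zero_le _)
  omega

/-- In a core-like space without thin vectors, a nonzero functional annihilates the values of at
most one nonzero vector. -/
theorem eq_of_functional [FiniteDimensional (ZMod 2) W]
    {e : X →ₗ[ZMod 2] U →ₗ[ZMod 2] W} (hrk : RankLeTwo e)
    (hspan : ∀ f : W →ₗ[ZMod 2] ZMod 2, (∀ m x, f (e m x) = 0) → f = 0)
    (hthin : ¬ HasThin e) {f : W →ₗ[ZMod 2] ZMod 2} (hf : f ≠ 0) {x y : U}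
    (hx : x ≠ 0) (hy : y ≠ 0) (hfx : ∀ m, f (e m x) = 0) (hfy : ∀ m, f (e m y) = 0) : x = y := by
  by_contra hxy
  have : ∃ M h, f (e M h) ≠ 0 := by
    by_contra! hn
    exact hf (hspan f hn)
  obtain ⟨M, h, hM⟩ := this
  exact hthin (hasThin_of_functional hrk f hx hy hxy hfx hfy hM)

/-- A core-like space with three-dimensional target has source of dimension at most three. -/
theorem Core.base [Finite X] [FiniteDimensional (ZMod 2) U] [FiniteDimensional (ZMod 2) W]
    {e : X →ₗ[ZMod 2] U →ₗ[ZMod 2] W} (hc : Core e) (hU : 4 ≤ Module.finrank (ZMod 2) U)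
    (hW : Module.finrank (ZMod 2) W = 3) : False := by
  classical
  have hthin := hc.not_hasThin hU hW.ge
  have := Fintype.ofFinite X
  have : Finite U := Module.finite_of_finite (ZMod 2)
  have := Fintype.ofFinite U
  have : Finite W := Module.finite_of_finite (ZMod 2)
  have : Finite (W →ₗ[ZMod 2] ZMod 2) := Module.finite_of_finite (ZMod 2)
  have := Fintype.ofFinite (W →ₗ[ZMod 2] ZMod 2)
  obtain ⟨S, hSx, hcount⟩ := card_lt_card_special hW hc.rank hthin
  have hcU : 2 ^ 4 ≤ Fintype.card U := by
    rw [Module.card_eq_pow_finrank (K := ZMod 2) (V := U), ZMod.card]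
    exact Nat.pow_le_pow_right (by norm_num) hU
  have hD : Fintype.card (W →ₗ[ZMod 2] ZMod 2) = 8 := by
    rw [Module.card_eq_pow_finrank (K := ZMod 2), ZMod.card]
    have : Module.finrank (ZMod 2) (W →ₗ[ZMod 2] ZMod 2) = 3 := by
      rw [← hW]
      exact Subspace.dual_finrank_eq
    rw [this]
    norm_num
  have hS : ∀ S : Finset U, (∀ x ∈ S, x ≠ 0 ∧
      ∃ f : W →ₗ[ZMod 2] ZMod 2, f ≠ 0 ∧ ∀ m, f (e m x) = 0) → S.card ≤ 7 := by
    intro S hS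
    have h7 : ((Finset.univ : Finset (W →ₗ[ZMod 2] ZMod 2)).erase 0).card = 7 := by
      rw [Finset.card_erase_of_mem (Finset.mem_univ _), Finset.card_univ, hD]
    rw [← h7]
    let F : U → (W →ₗ[ZMod 2] ZMod 2) := fun x =>
      if h : ∃ f : W →ₗ[ZMod 2] ZMod 2, f ≠ 0 ∧ ∀ m, f (e m x) = 0 then h.choose else 0
    have hF : ∀ x, (∃ f : W →ₗ[ZMod 2] ZMod 2, f ≠ 0 ∧ ∀ m, f (e m x) = 0) →
        F x ≠ 0 ∧ ∀ m, F x (e m x) = 0 := by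
      intro x h
      simp only [F, dif_pos h]
      exact h.choose_spec
    refine Finset.card_le_card_of_injOn F ?_ ?_
    · intro x hx
      have hx' := hS x hx
      exact Finset.mem_erase.2 ⟨(hF x hx'.2).1, Finset.mem_univ _⟩
    · intro x hx y hy hxy
      have hx' := hS x hx
      have hy' := hS y hy
      exact eq_of_functional hc.rank hc.span hthin (hF x hx'.2).1 hx'.1 hy'.1 (hF x hx'.2).2
        (hxy ▸ (hF y hy'.2).2)
  have := hS S hSx
  omega

end Counting

/-! ### Bound on the dimension of the source -/

section Induction

variable {X U : Type*} [AddCommGroup X] [Module (ZMod 2) X] [AddCommGroup U] [Module (ZMod 2) U]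

theorem mkQ_span_pair {W : Type*} [AddCommGroup W] [Module (ZMod 2) W] {u w v : W}
    (h : (Submodule.span (ZMod 2) {u}).mkQ v = 0 ∨
      (Submodule.span (ZMod 2) {u}).mkQ v = (Submodule.span (ZMod 2) {u}).mkQ w) :
    v ∈ Submodule.span (ZMod 2) {u, w} := by
  rcases h with h | h
  · rcases mkQ_eq_zero_iff.1 h with h | h <;> rw [h]
    · exact Submodule.zero_mem _
    · exact Submodule.subset_span (by simp)
  · have h' : (Submodule.span (ZMod 2) {u}).mkQ (v - w) = 0 := by rw [map_sub, h, sub_self]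
    have hw : w ∈ Submodule.span (ZMod 2) {u, w} := Submodule.subset_span (by simp)
    have : v - w ∈ Submodule.span (ZMod 2) {u, w} := by
      rcases mkQ_eq_zero_iff.1 h' with h | h <;> rw [h]
      · exact Submodule.zero_mem _
      · exact Submodule.subset_span (by simp)
    simpa using Submodule.add_mem _ this hw

/-- A plane spanned by `u'` and `w'` meets a subspace not containing `u'` in at most a line. -/
theorem span_pair_inter {W : Type*} [AddCommGroup W] [Module (ZMod 2) W] {u' w' : W}
    {S : Submodule (ZMod 2) W} (hu' : u' ∉ S) :
    ∃ v, ∀ y, y ∈ S → y ∈ Submodule.span (ZMod 2) {u', w'} → y = 0 ∨ y = v := by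
  have key : ∀ y, y ∈ S → y ∈ Submodule.span (ZMod 2) {u', w'} →
      y = 0 ∨ y = w' ∨ y = u' + w' := by
    intro y hy hy'
    obtain ⟨a, b, rfl⟩ := Submodule.mem_span_pair.1 hy'
    rcases zmod2_cases a with rfl | rfl <;> rcases zmod2_cases b with rfl | rfl
    · simp
    · simp
    · simp only [one_smul, zero_smul, add_zero] at hy
      exact absurd hy hu'
    · simp
  by_cases hw : w' ∈ S
  · refine ⟨w', fun y hy hy' => ?_⟩
    rcases key y hy hy' with h | h | h
    · exact Or.inl h
    · exact Or.inr h
    · rw [h] at hy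
      exact absurd ((Submodule.add_mem_iff_left _ hw).1 hy) hu'
  · refine ⟨u' + w', fun y hy hy' => ?_⟩
    rcases key y hy hy' with h | h | h
    · exact Or.inl h
    · exact absurd (h ▸ hy) hw
    · exact Or.inr h

/-- A core-like operator space whose target has dimension at least three has a source of dimension
at most three. When the target has dimension at least four, some hyperplane would be mapped into the
plane spanned by `u` and a further vector, for every `u ≠ 0`; two such hyperplanes meet in a thin
vector. -/
theorem Core.finrank_lt [Finite X] [FiniteDimensional (ZMod 2) U]
    (hU : 4 ≤ Module.finrank (ZMod 2) U) (d : ℕ) :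
    ∀ (W : Type) [AddCommGroup W] [Module (ZMod 2) W] [FiniteDimensional (ZMod 2) W]
      (e : X →ₗ[ZMod 2] U →ₗ[ZMod 2] W), Core e → Module.finrank (ZMod 2) W = d + 3 → False := by
  induction d with
  | zero =>
    intro W _ _ _ e hc hW
    exact hc.base hU hW
  | succ d ih =>
    intro W _ _ _ e hc hW
    have hthin := hc.not_hasThin hU (by omega)
    have hcomp : ∀ u : W, u ≠ 0 → ∃ (φ : U →ₗ[ZMod 2] ZMod 2) (w : W),
        ∀ m x, φ x = 0 → e m x ∈ Submodule.span (ZMod 2) {u, w} := by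
      intro u hu
      have hq : Module.finrank (ZMod 2) (W ⧸ Submodule.span (ZMod 2) {u}) = d + 3 := by
        have h1 := Submodule.finrank_quotient_add_finrank (Submodule.span (ZMod 2) {u})
        rw [finrank_span_singleton hu] at h1
        omega
      have hnc : ¬ Core (modVec e u) := fun h => ih _ _ h hq
      by_contra hn
      refine hnc ⟨fun m => ?_, fun x hx => ?_, fun f hf => ?_, ?_⟩
      · have : LinearMap.range (modVec e u m) =
            (LinearMap.range (e m)).map (Submodule.span (ZMod 2) {u}).mkQ :=
          LinearMap.range_comp _ _
        rw [this]
        exact (Submodule.finrank_map_le _ _).trans (hc.rank m)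
      · by_contra hx0
        exact hthin ⟨x, hx0, u, fun m => modVec_eq_zero_iff.1 (hx m)⟩
      · have h0 : f ∘ₗ (Submodule.span (ZMod 2) {u}).mkQ = 0 := hc.span _ hf
        apply LinearMap.ext
        intro y
        obtain ⟨y, rfl⟩ := Submodule.mkQ_surjective _ y
        exact LinearMap.congr_fun h0 y
      · rintro ⟨φ, w, hw⟩
        obtain ⟨w, rfl⟩ := Submodule.mkQ_surjective _ w
        exact hn ⟨φ, w, fun m x hx => mkQ_span_pair (hw m x hx)⟩
    have : Nontrivial W := Module.nontrivial_of_finrank_pos (R := ZMod 2) (by omega)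
    obtain ⟨u, hu⟩ := exists_ne (0 : W)
    obtain ⟨φ, w, hφ⟩ := hcomp u hu
    have hlt : Submodule.span (ZMod 2) {u, w} ≠ ⊤ := by
      classical
      intro htop
      have h1 := finrank_span_finset_le_card (R := ZMod 2) ({u, w} : Finset W)
      have h2 : ({u, w} : Finset W).card ≤ 2 := Finset.card_le_two
      rw [Finset.coe_pair, Set.finrank, htop, finrank_top] at h1
      omega
    obtain ⟨u', hu'⟩ : ∃ u', u' ∉ Submodule.span (ZMod 2) {u, w} := by
      by_contra! h
      exact hlt (Submodule.eq_top_iff'.2 h)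
    have hu'0 : u' ≠ 0 := by
      rintro rfl
      exact hu' (Submodule.zero_mem _)
    obtain ⟨φ', w', hφ'⟩ := hcomp u' hu'0
    obtain ⟨v, hv⟩ := span_pair_inter (w' := w') hu'
    obtain ⟨x, hx, hx0⟩ : ∃ x, (φ.prod φ') x = 0 ∧ x ≠ 0 := by
      by_contra! hn
      have hinj : LinearMap.ker (φ.prod φ') = ⊥ := LinearMap.ker_eq_bot'.2 hn
      have h1 := LinearMap.finrank_le_finrank_of_injective (LinearMap.ker_eq_bot.1 hinj)
      rw [Module.finrank_prod, Module.finrank_self] at h1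
      omega
    have hx' : φ x = 0 ∧ φ' x = 0 := Prod.mk_eq_zero.1 hx
    exact hthin ⟨x, hx0, v, fun m => hv _ (hφ m x hx'.1) (hφ' m x hx'.2)⟩

end Induction

/-! ### Spaces of matrices -/

section Matrices

variable {n p : ℕ}

/-- The properties of a primitive matrix space of upper rank two used below, with the
noncompression property in coordinate-free form: no hyperplane `φᗮ` is mapped into a line `{0, w}`
by all matrices of the space. -/
structure MatCore (V : Submodule (ZMod 2) (Matrix (Fin n) (Fin p) (ZMod 2))) : Prop where
  rank : ∀ M ∈ V, M.rank ≤ 2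
  inj : ∀ x, (∀ M ∈ V, M *ᵥ x = 0) → x = 0
  inj' : ∀ y, (∀ M ∈ V, y ᵥ* M = 0) → y = 0
  noncomp : ¬ ∃ φ w, ∀ M ∈ V, ∀ x, φ ⬝ᵥ x = 0 → M *ᵥ x = 0 ∨ M *ᵥ x = w

/-- The operator space attached to a matrix space. -/
def opOf (V : Submodule (ZMod 2) (Matrix (Fin n) (Fin p) (ZMod 2))) :
    V →ₗ[ZMod 2] (Fin p → ZMod 2) →ₗ[ZMod 2] (Fin n → ZMod 2) :=
  Matrix.mulVecBilin (ZMod 2) (ZMod 2) ∘ₗ V.subtype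

@[simp]
theorem opOf_apply (V : Submodule (ZMod 2) (Matrix (Fin n) (Fin p) (ZMod 2))) (M : V)
    (x : Fin p → ZMod 2) : opOf V M x = M.1 *ᵥ x := rfl

theorem exists_dotProduct (f : (Fin n → ZMod 2) →ₗ[ZMod 2] ZMod 2) : ∃ v, ∀ x, f x = v ⬝ᵥ x := by
  obtain ⟨v, rfl⟩ := (dotProductEquiv (ZMod 2) (Fin n)).surjective f
  exact ⟨v, fun x => rfl⟩

variable {V : Submodule (ZMod 2) (Matrix (Fin n) (Fin p) (ZMod 2))}

theorem MatCore.core (h : MatCore V) : Core (opOf V) where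
  rank M := h.rank M M.2
  inj x hx := h.inj x fun M hM => hx ⟨M, hM⟩
  span f hf := by
    obtain ⟨v, hv⟩ := exists_dotProduct f
    have : v = 0 := by
      refine h.inj' v fun M hM => ?_
      ext j
      have := hf ⟨M, hM⟩ (Pi.single j 1)
      rw [hv, opOf_apply, dotProduct_mulVec, dotProduct_single_one] at this
      exact this
    ext x
    simp [hv, this]
  noncomp := by
    rintro ⟨φ, w, hw⟩
    obtain ⟨v, hv⟩ := exists_dotProduct φ
    exact h.noncomp ⟨v, w, fun M hM x hx => hw ⟨M, hM⟩ x (by rw [hv, hx])⟩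

/-- The space of transposes of a matrix space. -/
def transposeSpace (V : Submodule (ZMod 2) (Matrix (Fin n) (Fin p) (ZMod 2))) :
    Submodule (ZMod 2) (Matrix (Fin p) (Fin n) (ZMod 2)) :=
  V.map (transposeLinearEquiv (Fin n) (Fin p) (ZMod 2) (ZMod 2)).toLinearMap

theorem mem_transposeSpace {M : Matrix (Fin p) (Fin n) (ZMod 2)} :
    M ∈ transposeSpace V ↔ Mᵀ ∈ V := by
  constructor
  · rintro ⟨N, hN, rfl⟩
    exact hN
  · intro h
    exact ⟨Mᵀ, h, rfl⟩

/-- A vector orthogonal to the hyperplane `φᗮ` of `F2 ^ n` is `0` or `φ`. -/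
theorem eq_zero_or_eq_of_orthogonal {φ z : Fin n → ZMod 2}
    (h : ∀ y, φ ⬝ᵥ y = 0 → y ⬝ᵥ z = 0) : z = 0 ∨ z = φ := by
  by_cases h0 : ∃ y, φ ⬝ᵥ y = 1 ∧ y ⬝ᵥ z = 1
  · right
    obtain ⟨y₀, h1, h2⟩ := h0
    refine dotProduct_eq _ _ fun y => ?_
    rcases zmod2_cases (φ ⬝ᵥ y) with h3 | h3
    · rw [h3, dotProduct_comm]
      exact h y h3
    · have := h (y + y₀) (by rw [dotProduct_add, h3, h1]; decide)
      rw [add_dotProduct, h2, add_eq_zero_iff_eq_two] at this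
      rw [h3, dotProduct_comm, this]
  · left
    push Not at h0
    refine dotProduct_eq_zero _ fun y => ?_
    rw [dotProduct_comm]
    rcases zmod2_cases (φ ⬝ᵥ y) with h3 | h3
    · exact h y h3
    · exact (zmod2_cases _).resolve_right (h0 y h3)

theorem MatCore.transpose (h : MatCore V) : MatCore (transposeSpace V) where
  rank M hM := by
    rw [← rank_transpose]
    exact h.rank _ (mem_transposeSpace.1 hM)
  inj x hx := h.inj' x fun M hM => by
    rw [← mulVec_transpose]
    exact hx _ (mem_transposeSpace.2 hM)
  inj' y hy := h.inj y fun M hM => by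
    rw [← vecMul_transpose]
    exact hy _ (mem_transposeSpace.2 hM)
  noncomp := by
    rintro ⟨φ, w, hw⟩
    refine h.noncomp ⟨w, φ, fun M hM x hx => eq_zero_or_eq_of_orthogonal fun y hy => ?_⟩
    rw [dotProduct_mulVec, ← mulVec_transpose]
    rcases hw Mᵀ (mem_transposeSpace.2 hM) y hy with h1 | h1 <;> rw [h1]
    · simp
    · exact hx

theorem MatCore.width_le (h : MatCore V) (hn : 3 ≤ n) : p ≤ 3 := by
  by_contra! hp
  exact Core.finrank_lt (X := V) (U := Fin p → ZMod 2) (by rw [Module.finrank_fin_fun]; omega) (n - 3)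
    (Fin n → ZMod 2) (opOf V) h.core (by rw [Module.finrank_fin_fun]; omega)

theorem rank_le_one_of_columns {m : Type*} [Fintype m] [DecidableEq m]
    (M : Matrix (Fin n) m (ZMod 2)) (w : Fin n → ZMod 2)
    (h : ∀ j, M.col j = 0 ∨ M.col j = w) : M.rank ≤ 1 := by
  classical
  have : M = vecMulVec w (fun j => if M.col j = 0 then 0 else 1) := by
    ext i j
    rw [vecMulVec_apply]
    by_cases h0 : M.col j = 0
    · rw [if_pos h0, mul_zero]
      exact congrFun h0 i
    · rw [if_neg h0, mul_one]
      exact congrFun ((h j).resolve_left h0) i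
  rw [this]
  exact rank_vecMulVec_le _ _

theorem exists_isUnit_mulVec_eq {a b : Fin p → ZMod 2} (ha : a ≠ 0) (hb : b ≠ 0) :
    ∃ R : Matrix (Fin p) (Fin p) (ZMod 2), IsUnit R ∧ R *ᵥ a = b := by
  obtain ⟨g, hg⟩ := Submodule.exists_linearEquiv_restrict_eq
    ((LinearEquiv.toSpanNonzeroSingleton (ZMod 2) _ a ha).symm ≪≫ₗ
      LinearEquiv.toSpanNonzeroSingleton (ZMod 2) _ b hb)
  refine ⟨LinearMap.toMatrix' g.toLinearMap, ?_, ?_⟩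
  · rw [Matrix.isUnit_iff_isUnit_det, LinearMap.det_toMatrix']
    exact LinearEquiv.isUnit_det' g
  · rw [LinearMap.toMatrix'_mulVec]
    have h1 := hg (LinearEquiv.toSpanNonzeroSingleton (ZMod 2) _ a ha 1)
    rw [LinearEquiv.trans_apply, LinearEquiv.symm_apply_apply] at h1
    simpa using h1.symm

/-- The space `P V Q`. -/
def twist (P : Matrix (Fin n) (Fin n) (ZMod 2)) (Q : Matrix (Fin p) (Fin p) (ZMod 2))
    (V : Submodule (ZMod 2) (Matrix (Fin n) (Fin p) (ZMod 2))) :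
    Submodule (ZMod 2) (Matrix (Fin n) (Fin p) (ZMod 2)) :=
  V.map (σ₁₂ := RingHom.id (ZMod 2))
    { toFun := fun M : Matrix (Fin n) (Fin p) (ZMod 2) => P * M * Q
      map_add' := fun M N => by rw [Matrix.mul_add, Matrix.add_mul]
      map_smul' := fun c M => by simp }

theorem matEquiv_twist {P : Matrix (Fin n) (Fin n) (ZMod 2)} {Q : Matrix (Fin p) (Fin p) (ZMod 2)}
    (hP : IsUnit P) (hQ : IsUnit Q) : MatEquiv (ZMod 2) V (twist P Q V) :=
  ⟨P, Q, hP, hQ, rfl⟩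

theorem matEquiv_refl (V : Submodule (ZMod 2) (Matrix (Fin n) (Fin p) (ZMod 2))) :
    MatEquiv (ZMod 2) V V :=
  ⟨1, 1, isUnit_one, isUnit_one, by simp⟩

/-- If all matrices of `V` map some hyperplane into a common line, then after a change of basis of
the source in which the first `p - 1` vectors span that hyperplane, deleting the last column leaves
matrices of rank at most one. -/
theorem exists_dropCol_of_comp {φ : Fin p → ZMod 2} {w : Fin n → ZMod 2}
    (h : ∀ M ∈ V, ∀ x, φ ⬝ᵥ x = 0 → M *ᵥ x = 0 ∨ M *ᵥ x = w) :
    ∃ T, MatEquiv (ZMod 2) V T ∧ ∀ M ∈ T, (dropCol M).rank ≤ 1 := by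
  by_cases hφ : φ = 0
  · subst hφ
    refine ⟨V, matEquiv_refl V, fun M hM => ?_⟩
    refine rank_le_one_of_columns _ w fun j => ?_
    have := h M hM (Pi.single (Fin.castLE (Nat.sub_le p 1) j) 1) (zero_dotProduct _)
    rw [mulVec_single_one] at this
    exact this
  · obtain ⟨k, hk⟩ := Function.ne_iff.1 hφ
    have hp : 0 < p := k.pos
    let l : Fin p := ⟨p - 1, by omega⟩
    obtain ⟨R, hR, hRl⟩ := exists_isUnit_mulVec_eq (a := Pi.single l 1) (b := φ)
      (by simp) hφ
    have hRT : IsUnit (Rᵀ).det := by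
      rw [det_transpose]
      exact (isUnit_iff_isUnit_det _).1 hR
    have hinv : Rᵀ * (Rᵀ)⁻¹ = 1 := mul_nonsing_inv _ hRT
    refine ⟨twist 1 (Rᵀ)⁻¹ V, matEquiv_twist isUnit_one ?_, ?_⟩
    · exact (isUnit_iff_isUnit_det _).2 (isUnit_nonsing_inv_det _ hRT)
    rintro _ ⟨M, hM, rfl⟩
    refine rank_le_one_of_columns _ w fun j => ?_
    have hj : l ≠ Fin.castLE (Nat.sub_le p 1) j := by
      intro h
      have := congrArg Fin.val h
      simp only [l, Fin.val_castLE] at this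
      omega
    have hz : φ ⬝ᵥ ((Rᵀ)⁻¹ *ᵥ Pi.single (Fin.castLE (Nat.sub_le p 1) j) 1) = 0 := by
      rw [← hRl, ← vecMul_transpose, ← dotProduct_mulVec, mulVec_mulVec, hinv, one_mulVec]
      simp [hj]
    have := h M hM _ hz
    rw [mulVec_mulVec, mulVec_single_one] at this
    simpa [dropCol, Matrix.col_def, funext_iff] using this

theorem rank_le_urk {M : Matrix (Fin n) (Fin p) (ZMod 2)} (hM : M ∈ V) : M.rank ≤ urk V := by
  refine le_csSup ⟨n, ?_⟩ ⟨M, hM, rfl⟩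
  rintro _ ⟨N, -, rfl⟩
  exact N.rank_le_height

theorem matCore_of_primitive (hprim : Primitive (ZMod 2) V) (hurk : urk V = 2) : MatCore V where
  rank M hM := (rank_le_urk hM).trans_eq hurk
  inj := hprim.1.1.1
  inj' y hy := by
    refine dotProduct_eq_zero _ fun z => ?_
    have hz : z ∈ Submodule.span (ZMod 2)
        {y : Fin n → ZMod 2 | ∃ M ∈ V, ∃ x : Fin p → ZMod 2, M.mulVec x = y} := by
      rw [hprim.1.1.2]
      trivial
    induction hz using Submodule.span_induction with
    | mem z hz =>
      obtain ⟨M, hM, x, rfl⟩ := hz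
      rw [dotProduct_mulVec, hy M hM, zero_dotProduct]
    | zero => simp
    | add z z' _ _ h h' => rw [dotProduct_add, h, h', add_zero]
    | smul c z _ h => rw [dotProduct_smul, h, smul_zero]
  noncomp := by
    rintro ⟨φ, w, h⟩
    have := hprim.1.2
    rw [hurk] at this
    exact this (exists_dropCol_of_comp h)

theorem dimensions_of_primitive (hprim : Primitive (ZMod 2) V) (hurk : urk V = 2) :
    n = 3 ∧ p = 3 := by
  have hc := matCore_of_primitive hprim hurk
  have hp : 3 ≤ p := by
    by_contra! hp
    refine hprim.1.2 ⟨V, matEquiv_refl V, fun M _ => ?_⟩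
    rw [hurk]
    exact (dropCol M).rank_le_width.trans (by omega)
  have hn : 3 ≤ n := by
    by_contra! hn
    refine hprim.2 ⟨V, matEquiv_refl V, fun M _ => ?_⟩
    rw [hurk]
    exact (dropRow M).rank_le_height.trans (by omega)
  have h1 := hc.width_le hn
  have h2 := hc.transpose.width_le hp
  omega

end Matrices

/-! ### Singular matrices with zero diagonal entries -/

section ThreeFunctionals

variable {X : Type*} [AddCommGroup X] [Module (ZMod 2) X]

theorem zmod2_mul_self (a : ZMod 2) : a * a = a := by
  revert a; decide

theorem functional_surjective {k : ℕ} (φ : Fin k → X →ₗ[ZMod 2] ZMod 2)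
    (h : ∀ c : Fin k → ZMod 2, (∀ x, ∑ i, c i * φ i x = 0) → c = 0) (v : Fin k → ZMod 2) :
    ∃ x, ∀ i, φ i x = v i := by
  have htop : LinearMap.range (LinearMap.pi φ) = ⊤ := by
    by_contra hne
    obtain ⟨f, hf, hle⟩ := Submodule.exists_le_ker_of_lt_top _ (lt_top_iff_ne_top.2 hne)
    obtain ⟨c, hc⟩ := exists_dotProduct f
    have : c = 0 := by
      refine h c fun x => ?_
      have := hle ⟨x, rfl⟩
      rw [LinearMap.mem_ker, hc] at this
      exact this
    exact hf (LinearMap.ext fun x => by simp [hc, this])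
  obtain ⟨x, hx⟩ := LinearMap.range_eq_top.1 htop v
  exact ⟨x, fun i => congrFun hx i⟩

theorem functional_surjective_three {a b c : X →ₗ[ZMod 2] ZMod 2} (ha : a ≠ 0) (hb : b ≠ 0)
    (hc : c ≠ 0) (hab : a ≠ b) (hac : a ≠ c) (hbc : b ≠ c) (habc : c ≠ a + b) (u v w : ZMod 2) :
    ∃ x, a x = u ∧ b x = v ∧ c x = w := by
  obtain ⟨x, hx⟩ := functional_surjective ![a, b, c] (fun k hk => by
    simp only [Fin.sum_univ_three, Matrix.cons_val_zero, Matrix.cons_val_one,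
      Matrix.cons_val] at hk
    have e : k 0 • a + k 1 • b + k 2 • c = 0 := LinearMap.ext hk
    have e' : k 0 = 0 ∧ k 1 = 0 ∧ k 2 = 0 := by
      rcases zmod2_cases (k 0) with h0 | h0 <;> rcases zmod2_cases (k 1) with h1 | h1 <;>
        rcases zmod2_cases (k 2) with h2 | h2 <;> rw [h0, h1, h2] at e ⊢ <;>
        simp only [zero_smul, one_smul, zero_add, add_zero, add_eq_zero_iff_eq_two] at e <;>
        first | exact ⟨rfl, rfl, rfl⟩ | (exfalso; tauto)
    ext i
    fin_cases i
    exacts [e'.1, e'.2.1, e'.2.2]) ![u, v, w]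
  exact ⟨x, hx 0, hx 1, hx 2⟩

/-- A functional vanishing on the kernel of `b` is a multiple of `b`. -/
theorem functional_eq_smul {b f : X →ₗ[ZMod 2] ZMod 2} (h : ∀ x, b x = 0 → f x = 0) :
    ∃ μ : ZMod 2, ∀ x, f x = μ * b x := by
  obtain ⟨α, β, γ, hs⟩ := functional_mem_span (a := b) (b := b) (c := b) (f := f)
    (fun x hx _ _ => h x hx)
  exact ⟨α + β + γ, fun x => by rw [hs x]; ring⟩

/-- If `a, q, r` are not multiples of `b`, and `a q r = 0` on the kernel of `b`, then `a + q + r` is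
a multiple of `b`. -/
theorem functional_sum_of_ker {a b q r : X →ₗ[ZMod 2] ZMod 2} (ha : a ≠ 0) (hab : a ≠ b)
    (hq : q ≠ 0) (hqb : q ≠ b) (hr : r ≠ 0) (hrb : r ≠ b)
    (h : ∀ x, b x = 0 → a x * q x * r x = 0) :
    ∃ μ : ZMod 2, ∀ x, a x + q x + r x = μ * b x := by
  have key : ∀ f : X →ₗ[ZMod 2] ZMod 2, f ≠ 0 → f ≠ b →
      f ∘ₗ (LinearMap.ker b).subtype ≠ 0 := by
    intro f hf hfb h0
    obtain ⟨μ, hμ⟩ := functional_eq_smul (b := b) (f := f)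
      (fun x hx => LinearMap.congr_fun h0 ⟨x, hx⟩)
    rcases zmod2_cases μ with rfl | rfl
    · exact hf (LinearMap.ext fun x => by rw [hμ, zero_mul]; rfl)
    · exact hfb (LinearMap.ext fun x => by rw [hμ, one_mul])
  have h3 := functional_mul_mul_eq_zero (key a ha hab) (key q hq hqb) (key r hr hrb)
    (fun x => h x x.2)
  exact functional_eq_smul (b := b) (f := a + q + r) (fun x hx => h3 ⟨x, hx⟩)

/-- For a space of singular matrices `!![0, a, p; b, 0, q; r, s, t]`, the last entry can be made to
vanish by adding multiples of the first two rows and columns to the last ones. -/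
theorem exists_clear_corner {a b p q r s t : X →ₗ[ZMod 2] ZMod 2} (ha : a ≠ 0) (hb : b ≠ 0)
    (hp : p ≠ 0) (hq : q ≠ 0) (hr : r ≠ 0) (hs : s ≠ 0) (hap : p ≠ a) (hbq : q ≠ b) (hbr : r ≠ b)
    (has : s ≠ a) (hdet : ∀ x, a x * q x * r x + p x * b x * s x + a x * b x * t x = 0) :
    ∃ α β γ δ : ZMod 2, ∀ x, t x = α * r x + β * s x + γ * p x + δ * q x +
      α * δ * b x + β * γ * a x := by
  by_cases hab : a = b
  · subst hab
    obtain ⟨m, hm⟩ := functional_ne_zero ha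
    have hne : ∀ (f : X →ₗ[ZMod 2] ZMod 2) (k : ZMod 2), f ≠ 0 → f ≠ a → f + k • a ≠ 0 := by
      intro f k hf hfa
      rcases zmod2_cases k with rfl | rfl
      · simpa using hf
      · rw [one_smul, Ne, add_eq_zero_iff_eq_two]
        exact hfa
    have hdm := hdet m
    obtain ⟨α, β, γ, δ, h0, hquad⟩ := functional_quadratic (p := p + p m • a) (q := q + q m • a)
      (r := r + r m • a) (s := s + s m • a)
      (t := t + q m • (r + r m • a) + r m • (q + q m • a) + p m • (s + s m • a) +
        s m • (p + p m • a) + t m • a)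
      (hne _ _ hp hap) (hne _ _ hq hbq) (hne _ _ hr hbr) (hne _ _ hs has) (fun x => by
        have hdx := hdet x
        have hdxm := hdet (x + m)
        simp only [map_add, LinearMap.add_apply, LinearMap.smul_apply, smul_eq_mul] at hdxm ⊢
        rw [hm] at hdm hdxm
        clear hdet
        revert hdm hdx hdxm
        generalize a x = a'
        generalize p x = p'
        generalize q x = q'
        generalize r x = r'
        generalize s x = s'
        generalize t x = t'
        generalize p m = p0
        generalize q m = q0
        generalize r m = r0
        generalize s m = s0
        generalize t m = t0
        intro hdm hdx hdxm
        have two : (2 : ZMod 2) = 0 := by decide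
        rcases zmod2_cases a' with rfl | rfl
        · linear_combination hdxm - hdm + two * (-(r' * q') - s' * p')
        · linear_combination hdx - hdm + two * (q0 * r0 - r' * q' + p0 * s0 - s' * p' + t0))
    refine ⟨α + q m, β + p m, γ + s m, δ + r m, fun x => ?_⟩
    have hx := hquad x
    simp only [LinearMap.add_apply, LinearMap.smul_apply, smul_eq_mul] at hx
    rw [hm] at hdm
    have two : (2 : ZMod 2) = 0 := by decide
    linear_combination hx - a x * h0 - a x * hdm - two * (r x * q m + r m * a x * q m + r m * q x +
      a x * s m * p m + s x * p m + s m * p x)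
  · obtain ⟨μ, hμ⟩ := functional_sum_of_ker ha hab hq hbq hr hbr (fun x hx => by
      simpa [hx] using hdet x)
    obtain ⟨ν, hν⟩ := functional_sum_of_ker hb (Ne.symm hab) hp hap hs has (fun x hx => by
      have := hdet x
      rw [hx] at this
      linear_combination this)
    have hg : ∃ κ : ZMod 2, ∀ x, t x + μ * r x + ν * s x = κ * (a x + b x) := by
      by_cases hg0 : t + μ • r + ν • s = 0
      · exact ⟨0, fun x => by rw [zero_mul]; exact LinearMap.congr_fun hg0 x⟩
      · refine ⟨1, fun x => ?_⟩
        have h3 := functional_mul_mul_eq_zero ha hb hg0 (fun x => by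
          have h1 := hdet x
          have h2 := hμ x
          have h3 := hν x
          simp only [LinearMap.add_apply, LinearMap.smul_apply, smul_eq_mul]
          have two : (2 : ZMod 2) = 0 := by decide
          rcases zmod2_cases (a x) with h4 | h4
          · rw [h4, zero_mul, zero_mul]
          rcases zmod2_cases (b x) with h5 | h5
          · rw [h5, mul_zero, zero_mul]
          rw [h4, h5] at h1 h2 h3 ⊢
          linear_combination h1 - r x * h2 - s x * h3 + two * (r x + s x) +
            zmod2_mul_self (r x) + zmod2_mul_self (s x)) x
        simp only [LinearMap.add_apply, LinearMap.smul_apply, smul_eq_mul] at h3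
        rw [one_mul, ← add_eq_zero_iff_eq_two, ← h3]
        ring
    obtain ⟨κ, hκ⟩ := hg
    refine ⟨μ, ν + κ, κ, 0, fun x => ?_⟩
    have h1 := hκ x
    have h2 := hν x
    have h3 := hμ x
    have two : (2 : ZMod 2) = 0 := by decide
    have hsq : κ * κ = κ := zmod2_mul_self κ
    linear_combination h1 - κ * h2 - a x * hsq + two * (-(κ * a x * ν) + κ * b x - μ * r x - ν * s x)

/-- Classification of the singular zero-diagonal matrices `!![0, a, b; c, 0, d; e, f, 0]` whose
determinant `ade + bcf` vanishes identically, in the generic case where `ade` does not vanish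
identically: then `a, d, e` are independent, and `b, c, f` are given by `e, a, d`, where at most one
of them is to be replaced by `a + d + e`. -/
theorem zero_diagonal_generic {a b c d e f : X →ₗ[ZMod 2] ZMod 2}
    (hab : b ≠ a) (hcd : c ≠ d) (hef : f ≠ e) (hce : c ≠ e) (haf : f ≠ a) (hbd : b ≠ d)
    (hdet : ∀ x, a x * d x * e x = b x * c x * f x) {x₀ : X} (hx₀ : a x₀ * d x₀ * e x₀ = 1) :
    (∀ u v w : ZMod 2, ∃ x, a x = u ∧ d x = v ∧ e x = w) ∧ ∃ k₁ k₂ k₃ : ZMod 2,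
      (k₁ = 0 ∧ k₂ = 0 ∧ k₃ = 0 ∨ k₁ = 1 ∧ k₂ = 0 ∧ k₃ = 0 ∨ k₁ = 0 ∧ k₂ = 1 ∧ k₃ = 0 ∨
        k₁ = 0 ∧ k₂ = 0 ∧ k₃ = 1) ∧
      ∀ x, b x = e x + k₁ * (a x + d x) ∧ c x = a x + k₂ * (d x + e x) ∧
        f x = d x + k₃ * (a x + e x) := by
  have split : ∀ p q r : ZMod 2, p * q * r = 1 → p = 1 ∧ q = 1 ∧ r = 1 := by decide
  obtain ⟨ha₀, hd₀, he₀⟩ := split _ _ _ hx₀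
  obtain ⟨hb₀, hc₀, hf₀⟩ := split _ _ _ ((hdet x₀).symm.trans hx₀)
  have hy : ∀ y, a y = 0 → d y = 0 → e y = 0 → b y = 0 ∧ c y = 0 ∧ f y = 0 := by
    intro y h1 h2 h3
    have := hdet (x₀ + y)
    simp only [map_add, ha₀, hd₀, he₀, hb₀, hc₀, hf₀, h1, h2, h3] at this
    have := split _ _ _ (this.symm.trans (by decide))
    simpa using this
  -- A functional in the span of `a, d, e` that takes the value one at `x₀` is the sum of an odd
  -- number of them.
  have odd : ∀ g : X →ₗ[ZMod 2] ZMod 2, g x₀ = 1 →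
      (∀ y, a y = 0 → d y = 0 → e y = 0 → g y = 0) →
      g = a ∨ g = d ∨ g = e ∨ g = a + d + e := by
    intro g hg hs
    obtain ⟨α, β, γ, h⟩ := functional_mem_span hs
    have h0 := h x₀
    rw [hg, ha₀, hd₀, he₀] at h0
    have hg : g = α • a + β • d + γ • e := LinearMap.ext h
    rcases zmod2_cases α with rfl | rfl <;> rcases zmod2_cases β with rfl | rfl <;>
      rcases zmod2_cases γ with rfl | rfl <;>
      first | (exact absurd h0 (by decide)) | (rw [hg]; simp)
  have hb : b = e ∨ b = a + d + e := by
    have := odd b hb₀ fun y h1 h2 h3 => (hy y h1 h2 h3).1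
    tauto
  have hc : c = a ∨ c = a + d + e := by
    have := odd c hc₀ fun y h1 h2 h3 => (hy y h1 h2 h3).2.1
    tauto
  have hf : f = d ∨ f = a + d + e := by
    have := odd f hf₀ fun y h1 h2 h3 => (hy y h1 h2 h3).2.2
    tauto
  have self (g : X →ₗ[ZMod 2] ZMod 2) : g + g = 0 := ZModModule.add_self g
  have had : a ≠ d := by
    rintro rfl
    rcases hc with rfl | rfl
    · exact hcd rfl
    · exact hce (by rw [self, zero_add])
  have hae : a ≠ e := by
    rintro rfl
    rcases hb with rfl | rfl
    · exact hab rfl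
    · exact hbd (by rw [add_right_comm, self, zero_add])
  have hde : d ≠ e := by
    rintro rfl
    rcases hb with rfl | rfl
    · exact hbd rfl
    · exact hab (by rw [add_assoc, self, add_zero])
  have ne (g : X →ₗ[ZMod 2] ZMod 2) (hg : g x₀ = 1) : g ≠ 0 := by
    rintro rfl
    rw [LinearMap.zero_apply] at hg
    exact absurd hg (by decide)
  have hsurj : ∀ u v w : ZMod 2, ∃ x, a x = u ∧ d x = v ∧ e x = w :=
    functional_surjective_three (ne a ha₀) (ne d hd₀) (ne e he₀) had hae hde (by
      rintro rfl
      rw [LinearMap.add_apply, ha₀, hd₀] at he₀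
      exact absurd he₀ (by decide))
  have hb' : ∃ k : ZMod 2, ∀ x, b x = e x + k * (a x + d x) := by
    rcases hb with h | h
    · exact ⟨0, fun x => by rw [h]; ring⟩
    · exact ⟨1, fun x => by rw [h, LinearMap.add_apply, LinearMap.add_apply]; ring⟩
  have hc' : ∃ k : ZMod 2, ∀ x, c x = a x + k * (d x + e x) := by
    rcases hc with h | h
    · exact ⟨0, fun x => by rw [h]; ring⟩
    · exact ⟨1, fun x => by rw [h, LinearMap.add_apply, LinearMap.add_apply]; ring⟩
  have hf' : ∃ k : ZMod 2, ∀ x, f x = d x + k * (a x + e x) := by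
    rcases hf with h | h
    · exact ⟨0, fun x => by rw [h]; ring⟩
    · exact ⟨1, fun x => by rw [h, LinearMap.add_apply, LinearMap.add_apply]; ring⟩
  obtain ⟨k₁, h₁⟩ := hb'
  obtain ⟨k₂, h₂⟩ := hc'
  obtain ⟨k₃, h₃⟩ := hf'
  refine ⟨hsurj, k₁, k₂, k₃, ?_, fun x => ⟨h₁ x, h₂ x, h₃ x⟩⟩
  have hall : ∀ u v w : ZMod 2,
      u * v * w = (w + k₁ * (u + v)) * (u + k₂ * (v + w)) * (v + k₃ * (u + w)) := by
    intro u v w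
    obtain ⟨x, rfl, rfl, rfl⟩ := hsurj u v w
    rw [hdet, h₁, h₂, h₃]
  clear h₁ h₂ h₃
  revert k₁ k₂ k₃
  decide

/-- Classification of the singular zero-diagonal matrices `!![0, a, b; c, 0, d; e, f, 0]` in the
case where both terms `ade` and `bcf` of the determinant vanish identically. -/
theorem zero_diagonal_special {a b c d e f : X →ₗ[ZMod 2] ZMod 2}
    (ha : a ≠ 0) (hb : b ≠ 0) (hc : c ≠ 0) (hd : d ≠ 0) (he : e ≠ 0) (hf : f ≠ 0)
    (hab : b ≠ a) (hcd : c ≠ d) (hef : f ≠ e) (hce : c ≠ e) (haf : f ≠ a) (hbd : b ≠ d)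
    (hsym : ¬ (a = c ∧ d = f))
    (h₁ : ∀ x, a x * d x * e x = 0) (h₂ : ∀ x, b x * c x * f x = 0) :
    e = a + d ∧ b = c + f ∧
      ((∀ u v w z : ZMod 2, ∃ x, a x = u ∧ d x = v ∧ c x = w ∧ f x = z) ∨
      (c = a ∧ ∀ u v w : ZMod 2, ∃ x, a x = u ∧ d x = v ∧ f x = w) ∨
      (f = d ∧ ∀ u v w : ZMod 2, ∃ x, a x = u ∧ c x = v ∧ d x = w) ∨
      (f = a + d + c ∧ ∀ u v w : ZMod 2, ∃ x, a x = u ∧ d x = v ∧ c x = w)) := by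
  have h₁' : a + d + e = 0 := LinearMap.ext (functional_mul_mul_eq_zero ha hd he h₁)
  have h₂' : b + c + f = 0 := LinearMap.ext (functional_mul_mul_eq_zero hb hc hf h₂)
  rw [add_eq_zero_iff_eq_two] at h₁'
  rw [add_assoc, add_eq_zero_iff_eq_two] at h₂'
  refine ⟨h₁'.symm, h₂', ?_⟩
  subst h₁' h₂'
  have swap : ∀ g h k : X →ₗ[ZMod 2] ZMod 2, g + h = k ↔ g = k + h := fun g h k => by
    rw [← add_eq_zero_iff_eq_two, ← add_eq_zero_iff_eq_two (g) (k + h), add_assoc, add_comm h k]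
  by_cases h1 : c = a
  · refine Or.inr (Or.inl ⟨h1, ?_⟩)
    subst h1
    refine functional_surjective_three ha hd hf hcd haf.symm (fun h => hsym ⟨rfl, h⟩) hef
  by_cases h2 : f = d
  · refine Or.inr (Or.inr (Or.inl ⟨h2, ?_⟩))
    subst h2
    refine functional_surjective_three ha hc hd (Ne.symm h1) haf.symm hcd ?_
    intro h
    rw [eq_comm, add_comm, swap, add_comm] at h
    exact hce h
  by_cases h3 : f = a + d + c
  · refine Or.inr (Or.inr (Or.inr ⟨h3, ?_⟩))
    refine functional_surjective_three ha hd hc ?_ (Ne.symm h1) hcd.symm hce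
    rintro rfl
    exact he (ZModModule.add_self a)
  left
  intro u v w z
  obtain ⟨x, hx⟩ := functional_surjective ![a, d, c, f] (fun k hk => by
    simp only [Fin.sum_univ_four, Matrix.cons_val_zero, Matrix.cons_val_one,
      Matrix.cons_val] at hk
    have e : k 0 • a + k 1 • d + k 2 • c + k 3 • f = 0 := LinearMap.ext hk
    have e' : k 0 = 0 ∧ k 1 = 0 ∧ k 2 = 0 ∧ k 3 = 0 := by
      have sep {g h : X →ₗ[ZMod 2] ZMod 2} (hgh : h ≠ g) : g + h ≠ 0 := fun H =>
        hgh ((add_eq_zero_iff_eq_two _ _).mp H).symm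
      have nac := sep h1
      have ndf := sep h2
      have nall := sep h3
      have nadc := sep hce
      have nadf := sep hef
      have naf := sep haf
      have ndc := sep hcd
      have nacf := sep hab
      have ndcf := sep hbd
      rw [← add_assoc] at nacf ndcf
      rcases zmod2_cases (k 0) with k0 | k0 <;> rcases zmod2_cases (k 1) with k1 | k1 <;>
        rcases zmod2_cases (k 2) with k2 | k2 <;> rcases zmod2_cases (k 3) with k3 | k3 <;>
        simp only [k0, k1, k2, k3, zero_smul, one_smul, zero_add, add_zero] at e
      all_goals first
        | exact ⟨k0, k1, k2, k3⟩
        | contradiction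
    ext i
    fin_cases i
    exacts [e'.1, e'.2.1, e'.2.2.1, e'.2.2.2]) ![u, v, w, z]
  exact ⟨x, hx 0, hx 1, hx 2, hx 3⟩

end ThreeFunctionals

/-! ### Spaces with a thin vector -/

section ThinCase

/-- The `3 × 3` matrix with columns `x`, `u`, `v`. -/
def cols (x u v : Fin 3 → ZMod 2) : Matrix (Fin 3) (Fin 3) (ZMod 2) :=
  (Matrix.of ![x, u, v])ᵀ

theorem cols_mulVec (x u v k : Fin 3 → ZMod 2) :
    cols x u v *ᵥ k = k 0 • x + k 1 • u + k 2 • v := by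
  ext i
  simp [cols, mulVec, dotProduct, Fin.sum_univ_three, mul_comm]

theorem mul_cols (M : Matrix (Fin 3) (Fin 3) (ZMod 2)) (x u v : Fin 3 → ZMod 2) :
    M * cols x u v = cols (M *ᵥ x) (M *ᵥ u) (M *ᵥ v) := by
  ext i j
  fin_cases j <;> simp [cols, mul_apply, mulVec, dotProduct]

/-- If `x` is a nonzero vector of the kernel of `L` and `L u`, `L v` are independent, then
`x`, `u`, `v` form a basis. -/
theorem isUnit_cols {T : Type*} [AddCommGroup T] [Module (ZMod 2) T]
    (L : (Fin 3 → ZMod 2) →ₗ[ZMod 2] T) {x u v : Fin 3 → ZMod 2} (hx : x ≠ 0) (hLx : L x = 0)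
    (hu : L u ≠ 0) (hv : L v ≠ 0) (huv : L u ≠ L v) : IsUnit (cols x u v) := by
  rw [← mulVec_injective_iff_isUnit]
  refine (injective_iff_map_eq_zero (mulVecLin (cols x u v))).2 fun k hk => ?_
  rw [mulVecLin_apply, cols_mulVec] at hk
  have h := congrArg L hk
  rw [map_add, map_add, map_smul, map_smul, map_smul, hLx, smul_zero, zero_add, map_zero] at h
  obtain ⟨h1, h2⟩ := indep_pair hu hv huv h
  rw [h1, h2, zero_smul, zero_smul, add_zero, add_zero, smul_eq_zero] at hk
  ext i
  fin_cases i
  exacts [hk.resolve_right hx, h1, h2]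

theorem mem_twist {n p : ℕ} {V : Submodule (ZMod 2) (Matrix (Fin n) (Fin p) (ZMod 2))}
    {P : Matrix (Fin n) (Fin n) (ZMod 2)} {Q : Matrix (Fin p) (Fin p) (ZMod 2)}
    {N : Matrix (Fin n) (Fin p) (ZMod 2)} :
    N ∈ twist P Q V ↔ ∃ M ∈ V, P * M * Q = N := Iff.rfl

variable {V : Submodule (ZMod 2) (Matrix (Fin 3) (Fin 3) (ZMod 2))}

/-- A primitive space of upper rank two with a thin vector is triangular of trace zero in suitable
bases: modulo the line `{0, w}` the space is a space of `2 × 2` matrices in which those taking the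
value `w` at the thin vector are singular, and `triangularize` applies. -/
theorem MatCore.exists_le_J3 (h : MatCore V) (hthin : HasThin (opOf V)) :
    ∃ W ≤ J3, MatEquiv (ZMod 2) V W := by
  obtain ⟨x, hx, w, hxw⟩ := hthin
  have hw : w ≠ 0 := by
    rintro rfl
    exact hx (h.core.inj x fun m => by simpa using hxw m)
  obtain ⟨M₁, hM₁⟩ : ∃ m, opOf V m x = w := by
    by_contra! hn
    exact hx (h.core.inj x fun m => (hxw m).resolve_right (hn m))
  obtain ⟨N, u, v, hs, ht, hst⟩ := h.core.exists_rank_two_mod (by simp) w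
  obtain ⟨g, hg⟩ := exists_dual_one hw
  have ha (m : V) (hm : g (opOf V m x) = 1) : opOf V m x = w := by
    rcases hxw m with h' | h'
    · rw [h', map_zero] at hm
      exact absurd hm (by decide)
    · exact h'
  obtain ⟨α, β, γ, δ, hdet, htri⟩ := triangularize ((modVec (opOf V) w).flip u)
    ((modVec (opOf V) w).flip v) (g ∘ₗ (opOf V).flip x)
    (fun m hm => modVec_rankLeOne h.core.rank hw (ha m hm) u v)
    (N := N) (M := M₁) (by rw [LinearMap.comp_apply, LinearMap.flip_apply, hM₁, hg]) hs ht hst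
  simp only [LinearMap.flip_apply, ← map_smul, ← map_add, LinearMap.comp_apply] at htri
  have key (c d : ZMod 2) (hcd : c ≠ 0 ∨ d ≠ 0) :
      modVec (opOf V) w N (c • u + d • v) ≠ 0 := fun h0 => by
    rw [map_add, map_smul, map_smul] at h0
    obtain ⟨h1, h2⟩ := indep_pair hs ht hst h0
    tauto
  have hu' : modVec (opOf V) w N (α • u + β • v) ≠ 0 := key _ _ (by
    clear htri; revert α β γ δ; decide)
  have hv' : modVec (opOf V) w N (γ • u + δ • v) ≠ 0 := key _ _ (by
    clear htri hu'; revert α β γ δ; decide)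
  have huv' : modVec (opOf V) w N (α • u + β • v) ≠ modVec (opOf V) w N (γ • u + δ • v) := by
    intro h0
    have h1 : modVec (opOf V) w N ((α + γ) • u + (β + δ) • v) = 0 := by
      rw [← add_eq_zero_iff_eq_two, ← map_add] at h0
      rw [← h0]
      congr 1
      module
    exact key _ _ (by clear htri hu' hv' h0 h1; revert α β γ δ; decide) h1
  set u' := α • u + β • v
  set v' := γ • u + δ • v
  have hQ : IsUnit (cols x u' v') := isUnit_cols (modVec (opOf V) w N) hx
    (modVec_eq_zero_iff.2 (hxw N)) hu' hv' huv'
  have hB : IsUnit (cols w (N.1 *ᵥ u') (N.1 *ᵥ v')) :=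
    isUnit_cols (Submodule.span (ZMod 2) {w}).mkQ hw (mkQ_eq_zero_iff.2 (Or.inr rfl)) hu' hv' huv'
  have lift {y z : Fin 3 → ZMod 2} (hyz : (Submodule.span (ZMod 2) {w}).mkQ y =
      (Submodule.span (ZMod 2) {w}).mkQ z) : ∃ k : ZMod 2, y = k • w + z := by
    rw [← sub_eq_zero, ← map_sub, mkQ_eq_zero_iff, sub_eq_zero, sub_eq_iff_eq_add] at hyz
    rcases hyz with rfl | rfl
    · exact ⟨0, by simp⟩
    · exact ⟨1, by simp⟩
  have hB' : IsUnit (cols w (N.1 *ᵥ u') (N.1 *ᵥ v'))⁻¹ := by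
    rwa [isUnit_nonsing_inv_iff]
  refine ⟨twist (cols w (N.1 *ᵥ u') (N.1 *ᵥ v'))⁻¹ (cols x u' v') V, ?_, matEquiv_twist hB' hQ⟩
  rintro _ ⟨M, hM, rfl⟩
  obtain ⟨p, q, r, h1, h2, h3⟩ := htri ⟨M, hM⟩
  obtain ⟨a, ha⟩ : ∃ a : ZMod 2, M *ᵥ x = a • w := by
    rcases hxw ⟨M, hM⟩ with h' | h'
    · exact ⟨0, by simpa using h'⟩
    · exact ⟨1, by simpa using h'⟩
  have hga : g (opOf V ⟨M, hM⟩ x) = a := by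
    rw [opOf_apply, ha, map_smul, hg, smul_eq_mul, mul_one]
  rw [hga] at h3
  obtain ⟨k, hk⟩ : ∃ k : ZMod 2, M *ᵥ u' = k • w + p • N.1 *ᵥ u' := by
    refine lift ?_
    rw [map_smul] at h1 ⊢
    exact h1
  obtain ⟨l, hl⟩ : ∃ l : ZMod 2, M *ᵥ v' = l • w + (r • N.1 *ᵥ u' + q • N.1 *ᵥ v') := by
    refine lift ?_
    rw [map_add, map_smul, map_smul]
    exact h2.trans (by rw [map_add, map_smul, map_smul]; rfl)
  have e : M * cols x u' v' =
      cols w (N.1 *ᵥ u') (N.1 *ᵥ v') * cols ![a, 0, 0] ![k, p, 0] ![l, r, q] := by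
    rw [mul_cols, mul_cols, cols_mulVec, cols_mulVec, cols_mulVec, ha, hk, hl]
    simp [add_assoc]
  change _ * M * _ ∈ J3
  rw [Matrix.mul_assoc, e, ← Matrix.mul_assoc, nonsing_inv_mul _ ((isUnit_iff_isUnit_det _).1 hB),
    Matrix.one_mul]
  refine ⟨by simpa [trace_fin_three, cols] using h3, ?_⟩
  intro i j hij
  fin_cases i <;> fin_cases j <;> first | rfl | exact absurd hij (by decide)

end ThinCase

/-! ### Equivalence of matrix spaces -/

section Equivalence

variable {n p : ℕ} {V W T : Submodule (ZMod 2) (Matrix (Fin n) (Fin p) (ZMod 2))}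

theorem matEquiv_iff : MatEquiv (ZMod 2) V W ↔
    ∃ (P : Matrix (Fin n) (Fin n) (ZMod 2)) (Q : Matrix (Fin p) (Fin p) (ZMod 2)),
      IsUnit P ∧ IsUnit Q ∧ ∀ N, N ∈ W ↔ ∃ M ∈ V, P * M * Q = N := by
  constructor
  · rintro ⟨P, Q, hP, hQ, h⟩
    exact ⟨P, Q, hP, hQ, fun N => Set.ext_iff.1 h N⟩
  · rintro ⟨P, Q, hP, hQ, h⟩
    exact ⟨P, Q, hP, hQ, Set.ext h⟩

theorem matEquiv_symm (h : MatEquiv (ZMod 2) V W) : MatEquiv (ZMod 2) W V := by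
  obtain ⟨P, Q, hP, hQ, h⟩ := matEquiv_iff.1 h
  have hP' := (isUnit_iff_isUnit_det _).1 hP
  have hQ' := (isUnit_iff_isUnit_det _).1 hQ
  have e : ∀ M : Matrix (Fin n) (Fin p) (ZMod 2), P⁻¹ * (P * M * Q) * Q⁻¹ = M := fun M => by
    rw [Matrix.mul_assoc P, nonsing_inv_mul_cancel_left _ _ hP', mul_nonsing_inv_cancel_right _ _ hQ']
  refine matEquiv_iff.2 ⟨P⁻¹, Q⁻¹, (isUnit_nonsing_inv_iff).2 hP, (isUnit_nonsing_inv_iff).2 hQ,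
    fun N => ⟨fun hN => ⟨P * N * Q, (h _).2 ⟨N, hN, rfl⟩, e N⟩, ?_⟩⟩
  rintro ⟨M, hM, rfl⟩
  obtain ⟨L, hL, rfl⟩ := (h M).1 hM
  rwa [e]

theorem matEquiv_trans (h₁ : MatEquiv (ZMod 2) V W) (h₂ : MatEquiv (ZMod 2) W T) :
    MatEquiv (ZMod 2) V T := by
  obtain ⟨P, Q, hP, hQ, h₁⟩ := matEquiv_iff.1 h₁
  obtain ⟨P', Q', hP', hQ', h₂⟩ := matEquiv_iff.1 h₂
  refine matEquiv_iff.2 ⟨P' * P, Q * Q', hP'.mul hP, hQ.mul hQ', fun N => ?_⟩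
  simp only [h₂, h₁, ← Matrix.mul_assoc]
  constructor
  · rintro ⟨_, ⟨M, hM, rfl⟩, rfl⟩
    exact ⟨M, hM, by simp only [← Matrix.mul_assoc]⟩
  · rintro ⟨M, hM, rfl⟩
    exact ⟨_, ⟨M, hM, rfl⟩, by simp only [← Matrix.mul_assoc]⟩

/-- Having a thin vector is invariant under equivalence. -/
theorem hasThin_of_matEquiv (h : MatEquiv (ZMod 2) V W) (hV : HasThin (opOf V)) :
    HasThin (opOf W) := by
  obtain ⟨P, Q, hP, hQ, h⟩ := matEquiv_iff.1 h
  have hQ' := (isUnit_iff_isUnit_det _).1 hQ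
  obtain ⟨x, hx, w, hxw⟩ := hV
  have hQx : Q *ᵥ (Q⁻¹ *ᵥ x) = x := by rw [mulVec_mulVec, mul_nonsing_inv _ hQ', one_mulVec]
  refine ⟨Q⁻¹ *ᵥ x, fun h0 => hx ?_, P *ᵥ w, ?_⟩
  · rw [← hQx, h0, mulVec_zero]
  · rintro ⟨N, hN⟩
    obtain ⟨M, hM, rfl⟩ := (h N).1 hN
    rw [opOf_apply, ← mulVec_mulVec, hQx, ← mulVec_mulVec]
    rcases hxw ⟨M, hM⟩ with h1 | h1 <;> rw [opOf_apply] at h1 <;> simp only at h1 <;> rw [h1]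
    · exact Or.inl (mulVec_zero _)
    · exact Or.inr rfl

end Equivalence

/-! ### Spaces without thin vector -/

section Tame

variable {V W : Submodule (ZMod 2) (Matrix (Fin 3) (Fin 3) (ZMod 2))}

/-- The properties of a primitive `3 × 3` space of upper rank two without thin vector used in its
classification: its matrices are singular, and the relation that `f (M x) = 0` for all `M`, between
nonzero functionals `f` and nonzero vectors `x`, is a partial matching. -/
structure Tame (V : Submodule (ZMod 2) (Matrix (Fin 3) (Fin 3) (ZMod 2))) : Prop where
  det : ∀ M ∈ V, M.det = 0
  row : ∀ f x y, f ≠ 0 → x ≠ 0 → y ≠ 0 → (∀ M ∈ V, f ⬝ᵥ M *ᵥ x = 0) →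
    (∀ M ∈ V, f ⬝ᵥ M *ᵥ y = 0) → x = y
  col : ∀ x f g, x ≠ 0 → f ≠ 0 → g ≠ 0 → (∀ M ∈ V, f ⬝ᵥ M *ᵥ x = 0) →
    (∀ M ∈ V, g ⬝ᵥ M *ᵥ x = 0) → f = g

theorem det_eq_zero_of_rank {M : Matrix (Fin 3) (Fin 3) (ZMod 2)} (h : M.rank ≤ 2) : M.det = 0 := by
  by_contra h0
  have := rank_of_isUnit M ((isUnit_iff_isUnit_det M).2 (isUnit_iff_ne_zero.2 h0))
  rw [Fintype.card_fin] at this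
  omega

theorem exists_isUnit_cols {a b : Fin 3 → ZMod 2} (ha : a ≠ 0) (hb : b ≠ 0) (hab : a ≠ b) :
    ∃ c, IsUnit (cols a b c) := by
  obtain ⟨c, hc⟩ : ∃ c, c ∉ ({0, a, b, a + b} : Finset (Fin 3 → ZMod 2)) := by
    by_contra! hn
    have h1 : Finset.univ.card ≤ ({0, a, b, a + b} : Finset (Fin 3 → ZMod 2)).card :=
      Finset.card_le_card fun c _ => hn c
    have h2 := h1.trans Finset.card_le_four
    rw [Finset.card_univ, Fintype.card_fun, ZMod.card, Fintype.card_fin] at h2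
    omega
  simp only [Finset.mem_insert, Finset.mem_singleton, not_or] at hc
  refine ⟨c, isUnit_cols (Submodule.span (ZMod 2) {a}).mkQ ha (mkQ_eq_zero_iff.2 (Or.inr rfl)) ?_ ?_ ?_⟩
  · rw [Ne, mkQ_eq_zero_iff]
    tauto
  · rw [Ne, mkQ_eq_zero_iff]
    tauto
  · rw [Ne, ← add_eq_zero_iff_eq_two, ← map_add, mkQ_eq_zero_iff, add_eq_zero_iff_eq_two]
    rintro (h | h)
    · exact hc.2.2.1 h.symm
    · refine hc.2.2.2 ?_
      rw [← h, add_right_comm, ZModModule.add_self, zero_add]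

theorem transpose_cols_mulVec (f g h y : Fin 3 → ZMod 2) :
    (cols f g h)ᵀ *ᵥ y = ![f ⬝ᵥ y, g ⬝ᵥ y, h ⬝ᵥ y] := by
  ext i
  fin_cases i <;> rfl

/-- The vectors orthogonal to two distinct nonzero vectors of `F2 ^ 3` lie on a line. -/
theorem exists_common_orthogonal {f g : Fin 3 → ZMod 2} (hf : f ≠ 0) (hg : g ≠ 0) (hfg : f ≠ g) :
    ∃ w, ∀ y, f ⬝ᵥ y = 0 → g ⬝ᵥ y = 0 → y = 0 ∨ y = w := by
  obtain ⟨c, hc⟩ := exists_isUnit_cols hf hg hfg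
  have hA := mulVec_injective_of_isUnit ((isUnit_transpose _).2 hc)
  have hA' : ∀ v, ∃ w, (cols f g c)ᵀ *ᵥ w = v :=
    (mulVec_surjective_iff_isUnit.2 ((isUnit_transpose _).2 hc))
  obtain ⟨w, hw⟩ := hA' ![0, 0, 1]
  refine ⟨w, fun y h1 h2 => ?_⟩
  have hy := transpose_cols_mulVec f g c y
  rw [h1, h2] at hy
  rcases zmod2_cases (c ⬝ᵥ y) with h | h <;> rw [h] at hy
  · refine Or.inl (hA (hy.trans ?_))
    rw [mulVec_zero]
    decide
  · exact Or.inr (hA (hy.trans hw.symm))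

/-- Two functionals annihilating all values at the same vector would make that vector thin. -/
theorem MatCore.tame (h : MatCore V) (hthin : ¬ HasThin (opOf V)) : Tame V where
  det M hM := det_eq_zero_of_rank (h.rank M hM)
  row f x y hf hx hy hfx hfy :=
    eq_of_functional h.core.rank h.core.span hthin (f := dotProductEquiv (ZMod 2) (Fin 3) f)
      ((LinearEquiv.map_ne_zero_iff _).2 hf) hx hy (fun M => hfx M.1 M.2) (fun M => hfy M.1 M.2)
  col x f g hx hf hg hfx hgx := by
    by_contra hfg
    obtain ⟨w, hw⟩ := exists_common_orthogonal hf hg hfg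
    exact hthin ⟨x, hx, w, fun M => hw _ (hfx M.1 M.2) (hgx M.1 M.2)⟩

theorem Tame.of_matEquiv (hV : Tame V) (h : MatEquiv (ZMod 2) V W) : Tame W := by
  obtain ⟨P, Q, hP, hQ, h⟩ := matEquiv_iff.1 h
  have inj := mulVec_injective_of_isUnit hQ
  have inj' := vecMul_injective_of_isUnit hP
  have ne {x : Fin 3 → ZMod 2} (hx : x ≠ 0) : Q *ᵥ x ≠ 0 := fun h0 =>
    hx (inj (h0.trans (mulVec_zero Q).symm))
  have ne' {f : Fin 3 → ZMod 2} (hf : f ≠ 0) : f ᵥ* P ≠ 0 := fun h0 =>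
    hf (inj' (h0.trans (zero_vecMul P).symm))
  have pair {f x : Fin 3 → ZMod 2} (hfx : ∀ N ∈ W, f ⬝ᵥ N *ᵥ x = 0) :
      ∀ M ∈ V, (f ᵥ* P) ⬝ᵥ M *ᵥ (Q *ᵥ x) = 0 := fun M hM => by
    rw [← hfx _ ((h _).2 ⟨M, hM, rfl⟩), ← dotProduct_mulVec, mulVec_mulVec, mulVec_mulVec,
      Matrix.mul_assoc]
  refine ⟨fun N hN => ?_, fun f x y hf hx hy hfx hfy => ?_, fun x f g hx hf hg hfx hgx => ?_⟩
  · obtain ⟨M, hM, rfl⟩ := (h N).1 hN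
    rw [det_mul, det_mul, hV.det M hM, mul_zero, zero_mul]
  · exact inj (hV.row _ _ _ (ne' hf) (ne hx) (ne hy) (pair hfx) (pair hfy))
  · exact inj' (hV.col _ _ _ (ne hx) (ne' hf) (ne' hg) (pair hfx) (pair hgx))

/-- The `(i, j)` entry as a linear functional on a matrix space. -/
def entry (V : Submodule (ZMod 2) (Matrix (Fin 3) (Fin 3) (ZMod 2))) (i j : Fin 3) :
    V →ₗ[ZMod 2] ZMod 2 :=
  entryLinearMap (ZMod 2) (ZMod 2) i j ∘ₗ V.subtype

@[simp]
theorem entry_apply (i j : Fin 3) (M : V) : entry V i j M = M.1 i j := rfl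

theorem single_ne_zero' (i : Fin 3) : (Pi.single i 1 : Fin 3 → ZMod 2) ≠ 0 := by
  revert i; decide

theorem Tame.row_ne_zero (hV : Tame V) {i j k : Fin 3} (hjk : j ≠ k) (h : ∀ M ∈ V, M i j = 0) :
    entry V i k ≠ 0 := fun h0 => by
  refine absurd (hV.row (Pi.single i 1) (Pi.single j 1) (Pi.single k 1) (single_ne_zero' i)
    (single_ne_zero' j) (single_ne_zero' k) (fun M hM => ?_) (fun M hM => ?_))
    (by clear h0 h; revert j k; decide)
  · simpa using h M hM
  · simpa using LinearMap.congr_fun h0 ⟨M, hM⟩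

theorem Tame.row_ne (hV : Tame V) {i j k l : Fin 3} (hd : j ≠ k ∧ j ≠ l ∧ k ≠ l)
    (h : ∀ M ∈ V, M i j = 0) : entry V i k ≠ entry V i l := fun h0 => by
  refine absurd (hV.row (Pi.single i 1) (Pi.single j 1) (Pi.single k 1 + Pi.single l 1)
    (single_ne_zero' i) (single_ne_zero' j) (by clear h0 h; revert j k l; decide) (fun M hM => ?_)
    (fun M hM => ?_)) (by clear h0 h; revert j k l; decide)
  · simpa using h M hM
  · have : M i k = M i l := LinearMap.congr_fun h0 ⟨M, hM⟩
    simp [mulVec_add, this, ZModModule.add_self]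

theorem Tame.col_ne_zero (hV : Tame V) {i j k : Fin 3} (hjk : j ≠ k) (h : ∀ M ∈ V, M j i = 0) :
    entry V k i ≠ 0 := fun h0 => by
  refine absurd (hV.col (Pi.single i 1) (Pi.single j 1) (Pi.single k 1) (single_ne_zero' i)
    (single_ne_zero' j) (single_ne_zero' k) (fun M hM => ?_) (fun M hM => ?_))
    (by clear h0 h; revert j k; decide)
  · simpa using h M hM
  · simpa using LinearMap.congr_fun h0 ⟨M, hM⟩

theorem Tame.col_ne (hV : Tame V) {i j k l : Fin 3} (hd : j ≠ k ∧ j ≠ l ∧ k ≠ l)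
    (h : ∀ M ∈ V, M j i = 0) : entry V k i ≠ entry V l i := fun h0 => by
  refine absurd (hV.col (Pi.single i 1) (Pi.single j 1) (Pi.single k 1 + Pi.single l 1)
    (single_ne_zero' i) (single_ne_zero' j) (by clear h0 h; revert j k l; decide) (fun M hM => ?_)
    (fun M hM => ?_)) (by clear h0 h; revert j k l; decide)
  · simpa using h M hM
  · have : M k i = M l i := LinearMap.congr_fun h0 ⟨M, hM⟩
    simp [add_dotProduct, this, ZModModule.add_self]

/-- A tame space with at least two matched pairs `(f₁, x₁)`, `(f₂, x₂)` is equivalent to one with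
zero diagonal: use the pairs as first basis vectors, then clear the last corner. -/
theorem Tame.exists_zero_diagonal (hV : Tame V) {f₁ f₂ x₁ x₂ : Fin 3 → ZMod 2} (hf₁ : f₁ ≠ 0)
    (hf₂ : f₂ ≠ 0) (hx₁ : x₁ ≠ 0) (hx₂ : x₂ ≠ 0) (hx : x₁ ≠ x₂) (h₁ : ∀ M ∈ V, f₁ ⬝ᵥ M *ᵥ x₁ = 0)
    (h₂ : ∀ M ∈ V, f₂ ⬝ᵥ M *ᵥ x₂ = 0) :
    ∃ W, MatEquiv (ZMod 2) V W ∧ ∀ M ∈ W, ∀ i, M i i = 0 := by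
  have hf : f₁ ≠ f₂ := by
    rintro rfl
    exact hx (hV.row _ _ _ hf₁ hx₁ hx₂ h₁ h₂)
  obtain ⟨f₃, hP⟩ := exists_isUnit_cols hf₁ hf₂ hf
  obtain ⟨x₃, hQ⟩ := exists_isUnit_cols hx₁ hx₂ hx
  obtain ⟨W, hW, h0, h1⟩ : ∃ W, MatEquiv (ZMod 2) V W ∧ (∀ M ∈ W, M 0 0 = 0) ∧
      ∀ M ∈ W, M 1 1 = 0 := by
    refine ⟨_, matEquiv_twist ((isUnit_transpose _).2 hP) hQ, ?_, ?_⟩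
    · rintro _ ⟨M, hM, rfl⟩
      change ((cols f₁ f₂ f₃)ᵀ * M * cols x₁ x₂ x₃) 0 0 = 0
      rw [Matrix.mul_assoc, mul_cols, ← h₁ M hM]
      rfl
    · rintro _ ⟨M, hM, rfl⟩
      change ((cols f₁ f₂ f₃)ᵀ * M * cols x₁ x₂ x₃) 1 1 = 0
      rw [Matrix.mul_assoc, mul_cols, ← h₂ M hM]
      rfl
  have hT := hV.of_matEquiv hW
  obtain ⟨α, β, γ, δ, ht⟩ := exists_clear_corner (a := entry W 0 1) (b := entry W 1 0)
    (p := entry W 0 2) (q := entry W 1 2) (r := entry W 2 0) (s := entry W 2 1) (t := entry W 2 2)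
    (hT.row_ne_zero (j := 0) (by decide) h0) (hT.row_ne_zero (j := 1) (by decide) h1)
    (hT.row_ne_zero (j := 0) (by decide) h0) (hT.row_ne_zero (j := 1) (by decide) h1)
    (hT.col_ne_zero (j := 0) (by decide) h0) (hT.col_ne_zero (j := 1) (by decide) h1)
    (hT.row_ne (j := 0) (by decide) h0) (hT.row_ne (j := 1) (by decide) h1)
    (hT.col_ne (j := 0) (by decide) h0) (hT.col_ne (j := 1) (by decide) h1)
    (fun M => by
      have := hT.det M.1 M.2
      rw [det_fin_three, h0 _ M.2, h1 _ M.2] at this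
      simp only [entry_apply]
      simp only [CharTwo.sub_eq_add] at this
      linear_combination this)
  have hP' : IsUnit !![1, 0, 0; 0, 1, 0; γ, δ, 1] :=
    (isUnit_iff_isUnit_det _).2 (by simp [det_fin_three])
  have hQ' : IsUnit !![1, 0, α; 0, 1, β; 0, 0, 1] :=
    (isUnit_iff_isUnit_det _).2 (by simp [det_fin_three])
  refine ⟨_, matEquiv_trans hW (matEquiv_twist hP' hQ'), ?_⟩
  rintro _ ⟨M, hM, rfl⟩ i
  have ht' := ht ⟨M, hM⟩
  simp only [entry_apply] at ht'
  change (!![1, 0, 0; 0, 1, 0; γ, δ, 1] * M * !![1, 0, α; 0, 1, β; 0, 0, 1]) i i = 0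
  fin_cases i
  · simp [mul_apply, vecMul, dotProduct, Fin.sum_univ_three, h0 M hM]
  · simp [mul_apply, vecMul, dotProduct, Fin.sum_univ_three, h1 M hM]
  · simp [mul_apply, vecMul, dotProduct, Fin.sum_univ_three, h0 M hM, h1 M hM, ht']
    rw [← ZModModule.add_self (α * M 2 0 + β * M 2 1 + γ * M 0 2 + δ * M 1 2 + α * δ * M 1 0 +
      β * γ * M 0 1)]
    ring

end Tame

/-! ### Spaces with zero diagonal -/

section ZeroDiagonal

variable {V T : Submodule (ZMod 2) (Matrix (Fin 3) (Fin 3) (ZMod 2))}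

/-- Equivalence of two spaces given by parametrizations `m` and `t`. -/
theorem matEquiv_of_param {m t : ZMod 2 → ZMod 2 → ZMod 2 → Matrix (Fin 3) (Fin 3) (ZMod 2)}
    (hm : ∀ M, M ∈ V ↔ ∃ u v w, M = m u v w) (ht : ∀ N, N ∈ T ↔ ∃ u v w, N = t u v w)
    {P Q : Matrix (Fin 3) (Fin 3) (ZMod 2)} (hP : P.det = 1) (hQ : Q.det = 1)
    (h : ∀ u v w, ∃ a b c, P * m u v w * Q = t a b c)
    (h' : ∀ a b c, ∃ u v w, P * m u v w * Q = t a b c) : MatEquiv (ZMod 2) V T := by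
  refine matEquiv_iff.2 ⟨P, Q, (isUnit_iff_isUnit_det _).2 (hP ▸ isUnit_one),
    (isUnit_iff_isUnit_det _).2 (hQ ▸ isUnit_one), fun N => ⟨fun hN => ?_, ?_⟩⟩
  · obtain ⟨a, b, c, rfl⟩ := (ht N).1 hN
    obtain ⟨u, v, w, e⟩ := h' a b c
    exact ⟨_, (hm _).2 ⟨u, v, w, rfl⟩, e⟩
  · rintro ⟨M, hM, rfl⟩
    obtain ⟨u, v, w, rfl⟩ := (hm M).1 hM
    exact (ht _).2 (h u v w)

/-- A space is parametrized by three of its entries if these take arbitrary values and determine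
the matrix. -/
theorem mem_iff_of_param {m : ZMod 2 → ZMod 2 → ZMod 2 → Matrix (Fin 3) (Fin 3) (ZMod 2)}
    {a b c : V →ₗ[ZMod 2] ZMod 2} (hs : ∀ u v w : ZMod 2, ∃ M, a M = u ∧ b M = v ∧ c M = w)
    (h : ∀ M : V, M.1 = m (a M) (b M) (c M)) (M : Matrix (Fin 3) (Fin 3) (ZMod 2)) :
    M ∈ V ↔ ∃ u v w, M = m u v w := by
  constructor
  · intro hM
    exact ⟨_, _, _, h ⟨M, hM⟩⟩
  · rintro ⟨u, v, w, rfl⟩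
    obtain ⟨M, rfl, rfl, rfl⟩ := hs u v w
    rw [← h]
    exact M.2

theorem mem_U3 (N : Matrix (Fin 3) (Fin 3) (ZMod 2)) :
    N ∈ U3 ↔ ∃ a b c : ZMod 2, N = !![0, a, a + c; a, 0, b; a + b, c, 0] := Iff.rfl

theorem ext_three {M N : Matrix (Fin 3) (Fin 3) (ZMod 2)} (hM : ∀ i, M i i = 0)
    (hN : ∀ i, N i i = 0) (h01 : M 0 1 = N 0 1) (h02 : M 0 2 = N 0 2) (h10 : M 1 0 = N 1 0)
    (h12 : M 1 2 = N 1 2) (h20 : M 2 0 = N 2 0) (h21 : M 2 1 = N 2 1) : M = N := by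
  ext i j
  fin_cases i <;> fin_cases j
  exacts [(hM 0).trans (hN 0).symm, h01, h02, h10, (hM 1).trans (hN 1).symm, h12, h20, h21,
    (hM 2).trans (hN 2).symm]

theorem mem_Mata3 (N : Matrix (Fin 3) (Fin 3) (ZMod 2)) :
    N ∈ Mata3 ↔ ∃ a b c : ZMod 2, N = !![0, a, c; a, 0, b; c, b, 0] := by
  constructor
  · rintro ⟨h1, h2⟩
    have h3 : ∀ i j, N j i = N i j := fun i j => by
      have := congrFun₂ h1 i j
      rwa [transpose_apply, neg_apply, ZModModule.neg_eq_self] at this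
    refine ⟨N 0 1, N 1 2, N 0 2, ext_three h2 (fun i => by fin_cases i <;> rfl) rfl rfl (h3 _ _) rfl
      (h3 _ _) (h3 _ _)⟩
  · rintro ⟨a, b, c, rfl⟩
    constructor
    · rw [neg_eq_of_add_eq_zero_left (ZModModule.add_self _)]
      ext i j
      fin_cases i <;> fin_cases j <;> rfl
    · intro i
      fin_cases i <;> rfl

/-- The classification of tame spaces with zero diagonal. -/
theorem Tame.zero_diagonal (hV : Tame V) (h0 : ∀ M ∈ V, ∀ i, M i i = 0) :
    MatEquiv (ZMod 2) V Mata3 ∨ MatEquiv (ZMod 2) V U3 ∨ MatEquiv (ZMod 2) V V3 := by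
  have z (i : Fin 3) : ∀ M ∈ V, M i i = 0 := fun M hM => h0 M hM i
  have ne {i j : Fin 3} (hij : i ≠ j) : entry V i j ≠ 0 := hV.row_ne_zero hij (z i)
  have hab : entry V 0 2 ≠ entry V 0 1 := hV.row_ne (j := 0) (by decide) (z 0)
  have hcd : entry V 1 0 ≠ entry V 1 2 := hV.row_ne (j := 1) (by decide) (z 1)
  have hef : entry V 2 1 ≠ entry V 2 0 := hV.row_ne (j := 2) (by decide) (z 2)
  have hce : entry V 1 0 ≠ entry V 2 0 := hV.col_ne (j := 0) (by decide) (z 0)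
  have haf : entry V 2 1 ≠ entry V 0 1 := hV.col_ne (j := 1) (by decide) (z 1)
  have hbd : entry V 0 2 ≠ entry V 1 2 := hV.col_ne (j := 2) (by decide) (z 2)
  have hdet (M : V) : entry V 0 1 M * entry V 1 2 M * entry V 2 0 M =
      entry V 0 2 M * entry V 1 0 M * entry V 2 1 M := by
    have := hV.det M.1 M.2
    rw [det_fin_three, z 0 _ M.2, z 1 _ M.2, z 2 _ M.2] at this
    rw [← add_eq_zero_iff_eq_two]
    simp only [entry_apply]
    linear_combination this
  have ext' (M : V) {N : Matrix (Fin 3) (Fin 3) (ZMod 2)} := ext_three (N := N) (h0 M.1 M.2)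
  by_cases hx : ∃ x, entry V 0 1 x * entry V 1 2 x * entry V 2 0 x = 1
  · obtain ⟨x₀, hx₀⟩ := hx
    obtain ⟨hs, k₁, k₂, k₃, hk, h⟩ := zero_diagonal_generic hab hcd hef hce haf hbd hdet hx₀
    have hm := mem_iff_of_param (m := fun u v w => !![0, u, w + k₁ * (u + v);
      u + k₂ * (v + w), 0, v; w, v + k₃ * (u + w), 0]) hs (fun M => ext' M
        (fun i => by fin_cases i <;> rfl) rfl (h M).1 (h M).2.1 rfl rfl (h M).2.2)
    rcases hk with ⟨rfl, rfl, rfl⟩ | ⟨rfl, rfl, rfl⟩ | ⟨rfl, rfl, rfl⟩ | ⟨rfl, rfl, rfl⟩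
    · exact Or.inl (matEquiv_of_param hm mem_Mata3 (P := 1) (Q := 1) (by decide) (by decide)
        (by decide) (by decide))
    · exact Or.inr (Or.inl (matEquiv_of_param hm mem_U3 (P := !![0, 0, 1; 0, 1, 1; 1, 0, 0])
        (Q := !![0, 0, 1; 0, 1, 0; 1, 1, 0]) (by decide) (by decide) (by decide) (by decide)))
    · exact Or.inr (Or.inl (matEquiv_of_param hm mem_U3 (P := !![0, 1, 0; 0, 1, 1; 1, 0, 0])
        (Q := !![0, 0, 1; 1, 1, 0; 0, 1, 0]) (by decide) (by decide) (by decide) (by decide)))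
    · exact Or.inr (Or.inl (matEquiv_of_param hm mem_U3 (P := !![0, 0, 1; 1, 0, 1; 0, 1, 0])
        (Q := !![0, 1, 0; 0, 0, 1; 1, 1, 0]) (by decide) (by decide) (by decide) (by decide)))
  · push Not at hx
    have h₁ (M : V) : entry V 0 1 M * entry V 1 2 M * entry V 2 0 M = 0 :=
      (zmod2_cases _).resolve_right (hx M)
    have hsym : ¬ (entry V 0 1 = entry V 1 0 ∧ entry V 1 2 = entry V 2 1) := by
      rintro ⟨hac, hdf⟩
      have hade : entry V 0 1 + entry V 1 2 + entry V 2 0 = 0 :=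
        LinearMap.ext (functional_mul_mul_eq_zero (ne (by decide)) (ne (by decide))
          (ne (by decide)) h₁)
      have hbcf : entry V 0 2 + entry V 1 0 + entry V 2 1 = 0 :=
        LinearMap.ext (functional_mul_mul_eq_zero (ne (by decide)) (ne (by decide))
          (ne (by decide)) fun M => (hdet M).symm.trans (h₁ M))
      -- The matrices would be symmetric with column sums zero, and the functionals `(1, 1, 0)` and
      -- `(0, 1, 1)` would both be matched with the vector `(1, 1, 0)`.
      refine absurd (hV.col ![1, 1, 0] ![1, 1, 0] ![0, 1, 1] (by decide) (by decide) (by decide)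
        (fun M hM => ?_) (fun M hM => ?_)) (by decide)
      · have e1 : M 0 1 = M 1 0 := LinearMap.congr_fun hac ⟨M, hM⟩
        simp [mulVec, dotProduct, Fin.sum_univ_three, h0 M hM, e1, ZModModule.add_self]
      · have e1 : M 0 1 = M 1 0 := LinearMap.congr_fun hac ⟨M, hM⟩
        have e2 : M 1 2 = M 2 1 := LinearMap.congr_fun hdf ⟨M, hM⟩
        have e3 : M 0 1 + M 1 2 + M 2 0 = 0 := LinearMap.congr_fun hade ⟨M, hM⟩
        simp [mulVec, dotProduct, Fin.sum_univ_three, h0 M hM]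
        linear_combination e3 - e1 - e2
    obtain ⟨he, hb, h⟩ := zero_diagonal_special (ne (by decide)) (ne (by decide)) (ne (by decide))
      (ne (by decide)) (ne (by decide)) (ne (by decide)) hab hcd hef hce haf hbd hsym h₁
      (fun M => (hdet M).symm.trans (h₁ M))
    have hs (M : V) : M.1 2 0 = M.1 0 1 + M.1 1 2 ∧ M.1 0 2 = M.1 1 0 + M.1 2 1 :=
      ⟨LinearMap.congr_fun he M, LinearMap.congr_fun hb M⟩
    right
    rcases h with h | ⟨hf, h⟩ | ⟨hf, h⟩ | ⟨hf, h⟩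
    · right
      have : V = V3 := by
        ext N
        constructor
        · intro hN
          exact ⟨h0 N hN, (add_eq_zero_iff_eq_two _ _).2 (hs ⟨N, hN⟩).1.symm,
            (add_eq_zero_iff_eq_two _ _).2 ((hs ⟨N, hN⟩).2.trans (add_comm _ _)).symm⟩
        · rintro ⟨g0, g1, g2⟩
          obtain ⟨M, h1, h2, h3, h4⟩ := h (N 0 1) (N 1 2) (N 1 0) (N 2 1)
          have : M.1 = N := by
            refine ext' M g0 h1 ?_ h3 h2 ?_ h4
            · rw [(hs M).2, ← add_eq_zero_iff_eq_two, ← g2, add_comm (N 2 1), ← h3, ← h4]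
              rfl
            · rw [(hs M).1, ← add_eq_zero_iff_eq_two, ← g1, ← h1, ← h2]
              rfl
          rw [← this]
          exact M.2
      rw [this]
      exact matEquiv_refl _
    · left
      have hm := mem_iff_of_param (m := fun u v w => !![0, u, u + w; u, 0, v; u + v, w, 0]) h
        (fun M => ext' M (fun i => by fin_cases i <;> rfl) rfl
          ((hs M).2.trans (by rw [← entry_apply 1 0 M, hf]; rfl)) (LinearMap.congr_fun hf M) rfl
          (hs M).1 rfl)
      exact matEquiv_of_param hm mem_U3 (P := 1) (Q := 1) (by decide) (by decide) (by decide)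
        (by decide)
    · left
      have hm := mem_iff_of_param (m := fun u v w => !![0, u, v + w; v, 0, w; u + w, w, 0]) h
        (fun M => ext' M (fun i => by fin_cases i <;> rfl) rfl
          ((hs M).2.trans (by rw [← entry_apply 2 1 M, hf]; rfl)) rfl rfl
          (hs M).1 (LinearMap.congr_fun hf M))
      exact matEquiv_of_param hm mem_U3 (P := !![0, 0, 1; 0, 1, 0; 1, 0, 0])
        (Q := !![0, 0, 1; 0, 1, 0; 1, 0, 0]) (by decide) (by decide) (by decide) (by decide)
    · left
      have hm := mem_iff_of_param (m := fun u v w => !![0, u, w + (u + v + w); w, 0, v;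
        u + v, u + v + w, 0]) h
        (fun M => ext' M (fun i => by fin_cases i <;> rfl) rfl
          ((hs M).2.trans (by rw [← entry_apply 2 1 M, hf]; rfl)) rfl rfl
          (hs M).1 (LinearMap.congr_fun hf M))
      exact matEquiv_of_param hm mem_U3 (P := !![0, 0, 1; 1, 0, 0; 0, 1, 0])
        (Q := !![0, 1, 0; 0, 0, 1; 1, 0, 0]) (by decide) (by decide) (by decide) (by decide)

theorem MatCore.classify (h : MatCore V) (hthin : ¬ HasThin (opOf V)) :
    MatEquiv (ZMod 2) V Mata3 ∨ MatEquiv (ZMod 2) V U3 ∨ MatEquiv (ZMod 2) V V3 := by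
  classical
  have hT := h.tame hthin
  obtain ⟨S, hS, hcard⟩ := card_lt_card_special (by simp) h.core.rank hthin
  rw [Fintype.card_fun, ZMod.card, Fintype.card_fin] at hcard
  obtain ⟨x₁, hx₁, x₂, hx₂, hx⟩ := Finset.one_lt_card.1 (show 1 < S.card by omega)
  have spec (x) (hx : x ∈ S) : ∃ f : Fin 3 → ZMod 2, f ≠ 0 ∧ ∀ M ∈ V, f ⬝ᵥ M *ᵥ x = 0 := by
    obtain ⟨-, f, hf, hfx⟩ := hS x hx
    obtain ⟨v, hv⟩ := exists_dotProduct f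
    refine ⟨v, ?_, fun M hM => ?_⟩
    · rintro rfl
      exact hf (LinearMap.ext fun x => by simp [hv])
    · rw [← hv]
      exact hfx ⟨M, hM⟩
  obtain ⟨f₁, hf₁, h₁⟩ := spec x₁ hx₁
  obtain ⟨f₂, hf₂, h₂⟩ := spec x₂ hx₂
  obtain ⟨W, hW, h0⟩ := hT.exists_zero_diagonal hf₁ hf₂ (hS _ hx₁).1 (hS _ hx₂).1 hx h₁ h₂
  rcases (hT.of_matEquiv hW).zero_diagonal h0 with h | h | h
  · exact Or.inl (matEquiv_trans hW h)
  · exact Or.inr (Or.inl (matEquiv_trans hW h))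
  · exact Or.inr (Or.inr (matEquiv_trans hW h))

end ZeroDiagonal

/-! ### Mutual exclusivity -/

section Exclusive

theorem hasThin_of_le_J3 {W : Submodule (ZMod 2) (Matrix (Fin 3) (Fin 3) (ZMod 2))} (hW : W ≤ J3) :
    HasThin (opOf W) := by
  refine ⟨Pi.single 0 1, single_ne_zero' 0, Pi.single 0 1, fun M => ?_⟩
  obtain ⟨-, h⟩ := hW M.2
  rw [opOf_apply, mulVec_single_one]
  have h1 : M.1 1 0 = 0 := h 1 0 (by decide)
  have h2 : M.1 2 0 = 0 := h 2 0 (by decide)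
  rcases zmod2_cases (M.1 0 0) with h0 | h0
  · left
    ext i
    fin_cases i
    exacts [h0, h1, h2]
  · right
    ext i
    fin_cases i
    exacts [h0, h1, h2]

theorem not_hasThin_of_param {T : Submodule (ZMod 2) (Matrix (Fin 3) (Fin 3) (ZMod 2))}
    {t : ZMod 2 → ZMod 2 → ZMod 2 → Matrix (Fin 3) (Fin 3) (ZMod 2)} (ht : ∀ a b c, t a b c ∈ T)
    (h : ∀ p q r : ZMod 2, ![p, q, r] ≠ 0 → ∃ a b c a' b' c', t a b c *ᵥ ![p, q, r] ≠ 0 ∧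
      t a' b' c' *ᵥ ![p, q, r] ≠ 0 ∧ t a b c *ᵥ ![p, q, r] ≠ t a' b' c' *ᵥ ![p, q, r]) :
    ¬ HasThin (opOf T) := by
  rintro ⟨x, hx, w, hxw⟩
  have e : x = ![x 0, x 1, x 2] := by
    ext i
    fin_cases i <;> rfl
  rw [e] at hx hxw
  obtain ⟨a, b, c, a', b', c', h1, h2, h3⟩ := h _ _ _ hx
  exact h3 (((hxw ⟨_, ht a b c⟩).resolve_left h1).trans
    ((hxw ⟨_, ht a' b' c'⟩).resolve_left h2).symm)

theorem not_hasThin_Mata3 : ¬ HasThin (opOf Mata3) :=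
  not_hasThin_of_param (fun a b c => (mem_Mata3 _).2 ⟨a, b, c, rfl⟩) (by decide)

theorem not_hasThin_U3 : ¬ HasThin (opOf U3) :=
  not_hasThin_of_param (fun a b c => (mem_U3 _).2 ⟨a, b, c, rfl⟩) (by decide)

theorem U3_le_V3 : U3 ≤ V3 := by
  rintro _ ⟨a, b, c, rfl⟩
  refine ⟨fun i => by fin_cases i <;> rfl, ?_, ?_⟩
  · change a + b + (a + b) = 0
    exact ZModModule.add_self _
  · change c + a + (a + c) = 0
    rw [add_comm c]
    exact ZModModule.add_self _

theorem not_hasThin_V3 : ¬ HasThin (opOf V3) := by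
  rintro ⟨x, hx, w, hxw⟩
  exact not_hasThin_U3 ⟨x, hx, w, fun M => hxw ⟨M.1, U3_le_V3 M.2⟩⟩

/-- `V3` has sixteen elements, so it is not equivalent to a space parametrized by three scalars. -/
theorem not_matEquiv_V3_of_param {T : Submodule (ZMod 2) (Matrix (Fin 3) (Fin 3) (ZMod 2))}
    {t : ZMod 2 → ZMod 2 → ZMod 2 → Matrix (Fin 3) (Fin 3) (ZMod 2)}
    (ht : ∀ N ∈ T, ∃ a b c, N = t a b c) : ¬ MatEquiv (ZMod 2) T V3 := by
  intro h
  obtain ⟨P, Q, -, -, h⟩ := matEquiv_iff.1 h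
  have key (k : Fin 4 → ZMod 2) : ∃ g : Fin 3 → ZMod 2, P * t (g 0) (g 1) (g 2) * Q =
      !![0, k 0, k 1; k 1 + k 2, 0, k 3; k 0 + k 3, k 2, 0] := by
    obtain ⟨M, hM, e⟩ := (h !![0, k 0, k 1; k 1 + k 2, 0, k 3; k 0 + k 3, k 2, 0]).1 (by
      refine ⟨fun i => by fin_cases i <;> rfl, ?_, ?_⟩
      · change k 0 + k 3 + (k 0 + k 3) = 0
        exact ZModModule.add_self _
      · change k 2 + (k 1 + k 2) + k 1 = 0
        linear_combination ZModModule.add_self (k 1 + k 2))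
    obtain ⟨a, b, c, rfl⟩ := ht M hM
    exact ⟨![a, b, c], e⟩
  choose g hg using key
  have hinj : Function.Injective g := by
    intro k k' hk
    have e := hg k
    rw [hk, hg k'] at e
    ext i
    fin_cases i
    exacts [(congrFun₂ e 0 1).symm, (congrFun₂ e 0 2).symm, (congrFun₂ e 2 1).symm,
      (congrFun₂ e 1 2).symm]
  have := Fintype.card_le_of_injective g hinj
  simp only [Fintype.card_fun, ZMod.card, Fintype.card_fin] at this
  omega

theorem mem_Mata3_iff_quadratic (N : Matrix (Fin 3) (Fin 3) (ZMod 2)) :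
    N ∈ Mata3 ↔ ∀ y, y ⬝ᵥ N *ᵥ y = 0 := by
  constructor
  · intro hN y
    obtain ⟨a, b, c, rfl⟩ := (mem_Mata3 N).1 hN
    simp only [mulVec, dotProduct, Fin.sum_univ_three]
    simp
    linear_combination ZModModule.add_self (a * y 0 * y 1 + b * y 1 * y 2 + c * y 0 * y 2)
  · intro h
    have h1 (i : Fin 3) : N i i = 0 := by simpa using h (Pi.single i 1)
    refine ⟨?_, h1⟩
    rw [neg_eq_of_add_eq_zero_left (ZModModule.add_self N)]
    ext i j
    have h2 := h (Pi.single i 1 + Pi.single j 1)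
    simp only [mulVec_add, add_dotProduct, dotProduct_add, mulVec_single_one,
      single_one_dotProduct, col_apply, h1, zero_add, add_zero] at h2
    rw [transpose_apply, ← add_eq_zero_iff_eq_two, ← h2]

/-- If `P M Q` is alternating for all `M ∈ U3`, then so is `R M`, where `R` is the inverse transpose
of `Q` times `P`; the latter forces `R = 0`. -/
theorem not_matEquiv_U3_Mata3 : ¬ MatEquiv (ZMod 2) U3 Mata3 := by
  intro h
  obtain ⟨P, Q, hP, hQ, h⟩ := matEquiv_iff.1 h
  have hQ' := (isUnit_iff_isUnit_det _).1 hQ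
  set R := (Q⁻¹)ᵀ * P with hR
  have hRu : IsUnit R := ((isUnit_transpose _).2 (isUnit_nonsing_inv_iff.2 hQ)).mul hP
  have key (M) (hM : M ∈ U3) : R * M ∈ Mata3 := by
    rw [mem_Mata3_iff_quadratic]
    intro y
    have := (mem_Mata3_iff_quadratic _).1 ((h _).2 ⟨M, hM, rfl⟩) (Q⁻¹ *ᵥ y)
    rw [mulVec_mulVec, mul_nonsing_inv_cancel_right _ _ hQ', ← vecMul_transpose,
      ← dotProduct_mulVec, mulVec_mulVec, ← Matrix.mul_assoc] at this
    exact this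
  have ent (a b c : ZMod 2) := key _ ((mem_U3 _).2 ⟨a, b, c, rfl⟩)
  have hd (a b c : ZMod 2) := (ent a b c).2
  have hs (a b c : ZMod 2) (i j : Fin 3) := congrFun₂ (ent a b c).1 i j
  have b1 := hd 0 1 0 0
  have b2 := hd 0 1 0 2
  have b3 := hs 0 1 0 1 0
  have b4 := hs 0 1 0 1 2
  have b5 := hs 0 1 0 0 2
  have c1 := hd 0 0 1 2
  have c2 := hs 0 0 1 0 2
  have c3 := hs 0 0 1 1 2
  have a1 := hd 1 0 0 0
  simp [mul_apply, Fin.sum_univ_three] at b1 b2 b3 b4 b5 c1 c2 c3 a1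
  have hzero : R = 0 := by
    ext i j
    fin_cases i <;> fin_cases j <;> simp_all
  rw [hzero] at hRu
  exact not_isUnit_zero hRu

/-- The four cases are exhaustive and mutually exclusive: the first one occurs exactly when there is
a thin vector. -/
theorem MatCore.exactlyOne {V : Submodule (ZMod 2) (Matrix (Fin 3) (Fin 3) (ZMod 2))}
    (hcore : MatCore V) :
    ExactlyOne4
      (∃ W : Submodule (ZMod 2) (Matrix (Fin 3) (Fin 3) (ZMod 2)),
        W ≤ J3 ∧ MatEquiv (ZMod 2) V W)
      (MatEquiv (ZMod 2) V Mata3) (MatEquiv (ZMod 2) V U3) (MatEquiv (ZMod 2) V V3) := by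
  have hJ : (∃ W : Submodule (ZMod 2) (Matrix (Fin 3) (Fin 3) (ZMod 2)),
      W ≤ J3 ∧ MatEquiv (ZMod 2) V W) ↔ HasThin (opOf V) :=
    ⟨fun ⟨W, hW, h⟩ => hasThin_of_matEquiv (matEquiv_symm h) (hasThin_of_le_J3 hW),
      hcore.exists_le_J3⟩
  rw [hJ]
  have hA (h : MatEquiv (ZMod 2) V Mata3) : ¬ HasThin (opOf V) := fun ht =>
    not_hasThin_Mata3 (hasThin_of_matEquiv h ht)
  have hU (h : MatEquiv (ZMod 2) V U3) : ¬ HasThin (opOf V) := fun ht =>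
    not_hasThin_U3 (hasThin_of_matEquiv h ht)
  have hV (h : MatEquiv (ZMod 2) V V3) : ¬ HasThin (opOf V) := fun ht =>
    not_hasThin_V3 (hasThin_of_matEquiv h ht)
  have hAU (h : MatEquiv (ZMod 2) V Mata3) (h' : MatEquiv (ZMod 2) V U3) : False :=
    not_matEquiv_U3_Mata3 (matEquiv_trans (matEquiv_symm h') h)
  have hAV (h : MatEquiv (ZMod 2) V Mata3) (h' : MatEquiv (ZMod 2) V V3) : False :=
    not_matEquiv_V3_of_param (fun N hN => (mem_Mata3 N).1 hN)
      (matEquiv_trans (matEquiv_symm h) h')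
  have hUV (h : MatEquiv (ZMod 2) V U3) (h' : MatEquiv (ZMod 2) V V3) : False :=
    not_matEquiv_V3_of_param (fun N hN => (mem_U3 N).1 hN)
      (matEquiv_trans (matEquiv_symm h) h')
  have hclass := hcore.classify
  unfold ExactlyOne4
  by_cases ht : HasThin (opOf V)
  · exact Or.inl ⟨ht, fun h => hA h ht, fun h => hU h ht, fun h => hV h ht⟩
  · rcases hclass ht with h | h | h
    · exact Or.inr (Or.inl ⟨ht, h, hAU h, hAV h⟩)
    · exact Or.inr (Or.inr (Or.inl ⟨ht, fun h' => hAU h' h, h, hUV h⟩))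
    · exact Or.inr (Or.inr (Or.inr ⟨ht, fun h' => hAV h' h, fun h' => hUV h' h, h⟩))

end Exclusive

end UpperRankTwo


theorem classification_of_primitive_spaces_with_upper_rank_two {n p : ℕ}
    (V : Submodule (ZMod 2) (Matrix (Fin n) (Fin p) (ZMod 2)))
    (hprim : Primitive (ZMod 2) V) (hurk : urk V = 2) :
    ∃ (hn : n = 3) (hp : p = 3),
      ExactlyOne4
        (∃ W : Submodule (ZMod 2) (Matrix (Fin 3) (Fin 3) (ZMod 2)),
          W ≤ J3 ∧ MatEquiv (ZMod 2) (reindexSub hn hp V) W)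
        (MatEquiv (ZMod 2) (reindexSub hn hp V) Mata3)
        (MatEquiv (ZMod 2) (reindexSub hn hp V) U3)
        (MatEquiv (ZMod 2) (reindexSub hn hp V) V3) := by
  obtain ⟨rfl, rfl⟩ := UpperRankTwo.dimensions_of_primitive hprim hurk
  refine ⟨rfl, rfl, ?_⟩
  have hre : reindexSub rfl rfl V = V := by
    ext M
    constructor
    · rintro ⟨N, hN, rfl⟩
      exact hN
    · intro hM
      exact ⟨M, hM, rfl⟩
  rw [hre]
  exact (UpperRankTwo.matCore_of_primitive hprim hurk).exactlyOne
end
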